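/- Let f : ℝ² → ℝ² be a C^∞ map with f(0)=0 of the form f = (x, xy² + y⁴ + Σ_{i+j≥5} a_{ij} x^i y^j). Then: (i) a_{05} ≠ 0 if and only if f is A-equivalent to (x,y) ↦ (x, xy² + y⁴ + y⁵) (gulls); (ii) (a_{05} = 0 and a_{07} − 2a_{15} + 4a_{23} ≠ 0) if and only if f is A-equivalent to (x,y) ↦ (x, xy² + y⁴ + y⁷) (ugly gulls); (iii) (a_{05} = 0 and a_{07} − 2a_{15} + 4a_{23} = 0) if and only if j⁷f(0) is A⁷-equivalent to the 7-jet at 0 of (x,y) ↦ (x, xy² + y⁴). Furthermore, if f has the form f = (x, xy² + y⁴ + Σ_{i+j≥8} c_{ij} x^i y^j), then c_{09} − 2c_{17} ≠ 0 if and only if f is A-equivalent to (x,y) ↦ (x, xy² + y⁴ + y⁹). -/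

import Mathlib

open Filter Topology

noncomputable section

/-- Directional derivative of a scalar function. -/
def dop (v : ℝ × ℝ) (g : ℝ × ℝ → ℝ) : ℝ × ℝ → ℝ :=
  fun p => fderiv ℝ g p v

/-- Partial derivative operator in the first coordinate. -/
def pdx : (ℝ × ℝ → ℝ) → ℝ × ℝ → ℝ := dop (1, 0)

/-- Partial derivative operator in the second coordinate. -/
def pdy : (ℝ × ℝ → ℝ) → ℝ × ℝ → ℝ := dop (0, 1)

/-- Taylor coefficient `a_{ij} = ∂_x^i ∂_y^j g(0,0) / (i! j!)` of `g` at the origin. -/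
def tcoeff (g : ℝ × ℝ → ℝ) (i j : ℕ) : ℝ :=
  (pdx^[i] (pdy^[j] g)) 0 / (Nat.factorial i * Nat.factorial j)

/-- The Jacobian determinant `λ_f` of a map `f : ℝ² → ℝ²`. -/
def jacDet (f : ℝ × ℝ → ℝ × ℝ) (p : ℝ × ℝ) : ℝ :=
  (fderiv ℝ f p (1, 0)).1 * (fderiv ℝ f p (0, 1)).2 -
    (fderiv ℝ f p (1, 0)).2 * (fderiv ℝ f p (0, 1)).1

/-- `f` has corank one at `0` : the derivative of `f` at `0` has rank one. -/
def CorankOne (f : ℝ × ℝ → ℝ × ℝ) : Prop :=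
  LinearMap.rank ((fderiv ℝ f 0).toLinearMap) = 1

/-- `η` is a null vector field for `f` near `0`. -/
def IsNullVF (f η : ℝ × ℝ → ℝ × ℝ) : Prop :=
  η 0 ≠ 0 ∧ ∃ U ∈ 𝓝 (0 : ℝ × ℝ),
    ContDiffOn ℝ (⊤ : ℕ∞) η U ∧ ∀ p ∈ U, jacDet f p = 0 → fderiv ℝ f p (η p) = 0

/-- The derivative `(ηg)(p) = Dg(p)(η(p))` of `g` along the vector field `η`. -/
def etaD (η : ℝ × ℝ → ℝ × ℝ) (g : ℝ × ℝ → ℝ) : ℝ × ℝ → ℝ :=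
  fun p => fderiv ℝ g p (η p)

/-- The iterated derivative `η^k g` along the vector field `η`. -/
def etaIter (η : ℝ × ℝ → ℝ × ℝ) : ℕ → (ℝ × ℝ → ℝ) → ℝ × ℝ → ℝ
  | 0, g => g
  | k + 1, g => etaD η (etaIter η k g)

/-- The Hessian matrix of second partial derivatives of `g` at `0`. -/
def hess (g : ℝ × ℝ → ℝ) : Matrix (Fin 2) (Fin 2) ℝ :=
  !![pdx (pdx g) 0, pdx (pdy g) 0; pdy (pdx g) 0, pdy (pdy g) 0]

/-- `A^r`-equivalence of the `r`-jets at `0` of two map-germs `(ℝ²,0) → (ℝ²,0)`. -/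
def JetEquiv (r : ℕ) (f g : ℝ × ℝ → ℝ × ℝ) : Prop :=
  ∃ φ ψ : ℝ × ℝ → ℝ × ℝ,
    ContDiff ℝ (⊤ : ℕ∞) φ ∧ ContDiff ℝ (⊤ : ℕ∞) ψ ∧ φ 0 = 0 ∧ ψ 0 = 0 ∧
    Function.Bijective (⇑(fderiv ℝ φ 0)) ∧ Function.Bijective (⇑(fderiv ℝ ψ 0)) ∧
    ∀ i ≤ r, iteratedFDeriv ℝ i (ψ ∘ f ∘ φ) 0 = iteratedFDeriv ℝ i g 0

/-- `A`-equivalence of two map-germs `(ℝ²,0) → (ℝ²,0)`. -/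
def AEquiv (f g : ℝ × ℝ → ℝ × ℝ) : Prop :=
  ∃ φ ψ : ℝ × ℝ → ℝ × ℝ,
    ContDiff ℝ (⊤ : ℕ∞) φ ∧ ContDiff ℝ (⊤ : ℕ∞) ψ ∧ φ 0 = 0 ∧ ψ 0 = 0 ∧
    Function.Bijective (⇑(fderiv ℝ φ 0)) ∧ Function.Bijective (⇑(fderiv ℝ ψ 0)) ∧
    ∀ᶠ p in 𝓝 (0 : ℝ × ℝ), ψ (f (φ p)) = g p

/-- `f` has the form `(x, g(x,y))` where `g` is `C^∞` and the Taylor coefficients of `g`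
of total degree `< N` at the origin are prescribed by `P`. -/
def HasForm (f : ℝ × ℝ → ℝ × ℝ) (g : ℝ × ℝ → ℝ) (N : ℕ) (P : ℕ → ℕ → ℝ) : Prop :=
  ContDiff ℝ (⊤ : ℕ∞) g ∧ (∀ p, f p = (p.1, g p)) ∧
    ∀ i j, i + j < N → tcoeff g i j = P i j

/-- Coefficients of the polynomial `x y² + y⁴`. -/
def P11 : ℕ → ℕ → ℝ := fun i j => if (i, j) = (1, 2) ∨ (i, j) = (0, 4) then 1 else 0

section part1
open Filter Topology
open scoped ContDiff

section infra

/-- smooth parametric integrals, finite order -/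
theorem pi_contDiff_nat {E : Type} [NormedAddCommGroup E] [NormedSpace ℝ E]
    [FiniteDimensional ℝ E] (n : ℕ) : ∀ {F : Type} [NormedAddCommGroup F] [NormedSpace ℝ F]
    [CompleteSpace F] (k : E × ℝ → F), ContDiff ℝ ∞ k →
    ContDiff ℝ n (fun p => ∫ s in (0:ℝ)..1, k (p, s)) := by
  induction n with
  | zero =>
    intro F _ _ _ k hk
    have := intervalIntegral.continuous_parametric_intervalIntegral_of_continuous'
      (μ := MeasureTheory.volume) (f := fun p s => k (p, s)) (by simpa [Function.uncurry_def] using hk.continuous) 0 1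
    exact contDiff_zero.2 this
  | succ n ih =>
    intro F _ _ _ k hk
    set k' : E × ℝ → (E →L[ℝ] F) := fun q => (fderiv ℝ k q).comp (ContinuousLinearMap.inl ℝ E ℝ) with hk'
    have hk's : ContDiff ℝ ∞ k' := by
      have h1 : ContDiff ℝ ∞ (fderiv ℝ k) := hk.fderiv_right (by simp)
      exact h1.clm_comp contDiff_const
    have hd : ∀ p s, HasFDerivAt (fun x => k (x, s)) (k' (p, s)) p := by
      intro p s
      have h1 : HasFDerivAt k (fderiv ℝ k (p, s)) (p, s) :=
        (hk.differentiable (by simp)).differentiableAt.hasFDerivAt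
      have h2 : HasFDerivAt (fun x : E => (x, s)) (ContinuousLinearMap.inl ℝ E ℝ) p :=
        hasFDerivAt_prodMk_left p s
      exact h1.comp p h2
    have key : ∀ p, HasFDerivAt (fun p => ∫ s in (0:ℝ)..1, k (p, s)) (∫ s in (0:ℝ)..1, k' (p, s)) p := by
      intro p
      have hc : IsCompact (Metric.closedBall p 1 ×ˢ Set.Icc (0:ℝ) 1) :=
        (isCompact_closedBall p 1).prod isCompact_Icc
      obtain ⟨C, hC⟩ := hc.exists_bound_of_continuousOn hk's.continuous.continuousOn
      refine intervalIntegral.hasFDerivAt_integral_of_dominated_of_fderiv_le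
        (s := Metric.closedBall p 1) (bound := fun _ => C)
        (F := fun p s => k (p, s)) (F' := fun p s => k' (p, s))
        (Metric.closedBall_mem_nhds p one_pos) ?_ ?_ ?_ ?_ ?_ ?_
      · refine Eventually.of_forall fun x => ?_
        have : Continuous (fun s => k (x, s)) := by have := hk.continuous; fun_prop
        exact this.aestronglyMeasurable
      · have : Continuous (fun s => k (p, s)) := by have := hk.continuous; fun_prop
        exact this.intervalIntegrable _ _
      · have : Continuous (fun s => k' (p, s)) := by have := hk's.continuous; fun_prop
        exact this.aestronglyMeasurable
      · refine Eventually.of_forall fun t ht x hx => hC _ ⟨hx, ?_⟩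
        rw [Set.uIoc_of_le zero_le_one] at ht
        exact ⟨ht.1.le, ht.2⟩
      · exact intervalIntegrable_const
      · exact Eventually.of_forall fun t _ x _ => hd x t
    have hf : fderiv ℝ (fun p => ∫ s in (0:ℝ)..1, k (p, s)) = fun p => ∫ s in (0:ℝ)..1, k' (p, s) :=
      funext fun p => (key p).fderiv
    push_cast
    refine contDiff_succ_iff_fderiv.2 ⟨fun p => (key p).differentiableAt, by simp, ?_⟩
    rw [hf]
    exact ih k' hk's

theorem pi_contDiff {E F : Type} [NormedAddCommGroup E] [NormedSpace ℝ E]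
    [FiniteDimensional ℝ E] [NormedAddCommGroup F] [NormedSpace ℝ F]
    [CompleteSpace F] (k : E × ℝ → F) (hk : ContDiff ℝ ∞ k) :
    ContDiff ℝ ∞ (fun p => ∫ s in (0:ℝ)..1, k (p, s)) :=
  contDiff_infty.2 fun n => pi_contDiff_nat n k hk

/-- global extension of smooth germs -/
theorem ext_germ {E F : Type} [NormedAddCommGroup E] [NormedSpace ℝ E]
    [FiniteDimensional ℝ E] [NormedAddCommGroup F] [NormedSpace ℝ F] (θ : E → F) (a : E)
    (h : ∀ᶠ p in 𝓝 a, ContDiffAt ℝ ∞ θ p) :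
    ∃ Θ : E → F, ContDiff ℝ ∞ Θ ∧ ∀ᶠ p in 𝓝 a, Θ p = θ p := by
  obtain ⟨r, hr, hb⟩ := Metric.eventually_nhds_iff_ball.1 h
  let f : ContDiffBump a := ⟨r/4, r/2, by positivity, by linarith⟩
  refine ⟨fun p => f p • θ p, ?_, ?_⟩
  · rw [contDiff_iff_contDiffAt]
    intro p
    by_cases hp : p ∈ Metric.ball a r
    · exact f.contDiff.contDiffAt.smul (hb p hp)
    · have hpt : p ∉ tsupport f := by
        rw [f.tsupport_eq]
        simp only [Metric.mem_closedBall, Metric.mem_ball, not_lt, not_le] at hp ⊢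
        have : f.rOut = r/2 := rfl
        rw [this]; linarith
      have : (fun p => f p • θ p) =ᶠ[𝓝 p] fun _ => 0 := by
        have := notMem_tsupport_iff_eventuallyEq.1 hpt
        filter_upwards [this] with q hq
        simp [hq]
      exact contDiffAt_const.congr_of_eventuallyEq this
  · filter_upwards [f.eventuallyEq_one] with p hp
    simp [hp]

theorem invf {E : Type} [NormedAddCommGroup E] [NormedSpace ℝ E]
    [FiniteDimensional ℝ E] (φ : E → E) (hφ : ContDiff ℝ ∞ φ) (a : E)
    (hb : Function.Bijective (fderiv ℝ φ a)) :
    ∃ φ' : E → E, ContDiff ℝ ∞ φ' ∧ φ' (φ a) = a ∧ (∀ᶠ p in 𝓝 (φ a), φ (φ' p) = p) ∧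
      (∀ᶠ p in 𝓝 a, φ' (φ p) = p) ∧ Function.Bijective (fderiv ℝ φ' (φ a)) := by
  have hcomplete : CompleteSpace E := FiniteDimensional.complete ℝ E
  let e : E ≃L[ℝ] E := ContinuousLinearEquiv.ofBijective (fderiv ℝ φ a)
    (LinearMap.ker_eq_bot.2 hb.1) (LinearMap.range_eq_top.2 hb.2)
  have he : (e : E →L[ℝ] E) = fderiv ℝ φ a := ContinuousLinearEquiv.coe_ofBijective _ _ _
  have hd : HasFDerivAt φ (e : E →L[ℝ] E) a := by
    rw [he]; exact (hφ.differentiable (by simp)).differentiableAt.hasFDerivAt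
  have hn : (∞ : WithTop ℕ∞) ≠ 0 := by simp
  let H := hφ.contDiffAt.toOpenPartialHomeomorph φ hd hn
  have hHc : (H : E → E) = φ := rfl
  have ha : a ∈ H.source := hφ.contDiffAt.mem_toOpenPartialHomeomorph_source hd hn
  have hHa : H a = φ a := rfl
  have hfa : φ a ∈ H.target := H.map_source ha
  have hsa : H.symm (φ a) = a := H.left_inv ha
  have hcont : ContinuousAt H.symm (φ a) := H.continuousAt_symm hfa
  -- invertibility nearby
  have hinv : ∀ᶠ x in 𝓝 a, ∃ e' : E ≃L[ℝ] E, (e' : E →L[ℝ] E) = fderiv ℝ φ x := by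
    have h1 : Continuous (fderiv ℝ φ) := hφ.continuous_fderiv (by simp)
    have h2 : ∀ᶠ L in 𝓝 (e : E →L[ℝ] E), L ∈ Set.range ((↑) : (E ≃L[ℝ] E) → E →L[ℝ] E) :=
      ContinuousLinearEquiv.nhds e
    rw [he] at h2
    have := h1.continuousAt.eventually h2
    filter_upwards [this] with x hx using hx
  have hsm : ∀ᶠ y in 𝓝 (φ a), ContDiffAt ℝ ∞ H.symm y := by
    have h1 : ∀ᶠ y in 𝓝 (φ a), ∃ e' : E ≃L[ℝ] E, (e' : E →L[ℝ] E) = fderiv ℝ φ (H.symm y) := by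
      have : Tendsto H.symm (𝓝 (φ a)) (𝓝 a) := by simpa [hsa] using hcont.tendsto
      exact this.eventually hinv
    filter_upwards [h1, H.open_target.mem_nhds hfa] with y ⟨e', he'⟩ hy
    refine H.contDiffAt_symm (f₀' := e') hy ?_ hφ.contDiffAt
    rw [he']
    exact (hφ.differentiable (by simp)).differentiableAt.hasFDerivAt
  obtain ⟨φ', h1, h2⟩ := ext_germ H.symm (φ a) hsm
  have hr : ∀ᶠ p in 𝓝 (φ a), φ (φ' p) = p := by
    filter_upwards [h2, H.open_target.mem_nhds hfa] with p hp hp'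
    rw [hp]; exact H.right_inv hp'
  have hl : ∀ᶠ p in 𝓝 a, φ' (φ p) = p := by
    filter_upwards [hφ.continuous.continuousAt.eventually h2, H.open_source.mem_nhds ha] with p hp hp'
    rw [hp]; exact H.left_inv hp'
  have h0 : φ' (φ a) = a := hl.self_of_nhds
  refine ⟨φ', h1, h0, hr, hl, ?_⟩
  have hd' : HasFDerivAt φ' (fderiv ℝ φ' (φ a)) (φ a) :=
    (h1.differentiable (by simp)).differentiableAt.hasFDerivAt
  have hc1 : (fderiv ℝ φ' (φ a)).comp (e : E →L[ℝ] E) = ContinuousLinearMap.id ℝ E := by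
    have := hd'.comp a hd
    refine this.unique ((hasFDerivAt_id a).congr_of_eventuallyEq ?_)
    filter_upwards [hl] with p hp using hp
  have : (fderiv ℝ φ' (φ a)) = (e.symm : E →L[ℝ] E) := by
    ext x
    have := DFunLike.congr_fun hc1 (e.symm x)
    simpa using this
  rw [this]
  exact e.symm.bijective

theorem ift {E : Type} [NormedAddCommGroup E] [NormedSpace ℝ E]
    [FiniteDimensional ℝ E] (Φ : E × ℝ → ℝ) (hΦ : ContDiff ℝ ∞ Φ) (a : E) (θ0 : ℝ)
    (h0 : Φ (a, θ0) = 0) (hd : fderiv ℝ Φ (a, θ0) (0, 1) ≠ 0) :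
    ∃ θ : E → ℝ, ContDiff ℝ ∞ θ ∧ θ a = θ0 ∧ ∀ᶠ p in 𝓝 a, Φ (p, θ p) = 0 := by
  let G : E × ℝ → E × ℝ := fun q => (q.1, Φ q)
  have hG : ContDiff ℝ ∞ G := contDiff_fst.prodMk hΦ
  have hGd : ∀ v, fderiv ℝ G (a, θ0) v = (v.1, fderiv ℝ Φ (a, θ0) v) := by
    intro v
    have : HasFDerivAt G ((ContinuousLinearMap.fst ℝ E ℝ).prod (fderiv ℝ Φ (a, θ0))) (a, θ0) :=
      hasFDerivAt_fst.prodMk (hΦ.differentiable (by simp)).differentiableAt.hasFDerivAt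
    rw [this.fderiv]; rfl
  have hsplit : ∀ v : E × ℝ, fderiv ℝ Φ (a, θ0) v = fderiv ℝ Φ (a, θ0) (v.1, 0) + v.2 * fderiv ℝ Φ (a, θ0) (0, 1) := by
    intro v
    have : v = (v.1, 0) + v.2 • ((0 : E), (1 : ℝ)) := by ext <;> simp
    conv_lhs => rw [this, map_add, map_smul]
    simp
  have hbij : Function.Bijective (fderiv ℝ G (a, θ0)) := by
    constructor
    · rw [injective_iff_map_eq_zero]
      intro v hv
      rw [hGd] at hv
      have h1 : v.1 = 0 := congrArg Prod.fst hv
      have h2 : fderiv ℝ Φ (a, θ0) v = 0 := congrArg Prod.snd hv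
      rw [hsplit, h1] at h2
      have h3 : fderiv ℝ Φ (a, θ0) ((0:E), (0:ℝ)) = 0 := map_zero _
      rw [h3, zero_add] at h2
      ext
      · exact h1
      · simpa [hd] using h2
    · intro w
      refine ⟨(w.1, (w.2 - fderiv ℝ Φ (a, θ0) (w.1, 0)) / fderiv ℝ Φ (a, θ0) (0, 1)), ?_⟩
      rw [hGd]
      ext
      · rfl
      · have := hsplit (w.1, (w.2 - fderiv ℝ Φ (a, θ0) (w.1, 0)) / fderiv ℝ Φ (a, θ0) (0, 1))
        simp only at this ⊢
        rw [this]
        rw [div_mul_cancel₀ _ hd]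
        ring
  obtain ⟨G', hG', hG0, hr, hl, -⟩ := invf G hG (a, θ0) hbij
  have hGa : G (a, θ0) = (a, 0) := by simp [G, h0]
  rw [hGa] at hG0 hr
  refine ⟨fun p => (G' (p, 0)).2, ?_, by simp [hG0], ?_⟩
  · exact contDiff_snd.comp (hG'.comp (contDiff_id.prodMk contDiff_const))
  · have ht : Tendsto (fun p : E => (p, (0:ℝ))) (𝓝 a) (𝓝 (a, 0)) := by
      exact (Continuous.prodMk continuous_id continuous_const).tendsto a
    filter_upwards [ht.eventually hr] with p hp
    have h1 : (G' (p, 0)).1 = p := congrArg Prod.fst hp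
    have h2 : Φ (G' (p, 0)) = 0 := congrArg Prod.snd hp
    have h3 : (p, (G' (p, 0)).2) = G' (p, 0) := by
      ext
      · exact h1.symm
      · rfl
    simp only [h3, h2]

/-- Hadamard -/
theorem had {E : Type} [NormedAddCommGroup E] [NormedSpace ℝ E]
    [FiniteDimensional ℝ E] (h : E × ℝ → ℝ) (hh : ContDiff ℝ ∞ h) :
    ∃ H : E × ℝ → ℝ, ContDiff ℝ ∞ H ∧ (∀ e y, h (e, y) = h (e, 0) + y * H (e, y)) ∧
      ∀ e, H (e, 0) = fderiv ℝ h (e, 0) (0, 1) := by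
  refine ⟨fun p => ∫ s in (0:ℝ)..1, fderiv ℝ h (p.1, s * p.2) (0, 1), ?_, ?_, ?_⟩
  · refine pi_contDiff (fun q : (E × ℝ) × ℝ => fderiv ℝ h (q.1.1, q.2 * q.1.2) (0, 1)) ?_
    have h1 : ContDiff ℝ ∞ (fderiv ℝ h) := hh.fderiv_right (by simp)
    have h2 : ContDiff ℝ ∞ (fun q : (E × ℝ) × ℝ => (q.1.1, q.2 * q.1.2)) := by fun_prop
    exact (h1.comp h2).clm_apply contDiff_const
  · intro e y
    have hder : ∀ s : ℝ, HasDerivAt (fun s : ℝ => h (e, s * y)) (y * fderiv ℝ h (e, s * y) (0, 1)) s := by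
      intro s
      have h1 : HasFDerivAt h (fderiv ℝ h (e, s * y)) (e, s * y) :=
        (hh.differentiable (by simp)).differentiableAt.hasFDerivAt
      have h2 : HasDerivAt (fun s : ℝ => (e, s * y)) ((0:E), y) s := by
        have h3 : HasDerivAt (fun s : ℝ => s * y) y s := by
          simpa using (hasDerivAt_id s).mul_const y
        exact (hasDerivAt_const s e).prodMk h3
      have h4 := h1.comp_hasDerivAt s h2
      have h5 : ((0:E), y) = y • ((0:E), (1:ℝ)) := by ext <;> simp
      rw [h5, map_smul, smul_eq_mul] at h4
      exact h4
    have hc : Continuous (fun s : ℝ => y * fderiv ℝ h (e, s * y) (0, 1)) := by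
      have h1 : Continuous (fderiv ℝ h) := hh.continuous_fderiv (by simp)
      have h2 : Continuous (fun s : ℝ => fderiv ℝ h (e, s * y)) := h1.comp (by fun_prop)
      exact continuous_const.mul (h2.clm_apply continuous_const)
    have := intervalIntegral.integral_eq_sub_of_hasDerivAt (a := 0) (b := 1) (fun s _ => hder s)
      (hc.intervalIntegrable _ _)
    rw [intervalIntegral.integral_const_mul] at this
    simp only [one_mul, zero_mul] at this
    simp only
    linarith
  · intro e
    simp

end infra

end part1

section part2
open Filter Topology
open scoped ContDiff

section basics

theorem clm_split (L : ℝ × ℝ →L[ℝ] ℝ × ℝ) (v : ℝ × ℝ) :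
    L v = v.1 • L (1, 0) + v.2 • L (0, 1) := by
  have : v = v.1 • ((1:ℝ), (0:ℝ)) + v.2 • ((0:ℝ), (1:ℝ)) := by ext <;> simp
  conv_lhs => rw [this, map_add, map_smul, map_smul]

theorem clm_split1 (L : ℝ × ℝ →L[ℝ] ℝ) (v : ℝ × ℝ) :
    L v = v.1 * L (1, 0) + v.2 * L (0, 1) := by
  have : v = v.1 • ((1:ℝ), (0:ℝ)) + v.2 • ((0:ℝ), (1:ℝ)) := by ext <;> simp
  conv_lhs => rw [this, map_add, map_smul, map_smul]
  simp

theorem bij_tri (L : ℝ × ℝ →L[ℝ] ℝ × ℝ) (h1 : (L (0, 1)).1 * (L (1, 0)).2 = 0)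
    (h2 : (L (1, 0)).1 ≠ 0) (h3 : (L (0, 1)).2 ≠ 0) : Function.Bijective L := by
  have hi : Function.Injective (L : ℝ × ℝ →ₗ[ℝ] ℝ × ℝ) := by
    rw [injective_iff_map_eq_zero]
    intro v hv
    have hv : L v = 0 := hv
    rw [clm_split] at hv
    have e1 := congrArg Prod.fst hv
    have e2 := congrArg Prod.snd hv
    simp only [Prod.fst_add, Prod.smul_fst, smul_eq_mul, Prod.snd_add, Prod.smul_snd,
      Prod.fst_zero, Prod.snd_zero] at e1 e2
    rcases mul_eq_zero.1 h1 with h | h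
    · rw [h] at e1
      have a1 : v.1 = 0 := by simpa [h2] using e1
      rw [a1] at e2
      have a2 : v.2 = 0 := by simpa [h3] using e2
      ext <;> assumption
    · rw [h] at e2
      have a2 : v.2 = 0 := by simpa [h3] using e2
      rw [a2] at e1
      have a1 : v.1 = 0 := by simpa [h2] using e1
      ext <;> assumption
  exact ⟨hi, LinearMap.injective_iff_surjective.1 hi⟩

theorem aequiv_symm {f g : ℝ × ℝ → ℝ × ℝ} (hf : Continuous f) (hf0 : f 0 = 0)
    (h : AEquiv f g) : AEquiv g f := by
  obtain ⟨φ, ψ, hφ, hψ, φ0, ψ0, bφ, bψ, he⟩ := h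
  obtain ⟨φ', hφ', φ0', rφ, lφ, bφ'⟩ := invf φ hφ 0 bφ
  obtain ⟨ψ', hψ', ψ0', rψ, lψ, bψ'⟩ := invf ψ hψ 0 bψ
  rw [φ0] at φ0' rφ bφ'
  rw [ψ0] at ψ0' rψ bψ'
  refine ⟨φ', ψ', hφ', hψ', φ0', ψ0', bφ', bψ', ?_⟩
  have t1 : Tendsto φ' (𝓝 0) (𝓝 0) := by simpa [φ0'] using hφ'.continuous.tendsto 0
  have t2 : Tendsto f (𝓝 0) (𝓝 0) := by simpa [hf0] using hf.tendsto 0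
  filter_upwards [t1.eventually he, rφ, t2.eventually lψ] with p h1 h2 h3
  rw [← h1, h2, h3]

theorem fderiv_cmp {φ ψ : ℝ × ℝ → ℝ × ℝ} (hφ : ContDiff ℝ ∞ φ) (hψ : ContDiff ℝ ∞ ψ) (p : ℝ × ℝ) :
    fderiv ℝ (fun q => ψ (φ q)) p = (fderiv ℝ ψ (φ p)).comp (fderiv ℝ φ p) :=
  fderiv_comp p (hψ.differentiable (by simp)).differentiableAt
    (hφ.differentiable (by simp)).differentiableAt

theorem aequiv_trans {f g h : ℝ × ℝ → ℝ × ℝ} (h1 : AEquiv f g) (h2 : AEquiv g h) :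
    AEquiv f h := by
  obtain ⟨φ, ψ, hφ, hψ, φ0, ψ0, bφ, bψ, he⟩ := h1
  obtain ⟨φ', ψ', hφ', hψ', φ0', ψ0', bφ', bψ', he'⟩ := h2
  refine ⟨fun p => φ (φ' p), fun p => ψ' (ψ p), hφ.comp hφ', hψ'.comp hψ, by simp [φ0, φ0'],
    by simp [ψ0, ψ0'], ?_, ?_, ?_⟩
  · rw [fderiv_cmp hφ' hφ, φ0']
    exact bφ.comp bφ'
  · rw [fderiv_cmp hψ hψ', ψ0]
    exact bψ'.comp bψ
  · have t1 : Tendsto φ' (𝓝 0) (𝓝 0) := by simpa [φ0'] using hφ'.continuous.tendsto 0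
    filter_upwards [t1.eventually he, he'] with p h1 h2
    rw [h1, h2]

theorem pdy_def (g : ℝ × ℝ → ℝ) (p : ℝ × ℝ) : pdy g p = fderiv ℝ g p (0, 1) := rfl
theorem pdx_def (g : ℝ × ℝ → ℝ) (p : ℝ × ℝ) : pdx g p = fderiv ℝ g p (1, 0) := rfl

theorem pdy_contDiff {g : ℝ × ℝ → ℝ} (hg : ContDiff ℝ ∞ g) : ContDiff ℝ ∞ (pdy g) := by
  have h1 : ContDiff ℝ ∞ (fderiv ℝ g) := hg.fderiv_right (by simp)
  exact h1.clm_apply contDiff_const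

theorem pdx_contDiff {g : ℝ × ℝ → ℝ} (hg : ContDiff ℝ ∞ g) : ContDiff ℝ ∞ (pdx g) := by
  have h1 : ContDiff ℝ ∞ (fderiv ℝ g) := hg.fderiv_right (by simp)
  exact h1.clm_apply contDiff_const

theorem hasDerivAt_pdy {g : ℝ × ℝ → ℝ} (hg : ContDiff ℝ ∞ g) (x y : ℝ) :
    HasDerivAt (fun s => g (x, s)) (pdy g (x, y)) y := by
  have h1 : HasFDerivAt g (fderiv ℝ g (x, y)) (x, y) :=
    (hg.differentiable (by simp)).differentiableAt.hasFDerivAt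
  exact h1.comp_hasDerivAt y ((hasDerivAt_const y x).prodMk (hasDerivAt_id y))

theorem hasDerivAt_pdx {g : ℝ × ℝ → ℝ} (hg : ContDiff ℝ ∞ g) (x y : ℝ) :
    HasDerivAt (fun s => g (s, y)) (pdx g (x, y)) x := by
  have h1 : HasFDerivAt g (fderiv ℝ g (x, y)) (x, y) :=
    (hg.differentiable (by simp)).differentiableAt.hasFDerivAt
  exact h1.comp_hasDerivAt x ((hasDerivAt_id x).prodMk (hasDerivAt_const x y))

theorem pdy_eq {g : ℝ × ℝ → ℝ} (hg : ContDiff ℝ ∞ g) {x y d : ℝ}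
    (h : HasDerivAt (fun s => g (x, s)) d y) : pdy g (x, y) = d :=
  (hasDerivAt_pdy hg x y).unique h

theorem pdy_congr {g h : ℝ × ℝ → ℝ} {p0 : ℝ × ℝ} (H : ∀ᶠ p in 𝓝 p0, g p = h p) :
    ∀ᶠ p in 𝓝 p0, pdy g p = pdy h p := by
  filter_upwards [H.eventually_nhds] with p hp
  rw [pdy_def, pdy_def, Filter.EventuallyEq.fderiv_eq hp]

/-- fderiv of a pair map -/
theorem fderiv_pair {A B : ℝ × ℝ → ℝ} (hA : ContDiff ℝ ∞ A) (hB : ContDiff ℝ ∞ B) (p v : ℝ × ℝ) :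
    fderiv ℝ (fun q => (A q, B q)) p v = (fderiv ℝ A p v, fderiv ℝ B p v) := by
  have h : HasFDerivAt (fun q => (A q, B q)) ((fderiv ℝ A p).prod (fderiv ℝ B p)) p :=
    (hA.differentiable (by simp)).differentiableAt.hasFDerivAt.prodMk
    (hB.differentiable (by simp)).differentiableAt.hasFDerivAt
  rw [h.fderiv]; rfl

/-- bijectivity of derivative from derivatives along axes -/
theorem bij_pair {A B : ℝ × ℝ → ℝ} (hA : ContDiff ℝ ∞ A) (hB : ContDiff ℝ ∞ B)
    {a b c d : ℝ} (h1 : HasDerivAt (fun s => A (s, 0)) a 0) (h2 : HasDerivAt (fun s => A (0, s)) b 0)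
    (h3 : HasDerivAt (fun s => B (s, 0)) c 0) (h4 : HasDerivAt (fun s => B (0, s)) d 0)
    (hbc : b * c = 0) (ha : a ≠ 0) (hd : d ≠ 0) :
    Function.Bijective (fderiv ℝ (fun q => (A q, B q)) 0) := by
  have e1 : fderiv ℝ A 0 (1, 0) = a := (hasDerivAt_pdx hA 0 0).unique h1
  have e2 : fderiv ℝ A 0 (0, 1) = b := (hasDerivAt_pdy hA 0 0).unique h2
  have e3 : fderiv ℝ B 0 (1, 0) = c := (hasDerivAt_pdx hB 0 0).unique h3
  have e4 : fderiv ℝ B 0 (0, 1) = d := (hasDerivAt_pdy hB 0 0).unique h4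
  apply bij_tri
  · rw [fderiv_pair hA hB, fderiv_pair hA hB]; simp [e2, e3, hbc]
  · rw [fderiv_pair hA hB]; simpa [e1] using ha
  · rw [fderiv_pair hA hB]; simpa [e4] using hd

theorem divcurve (κ : ℝ → ℝ) (hκ : ContDiff ℝ ∞ κ) (q : ℝ × ℝ → ℝ) (hq : ContDiff ℝ ∞ q) :
    ∃ Q : ℝ × ℝ → ℝ, ContDiff ℝ ∞ Q ∧ ∀ x y, q (x, y) = q (κ y, y) + (x - κ y) * Q (x, y) := by
  obtain ⟨H, hH, h1, -⟩ := had (fun p : ℝ × ℝ => q (p.2 + κ p.1, p.1)) (by fun_prop)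
  refine ⟨fun p => H (p.2, p.1 - κ p.2), by fun_prop, fun x y => ?_⟩
  have := h1 y (x - κ y)
  simpa using this

theorem prim (n V : ℝ × ℝ → ℝ) (hn : ContDiff ℝ ∞ n) (hV : ContDiff ℝ ∞ V)
    (h0 : ∀ᶠ x in 𝓝 (0:ℝ), n (x, 0) = 0)
    (h1 : ∀ᶠ p in 𝓝 (0 : ℝ × ℝ), pdy n p = p.2 * (p.1 + 2 * p.2 ^ 2) * V p) :
    ∃ A : ℝ × ℝ → ℝ, ContDiff ℝ ∞ A ∧ A 0 = 0 ∧ ∀ᶠ p in 𝓝 (0 : ℝ × ℝ), n p = p.2 ^ 2 * A p := by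
  refine ⟨fun p => ∫ s in (0:ℝ)..1, s * (p.1 + 2 * (s * p.2) ^ 2) * V (p.1, s * p.2), ?_, ?_, ?_⟩
  · exact pi_contDiff (fun q : (ℝ × ℝ) × ℝ =>
      q.2 * (q.1.1 + 2 * (q.2 * q.1.2) ^ 2) * V (q.1.1, q.2 * q.1.2)) (by fun_prop)
  · simp
  · obtain ⟨r, hr, hb⟩ := Metric.eventually_nhds_iff_ball.1 h1
    have h0' : ∀ᶠ p in 𝓝 (0 : ℝ × ℝ), n (p.1, 0) = 0 :=
      (continuous_fst.tendsto (0 : ℝ × ℝ)).eventually h0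
    filter_upwards [Metric.ball_mem_nhds (0 : ℝ × ℝ) hr, h0'] with p hp hp0
    obtain ⟨x, y⟩ := p
    have hder : ∀ s ∈ Set.uIcc (0:ℝ) 1, HasDerivAt (fun s : ℝ => n (x, s * y))
        (y ^ 2 * (s * (x + 2 * (s * y) ^ 2) * V (x, s * y))) s := by
      intro s hs
      rw [Set.uIcc_of_le zero_le_one] at hs
      have h3 : HasDerivAt (fun s : ℝ => s * y) y s := by
        simpa using (hasDerivAt_id s).mul_const y
      have h4 := (hasDerivAt_pdy hn x (s * y)).comp s h3
      rw [hb (x, s * y) ?_] at h4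
      · refine h4.congr_deriv ?_
        simp only [smul_eq_mul]; ring
      · simp only [Metric.mem_ball, dist_zero_right, Prod.norm_def, sup_lt_iff, Real.norm_eq_abs] at hp ⊢
        refine ⟨hp.1, lt_of_le_of_lt ?_ hp.2⟩
        rw [abs_mul, abs_of_nonneg hs.1]
        exact mul_le_of_le_one_left (abs_nonneg _) hs.2
    have hc : Continuous (fun s : ℝ => y ^ 2 * (s * (x + 2 * (s * y) ^ 2) * V (x, s * y))) := by
      have := hV.continuous
      fun_prop
    have := intervalIntegral.integral_eq_sub_of_hasDerivAt hder (hc.intervalIntegrable _ _)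
    rw [intervalIntegral.integral_const_mul] at this
    simp only [one_mul, zero_mul] at this hp0
    simp only
    rw [this, hp0, sub_zero]

structure NF (n : ℝ × ℝ → ℝ) (w : ℝ → ℝ) : Prop where
  cn : ContDiff ℝ ∞ n
  cw : ContDiff ℝ ∞ w
  ax : ∀ᶠ x in 𝓝 (0:ℝ), n (x, 0) = 0
  hu : ∃ u : ℝ × ℝ → ℝ, ContDiff ℝ ∞ u ∧ u 0 = 2 ∧
    ∀ᶠ p in 𝓝 (0 : ℝ × ℝ), pdy n p = p.2 * (p.1 + 2 * p.2 ^ 2) * u p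
  cu : ∀ᶠ t in 𝓝 (0:ℝ), n (-2 * t ^ 2, t) = -t ^ 4 * (1 + t * w (t ^ 2))

/-- an eventual identity off zero extends by continuity -/
theorem ev_of_punct {a b : ℝ → ℝ} (ha : Continuous a) (hb : Continuous b)
    (h : ∀ᶠ t in 𝓝 (0:ℝ), t ≠ 0 → a t = b t) : ∀ᶠ t in 𝓝 (0:ℝ), a t = b t := by
  have h0 : a 0 = b 0 := by
    have h' : ∀ᶠ t in 𝓝[≠] (0:ℝ), a t = b t := by
      rw [eventually_nhdsWithin_iff]; exact h
    have t1 : Tendsto a (𝓝[≠] 0) (𝓝 (a 0)) := (ha.tendsto 0).mono_left nhdsWithin_le_nhds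
    have t2 : Tendsto b (𝓝[≠] 0) (𝓝 (b 0)) := (hb.tendsto 0).mono_left nhdsWithin_le_nhds
    exact tendsto_nhds_unique_of_eventuallyEq t1 t2 h'
  filter_upwards [h] with t ht
  by_cases h : t = 0
  · rw [h, h0]
  · exact ht h

theorem tend_curve {a b : ℝ → ℝ} (ha : Continuous a) (hb : Continuous b) (h1 : a 0 = 0) (h2 : b 0 = 0) :
    Tendsto (fun t => (a t, b t)) (𝓝 0) (𝓝 (0 : ℝ × ℝ)) := by
  have : Continuous (fun t => (a t, b t)) := ha.prodMk hb
  have h := this.tendsto 0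
  rw [h1, h2] at h; exact h

theorem t3 {n n' : ℝ × ℝ → ℝ} {w w' : ℝ → ℝ} (h : NF n w) (h' : NF n' w')
    (hw : ∀ᶠ s in 𝓝 (0:ℝ), w s = w' s) :
    AEquiv (fun p => (p.1, n p)) (fun p => (p.1, n' p)) := by
  obtain ⟨u, hu, u0, hpu⟩ := h.hu
  obtain ⟨u', hu', u0', hpu'⟩ := h'.hu
  have cn := h.cn
  have cn' := h'.cn
  set R : ℝ × ℝ → ℝ := fun p => n' p - n p with hR
  have cR : ContDiff ℝ ∞ R := by fun_prop
  have hRy : ∀ p, pdy R p = pdy n' p - pdy n p := by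
    rintro ⟨x, y⟩
    exact pdy_eq cR ((hasDerivAt_pdy cn' x y).sub (hasDerivAt_pdy cn x y))
  have hRp : ∀ᶠ p in 𝓝 (0 : ℝ × ℝ), pdy R p = p.2 * (p.1 + 2 * p.2 ^ 2) * (u' p - u p) := by
    filter_upwards [hpu, hpu'] with p h1 h2
    rw [hRy, h1, h2]; ring
  have hR0 : ∀ᶠ x in 𝓝 (0:ℝ), R (x, 0) = 0 := by
    filter_upwards [h.ax, h'.ax] with x h1 h2
    simp [hR, h1, h2]
  have hRc : ∀ᶠ t in 𝓝 (0:ℝ), R (-2 * t ^ 2, t) = 0 := by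
    have ht : Tendsto (fun t : ℝ => t ^ 2) (𝓝 0) (𝓝 0) := by
      have : Continuous (fun t : ℝ => t ^ 2) := by fun_prop
      simpa using this.tendsto 0
    filter_upwards [h.cu, h'.cu, ht.eventually hw] with t h1 h2 h3
    simp only [hR, h1, h2, h3, sub_self]
  obtain ⟨A, cA, A0, hA⟩ := prim R (fun p => u' p - u p) cR (by fun_prop) hR0 hRp
  have cκ : ContDiff ℝ ∞ (fun y : ℝ => -2 * y ^ 2) := by fun_prop
  obtain ⟨B, cB, hB⟩ := divcurve (fun y => -2 * y ^ 2) cκ A cA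
  have tc : Tendsto (fun t : ℝ => (-2 * t ^ 2, t)) (𝓝 0) (𝓝 (0 : ℝ × ℝ)) :=
    tend_curve (by fun_prop) (by fun_prop) (by simp) rfl
  have hA0 : ∀ᶠ t in 𝓝 (0:ℝ), A (-2 * t ^ 2, t) = 0 := by
    refine ev_of_punct (a := fun t => A (-2 * t ^ 2, t)) (b := fun _ => 0) ?_ continuous_const ?_
    · have := cA.continuous; fun_prop
    · filter_upwards [hRc, tc.eventually hA] with t h1 h2 ht
      rw [h1] at h2
      simpa [ht] using h2.symm
  have hRB : ∀ᶠ p in 𝓝 (0 : ℝ × ℝ), R p = p.2 ^ 2 * (p.1 + 2 * p.2 ^ 2) * B p := by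
    filter_upwards [hA, (continuous_snd.tendsto (0 : ℝ × ℝ)).eventually hA0] with p h1 h2
    obtain ⟨x, y⟩ := p
    simp only at h1 h2
    rw [h1, hB, h2]; ring
  have cRB : ContDiff ℝ ∞ (fun p : ℝ × ℝ => p.2 ^ 2 * (p.1 + 2 * p.2 ^ 2) * B p) := by fun_prop
  have hB0 : ∀ᶠ t in 𝓝 (0:ℝ), B (-2 * t ^ 2, t) = 0 := by
    refine ev_of_punct (a := fun t => B (-2 * t ^ 2, t)) (b := fun _ => 0) ?_ continuous_const ?_
    · have := cB.continuous; fun_prop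
    · filter_upwards [tc.eventually (pdy_congr hRB), tc.eventually hRp] with t h1 h2 ht
      rw [h2] at h1
      have hd : HasDerivAt (fun y : ℝ => y ^ 2 * (-2 * t ^ 2 + 2 * y ^ 2) * B (-2 * t ^ 2, y))
          ((2 * t * (-2 * t ^ 2 + 2 * t ^ 2) + t ^ 2 * (4 * t)) * B (-2 * t ^ 2, t)
            + t ^ 2 * (-2 * t ^ 2 + 2 * t ^ 2) * pdy B (-2 * t ^ 2, t)) t := by
        have e1 : HasDerivAt (fun y : ℝ => y ^ 2) (2 * t) t := by simpa using hasDerivAt_pow 2 t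
        have e2 : HasDerivAt (fun y : ℝ => -2 * t ^ 2 + 2 * y ^ 2) (4 * t) t := by
          have := (e1.const_mul 2).const_add (-2 * t ^ 2)
          exact this.congr_deriv (by ring)
        exact (e1.mul e2).mul (hasDerivAt_pdy cB _ _)
      rw [pdy_eq cRB hd] at h1
      have : t ^ 3 * B (-2 * t ^ 2, t) = 0 := by linear_combination -h1 / 4
      simpa [ht] using this
  obtain ⟨ρ, cρ, hρ⟩ := divcurve (fun y => -2 * y ^ 2) cκ B cB
  have hRρ : ∀ᶠ p in 𝓝 (0 : ℝ × ℝ), R p = p.2 ^ 2 * (p.1 + 2 * p.2 ^ 2) ^ 2 * ρ p := by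
    filter_upwards [hRB, (continuous_snd.tendsto (0 : ℝ × ℝ)).eventually hB0] with p h1 h2
    obtain ⟨x, y⟩ := p
    simp only at h1 h2
    rw [h1, hρ, h2]; ring
  -- second order expansion of n
  obtain ⟨H, cH, hH, hH0⟩ := had (fun q : (ℝ × ℝ) × ℝ => n (q.1.1, q.1.2 + q.2)) (by fun_prop)
  have hH0' : ∀ p, H (p, 0) = pdy n p := by
    intro p
    rw [hH0]
    obtain ⟨x, y⟩ := p
    have c1 : ContDiff ℝ ∞ (fun q : (ℝ × ℝ) × ℝ => n (q.1.1, q.1.2 + q.2)) := by fun_prop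
    have e1 := ((c1.differentiable (by simp)).differentiableAt (x := ((x, y), (0:ℝ)))).hasFDerivAt.comp_hasDerivAt (0:ℝ)
      (f := fun s : ℝ => ((x, y), s)) ((hasDerivAt_const (0:ℝ) (x, y)).prodMk (hasDerivAt_id (0:ℝ)))
    have e2 : HasDerivAt (fun s : ℝ => n (x, y + s)) (pdy n (x, y)) 0 := by
      have e3 : HasDerivAt (fun s : ℝ => y + s) 1 0 := by simpa using (hasDerivAt_id (0:ℝ)).const_add y
      have e4 := hasDerivAt_pdy cn x (y + 0)
      have := e4.comp (0:ℝ) e3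
      simpa [Function.comp_def] using this
    exact e1.unique e2
  obtain ⟨K, cK, hK, -⟩ := had H cH
  have hexp : ∀ x y δ, n (x, y + δ) = n (x, y) + δ * pdy n (x, y) + δ ^ 2 * K ((x, y), δ) := by
    intro x y δ
    have e1 := hH (x, y) δ
    have e2 := hK (x, y) δ
    simp only [add_zero] at e1
    rw [e1, e2, hH0']; ring
  have hK0 : K (0, 0) = 0 := by
    obtain ⟨A', cA', A0', hA'⟩ := prim n u cn hu h.ax hpu
    have hp0 : pdy n (0, 0) = 0 := by
      have := hpu.self_of_nhds
      simpa [← Prod.mk_zero_zero] using this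
    have hn0 : n (0, 0) = 0 := h.ax.self_of_nhds
    have ta : Tendsto (fun t : ℝ => ((0:ℝ), t)) (𝓝 0) (𝓝 (0 : ℝ × ℝ)) :=
      tend_curve (by fun_prop) (by fun_prop) (by simp) rfl
    have : ∀ᶠ t in 𝓝 (0:ℝ), K ((0, 0), t) = A' (0, t) := by
      refine ev_of_punct (a := fun t => K ((0, 0), t)) (b := fun t => A' (0, t)) ?_ ?_ ?_
      · have := cK.continuous; fun_prop
      · have := cA'.continuous; fun_prop
      · filter_upwards [ta.eventually hA'] with t e1 ht
        have e2 := hexp 0 0 t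
        rw [zero_add, hp0, hn0, e1] at e2
        have : t ^ 2 * (A' (0, t) - K ((0,0), t)) = 0 := by
          linear_combination e2
        have := (mul_eq_zero.1 this).resolve_left (by positivity)
        linarith
    have e := this.self_of_nhds
    exact e.trans A0'
  -- implicit function
  obtain ⟨θ, cθ, θ0, hθ⟩ := ift (fun q : (ℝ × ℝ) × ℝ => u q.1 * q.2 +
      q.2 ^ 2 * K (q.1, q.1.2 * (q.1.1 + 2 * q.1.2 ^ 2) * q.2) - ρ q.1) (by fun_prop) 0 (ρ 0 / 2)
      (by simp [u0, hK0]; ring) (by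
      have c1 : ContDiff ℝ ∞ (fun q : (ℝ × ℝ) × ℝ => u q.1 * q.2 +
        q.2 ^ 2 * K (q.1, q.1.2 * (q.1.1 + 2 * q.1.2 ^ 2) * q.2) - ρ q.1) := by fun_prop
      have e1 := ((c1.differentiable (by simp)).differentiableAt (x := ((0 : ℝ × ℝ), ρ 0 / 2))).hasFDerivAt.comp_hasDerivAt (ρ 0 / 2)
        (f := fun s : ℝ => ((0 : ℝ × ℝ), s)) ((hasDerivAt_const (ρ 0 / 2) (0 : ℝ × ℝ)).prodMk (hasDerivAt_id (ρ 0 / 2)))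
      have e2 : HasDerivAt (fun s : ℝ => 2 * s - ρ 0) 2 (ρ 0 / 2) := by
        simpa using ((hasDerivAt_id (ρ 0 / 2)).const_mul 2).sub_const (ρ 0)
      have e3 := e1.unique (e2.congr_of_eventuallyEq (Eventually.of_forall fun s => by
        simp [Function.comp_def, u0, hK0]))
      rw [e3]; norm_num)
  have cS : ContDiff ℝ ∞ (fun p : ℝ × ℝ => p.2 + p.2 * (p.1 + 2 * p.2 ^ 2) * θ p) := by fun_prop
  refine ⟨fun p => (p.1, p.2 + p.2 * (p.1 + 2 * p.2 ^ 2) * θ p), id, by fun_prop, contDiff_id,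
    by simp, rfl, ?_, ?_, ?_⟩
  · refine bij_pair (a := 1) (b := 0) (c := 0) (d := 1) contDiff_fst cS (hasDerivAt_id _) (hasDerivAt_const _ _) ?_ ?_ (by simp)
      one_ne_zero one_ne_zero
    · simp only [zero_mul, add_zero]
      exact hasDerivAt_const _ _
    · have e0 : HasDerivAt (fun s : ℝ => θ (0, s)) (pdy θ (0, 0)) 0 := hasDerivAt_pdy cθ 0 0
      have e1 : HasDerivAt (fun y : ℝ => y ^ 2) (2 * 0) 0 := by simpa using hasDerivAt_pow 2 (0:ℝ)
      have := (hasDerivAt_id (0:ℝ)).add (((hasDerivAt_id (0:ℝ)).mul ((e1.const_mul 2).const_add 0)).mul e0)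
      exact this.congr_deriv (by simp)
  · rw [fderiv_id]; exact Function.bijective_id
  · filter_upwards [hθ, hRρ, hpu] with p e1 e2 e3
    obtain ⟨x, y⟩ := p
    simp only [id, Prod.mk.injEq, true_and] at e1 e2 e3 ⊢
    rw [hexp, e3]
    have : n' (x, y) = n (x, y) + R (x, y) := by simp [hR]
    rw [this, e2]
    linear_combination (y ^ 2 * (x + 2 * y ^ 2) ^ 2) * e1

end basics

end part2

section part3
open Filter Topology
open scoped ContDiff

section whitney
open MeasureTheory

structure Adm (ψ : ℝ → ℝ) : Prop where
  int : ∀ n : ℕ, Integrable (fun l => l ^ n * ψ l)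
  mom : ∀ k : ℕ, ∫ l, l ^ (2 * k) * ψ l = (-1) ^ k

theorem Adm.next {ψ : ℝ → ℝ} (h : Adm ψ) : Adm (fun l => -(l ^ 2 * ψ l)) := by
  have e : ∀ n : ℕ, (fun l : ℝ => l ^ n * -(l ^ 2 * ψ l)) = fun l => -(l ^ (n + 2) * ψ l) := by
    intro n; funext l; ring
  constructor
  · intro n
    rw [e]; exact (h.int (n + 2)).neg
  · intro k
    rw [e, integral_neg]
    have := h.mom (k + 1)
    rw [show 2 * k + 2 = 2 * (k + 1) by ring, this]; ring

structure EvC (E : ℝ → ℝ) : Prop where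
  c : ContDiff ℝ ∞ E
  ev : ∀ t, E (-t) = E t
  cs : HasCompactSupport E

theorem EvC.next {E : ℝ → ℝ} (h : EvC E) : ∃ E1, EvC E1 ∧ ∀ t, deriv E t = t * E1 t := by
  have hd : Differentiable ℝ E := h.c.differentiable (by simp)
  have hodd : ∀ t, deriv E (-t) = -deriv E t := by
    intro t
    have h1 : HasDerivAt (fun s => E (-s)) (-deriv E (-t)) t := by
      have := (hd (-t)).hasDerivAt.comp t (hasDerivAt_neg t)
      exact this.congr_deriv (by simp)
    have h2 : (fun s => E (-s)) = E := funext h.ev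
    rw [h2] at h1
    have := h1.deriv
    linarith
  have h0 : deriv E 0 = 0 := by
    have := hodd 0
    rw [neg_zero] at this; linarith
  have c1 : ContDiff ℝ ∞ (deriv E) := (contDiff_infty_iff_deriv.1 h.c).2
  obtain ⟨H, cH, hH, -⟩ := had (E := ℝ) (fun p : ℝ × ℝ => deriv E p.2) (by fun_prop)
  have hE : ∀ t, deriv E t = t * H (0, t) := by
    intro t
    have := hH 0 t
    simpa [h0] using this
  refine ⟨fun t => H (0, t), ⟨by fun_prop, ?_, ?_⟩, hE⟩
  · intro t
    by_cases ht : t = 0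
    · simp [ht]
    · have h1 := hodd t
      rw [hE, hE] at h1
      have : t * (H (0, -t) - H (0, t)) = 0 := by linear_combination -h1
      have := (mul_eq_zero.1 this).resolve_left ht
      linarith
  · refine HasCompactSupport.intro (K := tsupport E ∪ {0}) (h.cs.isCompact.union isCompact_singleton) ?_
    intro t ht
    simp only [Set.mem_union, Set.mem_singleton_iff, not_or] at ht
    have h1 : deriv E t = 0 := by
      have := notMem_tsupport_iff_eventuallyEq.1 ht.1
      rw [this.deriv_eq]
      simp
    rw [hE] at h1
    exact (mul_eq_zero.1 h1).resolve_left ht.2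

noncomputable def Wf (E ψ : ℝ → ℝ) (s : ℝ) : ℝ := E (√s) + (∫ l, E (√(-s) * l) * ψ l) - E 0

theorem EvC.bdd {E : ℝ → ℝ} (h : EvC E) : ∃ C, ∀ t, ‖E t‖ ≤ C :=
  h.c.continuous.bounded_above_of_compact_support h.cs

theorem Adm.int0 {ψ : ℝ → ℝ} (h : Adm ψ) : Integrable ψ := by
  simpa using h.int 0

theorem Adm.mom0 {ψ : ℝ → ℝ} (h : Adm ψ) : ∫ l, ψ l = 1 := by
  simpa using h.mom 0

theorem Wf_cont {E ψ : ℝ → ℝ} (h : EvC E) (hψ : Adm ψ) : Continuous (Wf E ψ) := by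
  obtain ⟨C, hC⟩ := h.bdd
  have hEc := h.c.continuous
  have h1 : Continuous (fun s : ℝ => ∫ l, E (√(-s) * l) * ψ l) := by
    refine continuous_of_dominated (bound := fun l => C * ‖ψ l‖) ?_ ?_ ?_ ?_
    · intro s
      have : Continuous (fun l => E (√(-s) * l)) := by fun_prop
      exact this.aestronglyMeasurable.mul hψ.int0.aestronglyMeasurable
    · intro s
      refine Eventually.of_forall fun l => ?_
      rw [norm_mul]
      exact mul_le_mul_of_nonneg_right (hC _) (norm_nonneg _)
    · exact hψ.int0.norm.const_mul C
    · refine Eventually.of_forall fun l => ?_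
      have : Continuous (fun s : ℝ => √(-s)) := Real.continuous_sqrt.comp continuous_neg
      fun_prop
  unfold Wf
  have h2 : Continuous (fun s : ℝ => E (√s)) := hEc.comp Real.continuous_sqrt
  exact (h2.add h1).sub continuous_const

theorem Wf_pos {E ψ : ℝ → ℝ} (hψ : Adm ψ) {s : ℝ} (hs : 0 ≤ s) : Wf E ψ s = E (√s) := by
  unfold Wf
  rw [Real.sqrt_eq_zero_of_nonpos (by linarith : -s ≤ 0)]
  simp only [zero_mul]
  rw [integral_const_mul, hψ.mom0]; ring

theorem Wf_neg {E ψ : ℝ → ℝ} {s : ℝ} (hs : s ≤ 0) : Wf E ψ s = ∫ l, E (√(-s) * l) * ψ l := by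
  unfold Wf
  rw [Real.sqrt_eq_zero_of_nonpos hs]
  ring

theorem Wf_deriv {E E1 ψ : ℝ → ℝ} (h : EvC E) (h1 : EvC E1) (hE : ∀ t, deriv E t = t * E1 t)
    (hψ : Adm ψ) (s : ℝ) :
    HasDerivAt (Wf E ψ) (1 / 2 * Wf E1 (fun l => -(l ^ 2 * ψ l)) s) s := by
  have hd : Differentiable ℝ E := h.c.differentiable (by simp)
  have hEc := h.c.continuous
  have hE1c := h1.c.continuous
  have key : ∀ y : ℝ, y ≠ 0 → HasDerivAt (Wf E ψ) (1 / 2 * Wf E1 (fun l => -(l ^ 2 * ψ l)) y) y := by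
    intro y hy
    rcases lt_or_gt_of_ne hy with hy | hy
    · -- negative
      rw [Wf_neg hy.le]
      obtain ⟨C, hC⟩ := h.bdd
      obtain ⟨C1, hC1⟩ := h1.bdd
      have hev : ∀ᶠ x in 𝓝 y, Wf E ψ x = ∫ l, E (√(-x) * l) * ψ l := by
        filter_upwards [Iio_mem_nhds hy] with x hx
        exact Wf_neg (le_of_lt hx)
      refine HasDerivAt.congr_of_eventuallyEq ?_ hev
      have := (hasDerivAt_integral_of_dominated_loc_of_deriv_le (μ := volume) (x₀ := y)
        (F := fun x l => E (√(-x) * l) * ψ l)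
        (F' := fun x l => 1 / 2 * (E1 (√(-x) * l) * -(l ^ 2 * ψ l)))
        (s := Set.Iio 0) (bound := fun l => 1 / 2 * C1 * ‖l ^ 2 * ψ l‖) (Iio_mem_nhds hy) ?_ ?_ ?_ ?_ ?_ ?_).2
      · refine this.congr_deriv ?_
        rw [integral_const_mul]
      · refine Eventually.of_forall fun x => ?_
        have : Continuous (fun l => E (√(-x) * l)) := by fun_prop
        exact this.aestronglyMeasurable.mul hψ.int0.aestronglyMeasurable
      · refine (hψ.int0.norm.const_mul C).mono ?_ ?_
        · have : Continuous (fun l => E (√(-y) * l)) := by fun_prop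
          exact this.aestronglyMeasurable.mul hψ.int0.aestronglyMeasurable
        · refine Eventually.of_forall fun l => ?_
          rw [norm_mul, norm_mul, norm_norm]
          exact mul_le_mul_of_nonneg_right ((hC _).trans (le_abs_self C)) (norm_nonneg _)
      · have : Continuous (fun l => E1 (√(-y) * l)) := by fun_prop
        exact (this.aestronglyMeasurable.mul (hψ.int 2).aestronglyMeasurable.neg).const_mul (1/2)
      · refine Eventually.of_forall fun l x _ => ?_
        rw [norm_mul, norm_mul, norm_neg]
        have : ‖(1 / 2 : ℝ)‖ = 1 / 2 := by norm_num
        rw [this, mul_assoc]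
        gcongr
        exact hC1 _
      · exact (hψ.int 2).norm.const_mul _
      · refine Eventually.of_forall fun l x hx => ?_
        have hx : x < 0 := hx
        have hpos : 0 < -x := by linarith
        have e1 : HasDerivAt (fun x : ℝ => √(-x)) (1 / (2 * √(-x)) * -1) x :=
          (Real.hasDerivAt_sqrt hpos.ne').comp x (hasDerivAt_neg x)
        have e2 := ((hd (√(-x) * l)).hasDerivAt.comp x (e1.mul_const l)).mul_const (ψ l)
        refine e2.congr_deriv ?_
        rw [hE]
        have : √(-x) ≠ 0 := (Real.sqrt_pos.2 hpos).ne'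
        field_simp
    · rw [Wf_pos hψ.next hy.le]
      have hev : ∀ᶠ x in 𝓝 y, Wf E ψ x = E (√x) := by
        filter_upwards [Ioi_mem_nhds hy] with x hx
        exact Wf_pos hψ (le_of_lt hx)
      refine HasDerivAt.congr_of_eventuallyEq ?_ hev
      have e2 := (hd (√y)).hasDerivAt.comp y (Real.hasDerivAt_sqrt hy.ne')
      refine e2.congr_deriv ?_
      rw [hE]
      have : √y ≠ 0 := (Real.sqrt_pos.2 hy).ne'
      field_simp
  by_cases hs : s = 0
  · subst hs
    exact hasDerivAt_of_hasDerivAt_of_ne (g := fun y => 1 / 2 * Wf E1 (fun l => -(l ^ 2 * ψ l)) y) key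
      (Wf_cont h hψ).continuousAt
      (continuous_const.mul (Wf_cont h1 hψ.next)).continuousAt
  · exact key s hs

theorem Wf_contDiff (n : ℕ) : ∀ {E ψ : ℝ → ℝ}, EvC E → Adm ψ → ContDiff ℝ n (Wf E ψ) := by
  induction n with
  | zero => intro E ψ h hψ; exact contDiff_zero.2 (Wf_cont h hψ)
  | succ n ih =>
    intro E ψ h hψ
    obtain ⟨E1, h1, hE⟩ := h.next
    have key := Wf_deriv h h1 hE hψ
    push_cast
    refine contDiff_succ_iff_deriv.2 ⟨fun s => (key s).differentiableAt, by simp, ?_⟩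
    have : deriv (Wf E ψ) = fun s => 1 / 2 * Wf E1 (fun l => -(l ^ 2 * ψ l)) s :=
      funext fun s => (key s).deriv
    rw [this]
    exact contDiff_const.mul (ih h1 hψ.next)

open scoped FourierTransform SchwartzMap

theorem exists_adm : ∃ ψ : ℝ → ℝ, Adm ψ := by
  let f : ContDiffBump (0:ℝ) := ⟨1, 2, by norm_num, by norm_num⟩
  let e : ℝ → ℂ := fun x => Complex.exp ((2 * Real.pi : ℝ) * (x:ℂ))
  have he : ∀ x : ℝ, HasDerivAt e ((2 * Real.pi : ℝ) * e x) x := by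
    intro x
    have h1 : HasDerivAt (fun x : ℝ => ((2 * Real.pi : ℝ) : ℂ) * (x:ℂ)) ((2 * Real.pi : ℝ) * 1) x :=
      (Complex.ofRealCLM.hasDerivAt (x := x)).const_mul _
    refine h1.cexp.congr_deriv ?_
    simp only [e]; ring
  have hit : ∀ n : ℕ, iteratedDeriv n e = fun x => ((2 * Real.pi : ℝ) : ℂ) ^ n * e x := by
    intro n
    induction n with
    | zero => simp
    | succ n ih =>
      rw [iteratedDeriv_succ, ih]
      funext x
      rw [((he x).const_mul _).deriv]; ring
  have ce : ContDiff ℝ ∞ e := by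
    have : ContDiff ℝ ∞ (fun x : ℝ => ((2 * Real.pi : ℝ) : ℂ) * (x:ℂ)) :=
      contDiff_const.mul Complex.ofRealCLM.contDiff
    exact this.cexp
  have cg : ContDiff ℝ ∞ (fun x => f x • e x) := f.contDiff.smul ce
  have sg : HasCompactSupport (fun x => f x • e x) := f.hasCompactSupport.smul_right
  let g : 𝓢(ℝ, ℂ) := sg.toSchwartzMap cg
  let p : 𝓢(ℝ, ℂ) := 𝓕⁻ g
  have hp : 𝓕 (p : ℝ → ℂ) = fun x => f x • e x := by
    rw [← SchwartzMap.fourier_coe]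
    have : 𝓕 p = g := FourierInvPair.fourier_fourierInv_eq g
    rw [this]; rfl
  have hInteg : ∀ n : ℕ, Integrable (fun x : ℝ => x ^ n • p x) := by
    intro n
    refine (p.integrable_pow_mul volume n).mono ?_ ?_
    · have : Continuous (fun x : ℝ => x ^ n • p x) := by
        have := p.continuous; fun_prop
      exact this.aestronglyMeasurable
    · refine Eventually.of_forall fun x => ?_
      rw [norm_smul, norm_pow, norm_mul, norm_norm, norm_pow, norm_norm]
  have hmom : ∀ n : ℕ, ∫ x : ℝ, (-2 * Real.pi * Complex.I * x : ℂ) ^ n • p x = ((2 * Real.pi : ℝ) : ℂ) ^ n := by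
    intro n
    have h1 := Real.iteratedDeriv_fourier (f := (p : ℝ → ℂ)) (N := ⊤) (n := n) (fun m _ => hInteg m) le_top
    have h2 := congrFun h1 0
    rw [hp] at h2
    have h3 : (fun x => f x • e x) =ᶠ[𝓝 0] e := by
      filter_upwards [f.eventuallyEq_one] with x hx
      simp [hx]
    rw [h3.iteratedDeriv_eq, hit] at h2
    rw [Real.fourier_eq] at h2
    simp only [e] at h2
    simp at h2
    simpa using h2.symm
  have hre : ∀ (n : ℕ) (x : ℝ), RCLike.re (x ^ n • p x) = x ^ n * (p x).re := fun n x => by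
    have := Complex.smul_re (x ^ n) (p x)
    rw [smul_eq_mul] at this
    exact this
  refine ⟨fun x => (p x).re, ⟨fun n => ?_, fun k => ?_⟩⟩
  · have := (hInteg n).re
    simp only [hre] at this
    exact this
  · have h1 := hmom (2 * k)
    have h2 : ∀ x : ℝ, (-2 * Real.pi * Complex.I * x : ℂ) ^ (2 * k) • p x =
        (((2 * Real.pi) ^ (2 * k) * (-1) ^ k : ℝ) : ℂ) * (x ^ (2 * k) • p x) := by
      intro x
      have : (-2 * Real.pi * Complex.I * x : ℂ) ^ (2 * k) = (((2 * Real.pi) ^ (2 * k) * (-1) ^ k : ℝ) : ℂ) * (x:ℂ) ^ (2 * k) := by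
        push_cast
        rw [mul_pow, pow_mul (-2 * Real.pi * Complex.I : ℂ), mul_pow _ Complex.I, Complex.I_sq, mul_pow, pow_mul (2 * Real.pi : ℂ)]
        ring
      rw [this]
      simp [mul_assoc]
    simp_rw [h2] at h1
    rw [integral_const_mul] at h1
    have h3 : ∫ x : ℝ, x ^ (2 * k) * (p x).re = (∫ x : ℝ, x ^ (2 * k) • p x).re := by
      have := integral_re (hInteg (2 * k))
      simp only [hre] at this
      exact this
    rw [h3]
    have hne : ((2 * Real.pi : ℝ) : ℂ) ^ (2 * k) ≠ 0 := by
      apply pow_ne_zero; exact_mod_cast (by positivity : (2 * Real.pi) ≠ 0)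
    have h4 : (∫ x : ℝ, x ^ (2 * k) • p x) = (((-1) ^ k : ℝ) : ℂ) := by
      have h5 : (((2 * Real.pi : ℝ) : ℂ) ^ (2 * k)) * ((((-1) ^ k : ℝ) : ℂ) * (∫ x : ℝ, x ^ (2 * k) • p x) - 1) = 0 := by
        have := h1
        push_cast at this ⊢
        linear_combination this
      have h6 := (mul_eq_zero.1 h5).resolve_left hne
      have h7 : (((-1) ^ k : ℝ) : ℂ) * (((-1) ^ k : ℝ) : ℂ) = 1 := by
        push_cast; rw [← mul_pow]; simp
      linear_combination (((-1) ^ k : ℝ) : ℂ) * h6 - (∫ x : ℝ, x ^ (2 * k) • p x) * h7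
    rw [h4, Complex.ofReal_re]

theorem whitney_even (E : ℝ → ℝ) (hE : ContDiff ℝ ∞ E) (hev : ∀ t, E (-t) = E t) :
    ∃ ε : ℝ → ℝ, ContDiff ℝ ∞ ε ∧ ∀ᶠ t in 𝓝 (0:ℝ), E t = ε (t ^ 2) := by
  obtain ⟨ψ, hψ⟩ := exists_adm
  let f : ContDiffBump (0:ℝ) := ⟨1, 2, by norm_num, by norm_num⟩
  have h : EvC (fun t => f t * E t) := by
    refine ⟨f.contDiff.mul hE, fun t => ?_, f.hasCompactSupport.mul_right⟩
    rw [hev, f.neg]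
  refine ⟨Wf (fun t => f t * E t) ψ, contDiff_infty.2 fun n => Wf_contDiff n h hψ, ?_⟩
  filter_upwards [f.eventuallyEq_one] with t ht
  rw [Wf_pos hψ (sq_nonneg t), Real.sqrt_sq_eq_abs]
  have h1 : f |t| * E |t| = f t * E t := by
    rcases abs_choice t with h' | h' <;> rw [h']
    exact h.ev t
  rw [h1, ht]; simp

theorem whitney (K : ℝ → ℝ) (hK : ContDiff ℝ ∞ K) :
    ∃ ε w : ℝ → ℝ, ContDiff ℝ ∞ ε ∧ ContDiff ℝ ∞ w ∧
      ∀ᶠ t in 𝓝 (0:ℝ), K t = ε (t ^ 2) + t * w (t ^ 2) := by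
  obtain ⟨H, cH, hH, -⟩ := had (E := ℝ) (fun p : ℝ × ℝ => (K p.2 - K (-p.2)) / 2) (by fun_prop)
  have hH' : ∀ t, (K t - K (-t)) / 2 = t * H (0, t) := by
    intro t; simpa using hH 0 t
  have hHe : ∀ t, H (0, -t) = H (0, t) := by
    intro t
    by_cases ht : t = 0
    · simp [ht]
    · have h1 := hH' t
      have h2 := hH' (-t)
      rw [neg_neg] at h2
      have : t * (H (0, -t) - H (0, t)) = 0 := by linear_combination h1 + h2
      have := (mul_eq_zero.1 this).resolve_left ht
      linarith
  obtain ⟨ε, cε, h1⟩ := whitney_even (fun t => (K t + K (-t)) / 2) (by fun_prop) (fun t => by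
    simp only [neg_neg]; ring)
  obtain ⟨w, cw, h2⟩ := whitney_even (fun t => H (0, t)) (by fun_prop) hHe
  refine ⟨ε, w, cε, cw, ?_⟩
  filter_upwards [h1, h2] with t e1 e2
  rw [← e1, ← e2, ← hH']; ring

end whitney

end part3

section part4
open Filter Topology Asymptotics
open scoped ContDiff

section taylor

theorem bigO_of_fderiv {E F : Type} [NormedAddCommGroup E] [NormedSpace ℝ E]
    [NormedAddCommGroup F] [NormedSpace ℝ F] {h : E → F} (hd : Differentiable ℝ h) (h0 : h 0 = 0)
    {N : ℕ} (hO : (fderiv ℝ h) =O[𝓝 0] fun p => ‖p‖ ^ N) : h =O[𝓝 0] fun p => ‖p‖ ^ (N + 1) := by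
  obtain ⟨C, hC⟩ := hO.bound
  obtain ⟨r, hr, hb⟩ := Metric.eventually_nhds_iff_ball.1 hC
  refine IsBigO.of_bound C ?_
  filter_upwards [Metric.ball_mem_nhds (0 : E) hr] with p hp
  have hconv : Convex ℝ (Metric.closedBall (0 : E) ‖p‖) := convex_closedBall _ _
  have hp' : ‖p‖ < r := by simpa using hp
  have hCp : 0 ≤ C ∨ p = 0 := by
    by_cases h : p = 0
    · right; exact h
    · left
      have := hb p hp
      rw [norm_pow, norm_norm] at this
      have h1 : 0 < ‖p‖ ^ N := pow_pos (norm_pos_iff.2 h) _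
      by_contra hneg
      push Not at hneg
      have : 0 ≤ C * ‖p‖ ^ N := (norm_nonneg _).trans this
      nlinarith
  rcases hCp with hC0 | hp0
  · have := hconv.norm_image_sub_le_of_norm_fderiv_le (f := h) (C := C * ‖p‖ ^ N) (x := 0) (y := p)
      (fun x _ => hd x) (fun x hx => by
        have hx' : ‖x‖ ≤ ‖p‖ := by simpa using hx
        have := hb x (by simpa using lt_of_le_of_lt hx' hp')
        rw [norm_pow, norm_norm] at this
        refine this.trans ?_
        gcongr) (by simp) (by simp)
    rw [h0, sub_zero, sub_zero] at this
    rw [norm_pow, norm_norm, pow_succ]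
    linarith
  · subst hp0
    simp [h0]

theorem bigO_of_iteratedFDeriv {E : Type} [NormedAddCommGroup E] [NormedSpace ℝ E] (N : ℕ) :
    ∀ {F : Type} [NormedAddCommGroup F] [NormedSpace ℝ F] {h : E → F}, ContDiff ℝ ∞ h →
    (∀ i < N, iteratedFDeriv ℝ i h 0 = 0) → h =O[𝓝 0] fun p => ‖p‖ ^ N := by
  induction N with
  | zero =>
    intro F _ _ h hh _
    simp only [pow_zero]
    exact hh.continuous.continuousAt.norm.isBoundedUnder_le.isBigO_one ℝ
  | succ N ih =>
    intro F _ _ h hh h0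
    refine bigO_of_fderiv (hh.differentiable (by simp)) ?_ (ih (hh.fderiv_right (by simp)) ?_)
    · have := h0 0 (by omega)
      have h1 : ‖iteratedFDeriv ℝ 0 h 0‖ = ‖h 0‖ := norm_iteratedFDeriv_zero
      rw [this, norm_zero] at h1
      exact norm_eq_zero.1 h1.symm
    · intro i hi
      rw [← norm_eq_zero, norm_iteratedFDeriv_fderiv, h0 (i + 1) (by omega), norm_zero]

theorem bigO_fderiv_of_iteratedFDeriv {E F : Type} [NormedAddCommGroup E] [NormedSpace ℝ E] (N : ℕ)
    [NormedAddCommGroup F] [NormedSpace ℝ F] {h : E → F} (hh : ContDiff ℝ ∞ h)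
    (h0 : ∀ i < N + 1, iteratedFDeriv ℝ i h 0 = 0) : (fderiv ℝ h) =O[𝓝 0] fun p => ‖p‖ ^ N := by
  refine bigO_of_iteratedFDeriv N (hh.fderiv_right (by simp)) ?_
  intro i hi
  rw [← norm_eq_zero, norm_iteratedFDeriv_fderiv, h0 (i + 1) (by omega), norm_zero]

theorem pd_comm {h : ℝ × ℝ → ℝ} (hh : ContDiff ℝ ∞ h) : pdy (pdx h) = pdx (pdy h) := by
  funext p
  have c1 : ContDiff ℝ ∞ (fderiv ℝ h) := hh.fderiv_right (by simp)
  have key : ∀ v w : ℝ × ℝ, fderiv ℝ (fun q => fderiv ℝ h q v) p w = fderiv ℝ (fderiv ℝ h) p w v := by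
    intro v w
    have h1 : HasFDerivAt (fderiv ℝ h) (fderiv ℝ (fderiv ℝ h) p) p :=
      (c1.differentiable (by simp)).differentiableAt.hasFDerivAt
    have h2 := h1.clm_apply (hasFDerivAt_const v p)
    rw [h2.fderiv]
    simp
  have hs : IsSymmSndFDerivAt ℝ h p := by
    refine hh.contDiffAt.isSymmSndFDerivAt ?_
    simp only [minSmoothness_of_isRCLikeNormedField]
    exact WithTop.coe_le_coe.2 (le_top : (2 : ℕ∞) ≤ ⊤)
  show fderiv ℝ (fun q => fderiv ℝ h q (1, 0)) p (0, 1) = fderiv ℝ (fun q => fderiv ℝ h q (0, 1)) p (1, 0)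
  rw [key, key]
  exact hs _ _

theorem pdy_iter_contDiff {h : ℝ × ℝ → ℝ} (hh : ContDiff ℝ ∞ h) (j : ℕ) : ContDiff ℝ ∞ (pdy^[j] h) := by
  induction j with
  | zero => exact hh
  | succ j ih => rw [Function.iterate_succ_apply']; exact pdy_contDiff ih

theorem pdx_iter_contDiff {h : ℝ × ℝ → ℝ} (hh : ContDiff ℝ ∞ h) (j : ℕ) : ContDiff ℝ ∞ (pdx^[j] h) := by
  induction j with
  | zero => exact hh
  | succ j ih => rw [Function.iterate_succ_apply']; exact pdx_contDiff ih

theorem pdy_iter_comm {h : ℝ × ℝ → ℝ} (hh : ContDiff ℝ ∞ h) (j : ℕ) :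
    pdy^[j] (pdx h) = pdx (pdy^[j] h) := by
  induction j with
  | zero => rfl
  | succ j ih =>
    rw [Function.iterate_succ_apply', ih, pd_comm (pdy_iter_contDiff hh j), ← Function.iterate_succ_apply' pdy]

theorem bigO_of_pd (N : ℕ) : ∀ {h : ℝ × ℝ → ℝ}, ContDiff ℝ ∞ h →
    (∀ i j, i + j < N → (pdx^[i] (pdy^[j] h)) 0 = 0) → h =O[𝓝 0] fun p => ‖p‖ ^ N := by
  induction N with
  | zero =>
    intro h hh _
    simp only [pow_zero]
    exact hh.continuous.continuousAt.norm.isBoundedUnder_le.isBigO_one ℝ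
  | succ N ih =>
    intro h hh h0
    have hx : pdx h =O[𝓝 0] fun p => ‖p‖ ^ N := by
      refine ih (pdx_contDiff hh) fun i j hij => ?_
      rw [pdy_iter_comm hh, ← Function.iterate_succ_apply pdx]
      exact h0 (i + 1) j (by omega)
    have hy : pdy h =O[𝓝 0] fun p => ‖p‖ ^ N := by
      refine ih (pdy_contDiff hh) fun i j hij => ?_
      rw [← Function.iterate_succ_apply pdy]
      exact h0 i (j + 1) (by omega)
    refine bigO_of_fderiv (hh.differentiable (by simp)) (h0 0 0 (by omega)) ?_
    refine IsBigO.trans (IsBigO.of_bound 1 (Eventually.of_forall fun p => ?_)) (hx.norm_left.add hy.norm_left)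
    have hn : ‖‖pdx h p‖ + ‖pdy h p‖‖ = ‖pdx h p‖ + ‖pdy h p‖ := Real.norm_of_nonneg (by positivity)
    rw [one_mul, hn]
    refine ContinuousLinearMap.opNorm_le_bound _ (by positivity) fun v => ?_
    rw [clm_split1]
    refine (norm_add_le _ _).trans ?_
    rw [norm_mul, norm_mul, add_mul, mul_comm ‖pdx h p‖, mul_comm ‖pdy h p‖]
    gcongr
    · exact norm_fst_le v
    · rfl
    · exact norm_snd_le v
    · rfl

theorem tcoeff_zero_iff {h : ℝ × ℝ → ℝ} {i j : ℕ} : tcoeff h i j = 0 ↔ (pdx^[i] (pdy^[j] h)) 0 = 0 := by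
  unfold tcoeff
  rw [div_eq_zero_iff]
  constructor
  · rintro (h | h)
    · exact h
    · exfalso; revert h; positivity
  · exact Or.inl

theorem pdy_sub {f h : ℝ × ℝ → ℝ} (hf : ContDiff ℝ ∞ f) (hh : ContDiff ℝ ∞ h) :
    pdy (f - h) = pdy f - pdy h := by
  funext ⟨x, y⟩
  exact pdy_eq (hf.sub hh) ((hasDerivAt_pdy hf x y).sub (hasDerivAt_pdy hh x y))

theorem pdx_sub {f h : ℝ × ℝ → ℝ} (hf : ContDiff ℝ ∞ f) (hh : ContDiff ℝ ∞ h) :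
    pdx (f - h) = pdx f - pdx h := by
  funext ⟨x, y⟩
  exact (hasDerivAt_pdx (hf.sub hh) x y).unique ((hasDerivAt_pdx hf x y).sub (hasDerivAt_pdx hh x y))

theorem tcoeff_sub {f h : ℝ × ℝ → ℝ} (hf : ContDiff ℝ ∞ f) (hh : ContDiff ℝ ∞ h) (i j : ℕ) :
    tcoeff (f - h) i j = tcoeff f i j - tcoeff h i j := by
  have e1 : pdy^[j] (f - h) = pdy^[j] f - pdy^[j] h := by
    induction j with
    | zero => rfl
    | succ j ih =>
      simp only [Function.iterate_succ_apply', ih]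
      exact pdy_sub (pdy_iter_contDiff hf j) (pdy_iter_contDiff hh j)
  have e2 : pdx^[i] (pdy^[j] f - pdy^[j] h) = pdx^[i] (pdy^[j] f) - pdx^[i] (pdy^[j] h) := by
    induction i with
    | zero => rfl
    | succ i ih =>
      simp only [Function.iterate_succ_apply', ih]
      exact pdx_sub (pdx_iter_contDiff (pdy_iter_contDiff hf j) i) (pdx_iter_contDiff (pdy_iter_contDiff hh j) i)
  unfold tcoeff
  rw [e1, e2, Pi.sub_apply]; ring

/-- monomial -/
def mono (c : ℝ) (a b : ℕ) : ℝ × ℝ → ℝ := fun p => c * p.1 ^ a * p.2 ^ b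

theorem mono_contDiff (c : ℝ) (a b : ℕ) : ContDiff ℝ ∞ (mono c a b) := by
  unfold mono; fun_prop

theorem pdy_mono (c : ℝ) (a b : ℕ) : pdy (mono c a b) = mono (c * b) a (b - 1) := by
  funext ⟨x, y⟩
  refine pdy_eq (mono_contDiff c a b) (((hasDerivAt_pow b y).const_mul (c * x ^ a)).congr_deriv ?_)
  simp only [mono]; ring

theorem pdx_mono (c : ℝ) (a b : ℕ) : pdx (mono c a b) = mono (c * a) (a - 1) b := by
  funext ⟨x, y⟩
  refine (hasDerivAt_pdx (mono_contDiff c a b) x y).unique ((((hasDerivAt_pow a x).const_mul c).mul_const (y ^ b)).congr_deriv ?_)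
  simp only [mono]; ring

theorem pdy_iter_mono (c : ℝ) (a b j : ℕ) : pdy^[j] (mono c a b) = mono (c * b.descFactorial j) a (b - j) := by
  induction j with
  | zero => simp
  | succ j ih =>
    rw [Function.iterate_succ_apply', ih, pdy_mono, Nat.descFactorial_succ]
    push_cast
    rw [Nat.sub_sub]
    congr 1; ring

theorem pdx_iter_mono (c : ℝ) (a b i : ℕ) : pdx^[i] (mono c a b) = mono (c * a.descFactorial i) (a - i) b := by
  induction i with
  | zero => simp
  | succ j ih =>
    rw [Function.iterate_succ_apply', ih, pdx_mono, Nat.descFactorial_succ]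
    push_cast
    rw [Nat.sub_sub]
    congr 1; ring

theorem tcoeff_mono (c : ℝ) (a b i j : ℕ) :
    tcoeff (mono c a b) i j = if i = a ∧ j = b then c else 0 := by
  unfold tcoeff
  rw [pdy_iter_mono, pdx_iter_mono]
  simp only [mono, Prod.fst_zero, Prod.snd_zero]
  have aux : ∀ a i : ℕ, i ≠ a → (a.descFactorial i : ℝ) * 0 ^ (a - i) = 0 := by
    intro a i h
    rcases lt_or_gt_of_ne h with h | h
    · rw [zero_pow (by omega), mul_zero]
    · rw [Nat.descFactorial_of_lt h]; simp
  split_ifs with h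
  · obtain ⟨rfl, rfl⟩ := h
    simp only [Nat.descFactorial_self, Nat.sub_self, pow_zero, mul_one]
    have h1 : (i.factorial : ℝ) ≠ 0 := by positivity
    have h2 : (j.factorial : ℝ) ≠ 0 := by positivity
    field_simp
  · by_cases hi : i = a
    · have hj : j ≠ b := fun hj => h ⟨hi, hj⟩
      have := aux b j hj
      rw [div_eq_zero_iff]; left
      linear_combination c * a.descFactorial i * 0 ^ (a - i) * this
    · have := aux a i hi
      rw [div_eq_zero_iff]; left
      linear_combination c * b.descFactorial j * 0 ^ (b - j) * this

theorem tcoeff_add {f h : ℝ × ℝ → ℝ} (hf : ContDiff ℝ ∞ f) (hh : ContDiff ℝ ∞ h) (i j : ℕ) :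
    tcoeff (f + h) i j = tcoeff f i j + tcoeff h i j := by
  have := tcoeff_sub (hf.add hh) hh i j
  have e : f + h - h = f := by simp
  rw [show ((fun x => f x + h x) - h) = f from e] at this
  have e2 : (fun x => f x + h x) = f + h := rfl
  rw [e2] at this
  linarith

theorem tcoeff_sum {ι : Type} (s : Finset ι) (F : ι → ℝ × ℝ → ℝ) (hF : ∀ a, ContDiff ℝ ∞ (F a)) (i j : ℕ) :
    tcoeff (∑ a ∈ s, F a) i j = ∑ a ∈ s, tcoeff (F a) i j := by
  classical
  induction s using Finset.induction_on with
  | empty =>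
    simp only [Finset.sum_empty]
    have := tcoeff_sub (mono_contDiff 0 0 0) (mono_contDiff 0 0 0) i j
    rw [sub_self, sub_self] at this
    exact this
  | insert a s ha ih =>
    rw [Finset.sum_insert ha, Finset.sum_insert ha, tcoeff_add (hF a) ?_, ih]
    have : (∑ a ∈ s, F a) = fun p => ∑ a ∈ s, F a p := by funext p; simp
    rw [this]
    exact ContDiff.sum fun a _ => hF a

/-- Taylor polynomial of degree < N -/
noncomputable def TP (c : ℕ → ℕ → ℝ) (N : ℕ) : ℝ × ℝ → ℝ :=
  ∑ q ∈ (Finset.range N).sigma (fun i => Finset.range (N - i)), mono (c q.1 q.2) q.1 q.2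

theorem TP_contDiff (c : ℕ → ℕ → ℝ) (N : ℕ) : ContDiff ℝ ∞ (TP c N) := by
  unfold TP
  have : (∑ q ∈ (Finset.range N).sigma (fun i => Finset.range (N - i)), mono (c q.1 q.2) q.1 q.2) =
    fun p => ∑ q ∈ (Finset.range N).sigma (fun i => Finset.range (N - i)), mono (c q.1 q.2) q.1 q.2 p := by
    funext p; simp
  rw [this]
  exact ContDiff.sum fun a _ => mono_contDiff _ _ _

theorem tcoeff_TP (c : ℕ → ℕ → ℝ) (N i j : ℕ) (h : i + j < N) : tcoeff (TP c N) i j = c i j := by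
  unfold TP
  rw [tcoeff_sum _ _ (fun q => mono_contDiff _ _ _)]
  simp only [tcoeff_mono]
  rw [Finset.sum_eq_single (⟨i, j⟩ : Σ _ : ℕ, ℕ)]
  · simp
  · rintro ⟨a, b⟩ _ hne
    rw [if_neg]
    rintro ⟨rfl, rfl⟩
    exact hne rfl
  · intro hn
    exfalso; apply hn
    simp; omega

theorem TP_apply (c : ℕ → ℕ → ℝ) (N : ℕ) (p : ℝ × ℝ) :
    TP c N p = ∑ i ∈ Finset.range N, ∑ j ∈ Finset.range (N - i), c i j * p.1 ^ i * p.2 ^ j := by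
  unfold TP
  rw [Finset.sum_apply, Finset.sum_sigma]
  rfl

theorem pdy_TP_apply (c : ℕ → ℕ → ℝ) (N : ℕ) (x y : ℝ) :
    pdy (TP c N) (x, y) =
      ∑ i ∈ Finset.range N, ∑ j ∈ Finset.range (N - i), c i j * x ^ i * (j * y ^ (j - 1)) := by
  refine pdy_eq (TP_contDiff c N) ?_
  have : (fun s => TP c N (x, s)) = fun s =>
    ∑ i ∈ Finset.range N, ∑ j ∈ Finset.range (N - i), c i j * x ^ i * s ^ j := by
    funext s; rw [TP_apply]
  rw [this]
  refine HasDerivAt.fun_sum fun i _ => HasDerivAt.fun_sum fun j _ => ?_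
  exact (hasDerivAt_pow j y).const_mul _

theorem taylor_rem {g : ℝ × ℝ → ℝ} (hg : ContDiff ℝ ∞ g) (c : ℕ → ℕ → ℝ) (N : ℕ)
    (hc : ∀ i j, i + j < N + 1 → tcoeff g i j = c i j) :
    (g - TP c (N + 1)) =O[𝓝 0] (fun p => ‖p‖ ^ (N + 1)) ∧
    (pdy (g - TP c (N + 1))) =O[𝓝 0] (fun p => ‖p‖ ^ N) := by
  have hz : ∀ i j, i + j < N + 1 → (pdx^[i] (pdy^[j] (g - TP c (N + 1)))) 0 = 0 := by
    intro i j hij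
    rw [← tcoeff_zero_iff, tcoeff_sub hg (TP_contDiff _ _), tcoeff_TP _ _ _ _ hij, hc i j hij, sub_self]
  have hs := hg.sub (TP_contDiff c (N + 1))
  refine ⟨bigO_of_pd _ hs hz, bigO_of_pd _ (pdy_contDiff hs) fun i j hij => ?_⟩
  have := hz i (j + 1) (by omega)
  rw [Function.iterate_succ_apply] at this
  exact this

theorem hadN {E : Type} [NormedAddCommGroup E] [NormedSpace ℝ E]
    [FiniteDimensional ℝ E] (n : ℕ) (h : E × ℝ → ℝ) (hh : ContDiff ℝ ∞ h)
    (hO : ∀ e, (fun y : ℝ => h (e, y)) =O[𝓝 0] fun y => y ^ n) :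
    ∃ L : E × ℝ → ℝ, ContDiff ℝ ∞ L ∧ ∀ e y, h (e, y) = y ^ n * L (e, y) := by
  induction n with
  | zero => exact ⟨h, hh, by simp⟩
  | succ n ih =>
    obtain ⟨L, cL, hL⟩ := ih fun e => (hO e).trans <| by
      refine IsBigO.of_bound 1 ?_
      filter_upwards [Metric.ball_mem_nhds (0:ℝ) one_pos] with y hy
      have hy : ‖y‖ ≤ 1 := (by simpa using hy : ‖y‖ < 1).le
      rw [one_mul, norm_pow, norm_pow]
      exact pow_le_pow_of_le_one (norm_nonneg _) hy (Nat.le_succ n)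
    have hL0 : ∀ e, L (e, 0) = 0 := by
      intro e
      obtain ⟨C, hC⟩ := (hO e).bound
      have h1 : ∀ᶠ y in 𝓝[≠] (0:ℝ), ‖L (e, y)‖ ≤ C * ‖y‖ := by
        rw [eventually_nhdsWithin_iff]
        filter_upwards [hC] with y hy hne
        rw [hL, norm_mul, norm_pow, norm_pow, pow_succ] at hy
        have hpos : 0 < ‖y‖ ^ n := pow_pos (norm_pos_iff.2 hne) _
        have : ‖y‖ ^ n * ‖L (e, y)‖ ≤ ‖y‖ ^ n * (C * ‖y‖) := by linarith
        exact le_of_mul_le_mul_left this hpos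
      have hc : Continuous (fun y : ℝ => ‖L (e, y)‖) := by have := cL.continuous; fun_prop
      have hc2 : Continuous (fun y : ℝ => C * ‖y‖) := by fun_prop
      have := le_of_tendsto_of_tendsto ((hc.tendsto 0).mono_left nhdsWithin_le_nhds)
        ((hc2.tendsto 0).mono_left nhdsWithin_le_nhds) h1
      simpa using this
    obtain ⟨H, cH, hH, -⟩ := had L cL
    refine ⟨H, cH, fun e y => ?_⟩
    rw [hL, hH, hL0]; ring

end taylor

end part4

section part5
open Filter Topology
open scoped ContDiff

section normalform

theorem bigO_curve {F : Type} [NormedAddCommGroup F] {r : ℝ × ℝ → F} {N : ℕ}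
    (hr : r =O[𝓝 0] fun p => ‖p‖ ^ N) {c : ℝ → ℝ × ℝ} (hc : DifferentiableAt ℝ c 0) (c0 : c 0 = 0) :
    (fun t => r (c t)) =O[𝓝 0] fun t => t ^ N := by
  have ht : Tendsto c (𝓝 0) (𝓝 0) := by
    have := hc.continuousAt.tendsto
    rwa [c0] at this
  have h1 := hr.comp_tendsto ht
  have h2 : c =O[𝓝 0] fun t : ℝ => t := by
    have := hc.isBigO_sub
    simpa [c0] using this
  exact h1.trans (h2.norm_left.pow N)

theorem ift1 (Φ : ℝ × ℝ → ℝ) (hΦ : ContDiff ℝ ∞ Φ) (θ0 d : ℝ)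
    (h0 : Φ (0, θ0) = 0) (hd : HasDerivAt (fun s => Φ (0, s)) d θ0) (hd0 : d ≠ 0) :
    ∃ θ : ℝ → ℝ, ContDiff ℝ ∞ θ ∧ θ 0 = θ0 ∧ ∀ᶠ p in 𝓝 (0:ℝ), Φ (p, θ p) = 0 := by
  refine ift Φ hΦ 0 θ0 h0 ?_
  have := pdy_eq hΦ hd
  rw [pdy_def] at this
  rw [this]; exact hd0

theorem form_rem {f : ℝ × ℝ → ℝ × ℝ} {g : ℝ × ℝ → ℝ} (h : HasForm f g 5 P11) :
    ∃ r : ℝ × ℝ → ℝ, ContDiff ℝ ∞ r ∧ r =O[𝓝 0] (fun p => ‖p‖ ^ 4) ∧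
      ∀ x y, pdy g (x, y) = 2 * x * y + 4 * y ^ 3 + r (x, y) := by
  obtain ⟨hg, -, hc⟩ := h
  refine ⟨pdy (g - TP P11 5), pdy_contDiff (hg.sub (TP_contDiff _ _)), (taylor_rem hg P11 4 hc).2, ?_⟩
  intro x y
  rw [pdy_sub hg (TP_contDiff _ _), Pi.sub_apply, pdy_TP_apply]
  simp [Finset.sum_range_succ, P11]
  ring

theorem T1a {f : ℝ × ℝ → ℝ × ℝ} {g : ℝ × ℝ → ℝ} (h : HasForm f g 5 P11) :
    ∃ (η σ : ℝ → ℝ) (H : ℝ × ℝ → ℝ), ContDiff ℝ ∞ η ∧ ContDiff ℝ ∞ σ ∧ ContDiff ℝ ∞ H ∧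
      σ 0 = -2 ∧ H 0 = 2 ∧
      ∀ᶠ p in 𝓝 (0 : ℝ × ℝ), pdy g (p.1, p.2 + p.1 * η p.1) =
        p.2 * (p.1 - p.2 ^ 2 * σ p.2) * H p := by
  obtain ⟨r, hr, hO, hk⟩ := form_rem h
  have hgy : ContDiff ℝ ∞ (pdy g) := pdy_contDiff h.1
  obtain ⟨r1, hr1, hr1e⟩ := hadN 4 (fun p : ℝ × ℝ => r (p.2, p.2 * p.1)) (by fun_prop) (by
    intro e
    exact bigO_curve hO (c := fun y => (y, y * e)) (by fun_prop) (by simp))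
  simp only at hr1e
  have hM : ∀ x η, pdy g (x, x * η) = x ^ 2 * (2 * η + 4 * x * η ^ 3 + x ^ 2 * r1 (η, x)) := by
    intro x η
    rw [hk, hr1e]; ring
  obtain ⟨η, hη, η0, hηe⟩ := ift1 (fun p => 2 * p.2 + 4 * p.1 * p.2 ^ 3 + p.1 ^ 2 * r1 (p.2, p.1))
    (by fun_prop) 0 2 (by simp) (by
      simpa using (hasDerivAt_id (0:ℝ)).const_mul 2) (by norm_num)
  simp only at hηe
  obtain ⟨r2, hr2, hr2e⟩ := hadN 4 (fun p : ℝ × ℝ =>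
      r (p.2 ^ 2 * p.1, p.2 + p.2 ^ 2 * p.1 * η (p.2 ^ 2 * p.1))) (by fun_prop) (by
    intro e
    refine bigO_curve hO (c := fun y => (y ^ 2 * e, y + y ^ 2 * e * η (y ^ 2 * e))) ?_ (by simp)
    have : Differentiable ℝ η := hη.differentiable (by simp)
    fun_prop)
  simp only at hr2e
  obtain ⟨σ, hσ, σ0, hσe⟩ := ift1 (fun p => 2 * p.2 * (1 + p.1 * p.2 * η (p.1 ^ 2 * p.2)) +
      4 * (1 + p.1 * p.2 * η (p.1 ^ 2 * p.2)) ^ 3 + p.1 * r2 (p.2, p.1))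
    (by fun_prop) (-2) 2 (by simp; norm_num) (by
      simpa using ((hasDerivAt_id (-2:ℝ)).const_mul 2).add_const 4) (by norm_num)
  simp only at hσe
  obtain ⟨Q, hQ, hQe⟩ := divcurve (fun y => y ^ 2 * σ y) (by fun_prop)
    (fun p => pdy g (p.1, p.2 + p.1 * η p.1)) (by fun_prop)
  simp only at hQe
  have hcv : ∀ᶠ y in 𝓝 (0:ℝ), pdy g (y ^ 2 * σ y, y + y ^ 2 * σ y * η (y ^ 2 * σ y)) = 0 := by
    filter_upwards [hσe] with y hy
    rw [hk, hr2e]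
    linear_combination y ^ 3 * hy
  have hQ0 : ∀ᶠ x in 𝓝 (0:ℝ), Q (x, 0) = 0 := by
    have c1 : Continuous Q := hQ.continuous
    refine ev_of_punct (by fun_prop) continuous_const ?_
    filter_upwards [hηe] with x hx hx0
    have := hQe x 0
    have e1 := hM x (η x)
    rw [hx, mul_zero] at e1
    have e2 := hcv.self_of_nhds
    simp only [ne_eq, OfNat.ofNat_ne_zero, not_false_eq_true, zero_pow, zero_mul, zero_add, sub_zero] at this e2
    rw [e1, e2, zero_add] at this
    exact (mul_eq_zero.1 this.symm).resolve_left hx0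
  obtain ⟨H, hH, hHe, -⟩ := had Q hQ
  have main : ∀ᶠ p in 𝓝 (0 : ℝ × ℝ), pdy g (p.1, p.2 + p.1 * η p.1) =
        p.2 * (p.1 - p.2 ^ 2 * σ p.2) * H p := by
    have a1 := (continuous_fst.tendsto (0 : ℝ × ℝ)).eventually hQ0
    have a2 := (continuous_snd.tendsto (0 : ℝ × ℝ)).eventually hcv
    filter_upwards [a1, a2] with p h1 h2
    rw [hQe, h2, hHe p.1 p.2, h1]; ring
  refine ⟨η, σ, H, hη, hσ, hH, σ0, ?_, main⟩
  have hdiag : Tendsto (fun s : ℝ => (s, s)) (𝓝 0) (𝓝 (0 : ℝ × ℝ)) :=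
    (by fun_prop : Continuous (fun s : ℝ => (s, s))).tendsto' _ _ rfl
  have c1 := hH.continuous
  have c2 := hσ.continuous
  have c3 := hη.continuous
  have c4 := hr1.continuous
  have := ev_of_punct (a := fun s => 2 * (1 + η s) + 4 * s * (1 + η s) ^ 3 + s ^ 2 * r1 (1 + η s, s))
    (b := fun s => (1 - s * σ s) * H (s, s)) (by fun_prop) (by fun_prop) (by
      filter_upwards [hdiag.eventually main] with s hs hs0
      have e1 := hM s (1 + η s)
      rw [show s * (1 + η s) = s + s * η s by ring] at e1
      rw [hs] at e1
      have h2 : s ^ 2 ≠ 0 := pow_ne_zero 2 hs0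
      apply mul_left_cancel₀ h2
      rw [← e1]; ring)
  have := this.self_of_nhds
  simp [η0] at this
  exact this.symm

end normalform

end part5

section part6
open Filter Topology
open scoped ContDiff

section normalform2

theorem T1b {f : ℝ × ℝ → ℝ × ℝ} {g : ℝ × ℝ → ℝ} (h : HasForm f g 5 P11) :
    ∃ (η ν : ℝ → ℝ) (u : ℝ × ℝ → ℝ), ContDiff ℝ ∞ η ∧ ContDiff ℝ ∞ ν ∧ ContDiff ℝ ∞ u ∧
      ν 0 = 0 ∧ HasDerivAt ν 1 0 ∧ u 0 = 2 ∧
      ∀ᶠ p in 𝓝 (0 : ℝ × ℝ), pdy (fun p => g (p.1, ν p.2 + p.1 * η p.1) - g (p.1, p.1 * η p.1)) p =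
        p.2 * (p.1 + 2 * p.2 ^ 2) * u p := by
  obtain ⟨η, σ, H, hη, hσ, hH, σ0, H0, hm⟩ := T1a h
  have hg := h.1
  obtain ⟨β, hβ, β0, hβe⟩ := ift1 (fun p => p.2 ^ 2 + σ p.1 / 2)
    (by fun_prop) 1 2 (by simp [σ0]) (by
      simpa [σ0] using ((hasDerivAt_pow 2 (1:ℝ)).add_const (σ 0 / 2))) (by norm_num)
  simp only at hβe
  have hμ : ContDiff ℝ ∞ (fun y => y * β y) := by fun_prop
  have hμd : HasDerivAt (fun y => y * β y) 1 0 := by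
    have := (hasDerivAt_id (0:ℝ)).mul (hβ.differentiable (by simp) 0).hasDerivAt
    refine this.congr_deriv ?_
    simp [β0]
  obtain ⟨ν, hν, ν0, hμν, -, -⟩ := invf (fun y => y * β y) hμ 0 (by
    have : ∀ v, fderiv ℝ (fun y => y * β y) 0 v = v := by
      intro v
      rw [hμd.hasFDerivAt.fderiv]; simp
    constructor
    · intro a b hab; rwa [this, this] at hab
    · intro b; exact ⟨b, this b⟩)
  simp only [zero_mul] at ν0 hμν
  obtain ⟨N, hN, hNe, -⟩ := had (fun p : ℝ × ℝ => ν p.2) (by fun_prop)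
  simp only [ν0, zero_add] at hNe
  have hNν : ∀ t, ν t = t * N (0, t) := hNe 0
  have N0 : N (0, 0) = 1 := by
    have c1 := hN.continuous
    have c2 := hβ.continuous
    have c3 := hν.continuous
    have := ev_of_punct (a := fun t => N (0, t) * β (ν t)) (b := fun t => 1) (by fun_prop) (by fun_prop) (by
      filter_upwards [hμν] with t ht ht0
      apply mul_left_cancel₀ ht0
      rw [← mul_assoc, ← hNν, ht, mul_one])
    have := this.self_of_nhds
    simpa [ν0, β0] using this
  have hνd : HasDerivAt ν 1 0 := by
    have h1 : ContDiff ℝ ∞ (fun t => N (0, t)) := by fun_prop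
    have := (hasDerivAt_id (0:ℝ)).mul (h1.differentiable (by simp) 0).hasDerivAt
    have e : ν = id * fun t => N (0, t) := by funext t; exact hNν t
    rw [e]
    refine this.congr_deriv ?_
    simp [N0]
  have hdν : ContDiff ℝ ∞ (deriv ν) := (contDiff_infty_iff_deriv.1 hν).2
  refine ⟨η, ν, fun p => N (0, p.2) * deriv ν p.2 * H (p.1, ν p.2), hη, hν, by fun_prop, ν0, hνd, ?_, ?_⟩
  · simp only [Prod.fst_zero, Prod.snd_zero, N0, hνd.deriv, ν0, one_mul]
    exact H0
  · have ht : Tendsto (fun p : ℝ × ℝ => (p.1, ν p.2)) (𝓝 0) (𝓝 0) := by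
      have := hν.continuous
      exact (by fun_prop : Continuous (fun p : ℝ × ℝ => (p.1, ν p.2))).tendsto' _ _ (by simp [ν0])
    have ht2 : Tendsto (fun p : ℝ × ℝ => ν p.2) (𝓝 0) (𝓝 0) := by
      have := hν.continuous
      exact (by fun_prop : Continuous (fun p : ℝ × ℝ => ν p.2)).tendsto' _ _ (by simp [ν0])
    filter_upwards [ht.eventually hm, ht2.eventually hβe,
      (continuous_snd.tendsto (0 : ℝ × ℝ)).eventually hμν] with p h1 h2 h3
    obtain ⟨x, t⟩ := p
    have hd : HasDerivAt (fun s => g (x, ν s + x * η x) - g (x, x * η x))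
        (pdy g (x, ν t + x * η x) * deriv ν t) t := by
      have a1 : HasDerivAt (fun s => ν s + x * η x) (deriv ν t) t :=
        ((hν.differentiable (by simp) t).hasDerivAt).add_const _
      exact ((hasDerivAt_pdy hg x (ν t + x * η x)).comp t a1).sub_const _
    rw [pdy_eq (by fun_prop) hd]
    simp only at h1 h2 h3 ⊢
    rw [h1]
    have e3 : ν t ^ 2 * σ (ν t) = -2 * t ^ 2 := by
      linear_combination 2 * ν t ^ 2 * h2 - 2 * (ν t * β (ν t) + t) * h3
    rw [e3, hNν t]
    ring

theorem prim0 (n V : ℝ × ℝ → ℝ) (hn : ContDiff ℝ ∞ n) (hV : ContDiff ℝ ∞ V)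
    (h0 : ∀ᶠ x in 𝓝 (0:ℝ), n (x, 0) = 0)
    (h1 : ∀ᶠ p in 𝓝 (0 : ℝ × ℝ), pdy n p = p.2 * (p.1 + 2 * p.2 ^ 2) * V p) :
    ∀ᶠ p in 𝓝 (0 : ℝ × ℝ), n p = p.2 ^ 2 *
      ∫ s in (0:ℝ)..1, s * (p.1 + 2 * (s * p.2) ^ 2) * V (p.1, s * p.2) := by
    obtain ⟨r, hr, hb⟩ := Metric.eventually_nhds_iff_ball.1 h1
    have h0' : ∀ᶠ p in 𝓝 (0 : ℝ × ℝ), n (p.1, 0) = 0 :=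
      (continuous_fst.tendsto (0 : ℝ × ℝ)).eventually h0
    filter_upwards [Metric.ball_mem_nhds (0 : ℝ × ℝ) hr, h0'] with p hp hp0
    obtain ⟨x, y⟩ := p
    have hder : ∀ s ∈ Set.uIcc (0:ℝ) 1, HasDerivAt (fun s : ℝ => n (x, s * y))
        (y ^ 2 * (s * (x + 2 * (s * y) ^ 2) * V (x, s * y))) s := by
      intro s hs
      rw [Set.uIcc_of_le zero_le_one] at hs
      have h3 : HasDerivAt (fun s : ℝ => s * y) y s := by
        simpa using (hasDerivAt_id s).mul_const y
      have h4 := (hasDerivAt_pdy hn x (s * y)).comp s h3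
      rw [hb (x, s * y) ?_] at h4
      · refine h4.congr_deriv ?_
        simp only [smul_eq_mul]; ring
      · simp only [Metric.mem_ball, dist_zero_right, Prod.norm_def, sup_lt_iff, Real.norm_eq_abs] at hp ⊢
        refine ⟨hp.1, lt_of_le_of_lt ?_ hp.2⟩
        rw [abs_mul, abs_of_nonneg hs.1]
        exact mul_le_of_le_one_left (abs_nonneg _) hs.2
    have hc : Continuous (fun s : ℝ => y ^ 2 * (s * (x + 2 * (s * y) ^ 2) * V (x, s * y))) := by
      have := hV.continuous
      fun_prop
    have := intervalIntegral.integral_eq_sub_of_hasDerivAt hder (hc.intervalIntegrable _ _)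
    rw [intervalIntegral.integral_const_mul] at this
    simp only [one_mul, zero_mul] at this hp0
    simp only
    rw [this, hp0, sub_zero]

theorem T1 {f : ℝ × ℝ → ℝ × ℝ} {g : ℝ × ℝ → ℝ} (h : HasForm f g 5 P11) :
    ∃ (n : ℝ × ℝ → ℝ) (w : ℝ → ℝ), NF n w ∧ AEquiv f (fun p => (p.1, n p)) := by
  obtain ⟨η, ν, u, hη, hν, hu, ν0, hνd, u0, hm⟩ := T1b h
  obtain ⟨hg, hfg, hc⟩ := h
  have g0 : g (0, 0) = 0 := by
    have := hc 0 0 (by norm_num)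
    simp [tcoeff, P11] at this
    exact this
  set gh : ℝ × ℝ → ℝ := fun p => g (p.1, ν p.2 + p.1 * η p.1) - g (p.1, p.1 * η p.1) with hgh
  have cgh : ContDiff ℝ ∞ gh := by rw [hgh]; fun_prop
  have gh0 : ∀ x, gh (x, 0) = 0 := by intro x; simp [hgh, ν0]
  let K : ℝ → ℝ := fun t => ∫ s in (0:ℝ)..1, s * (-2 + 2 * s ^ 2) * u (-2 * t ^ 2, s * t)
  have cK : ContDiff ℝ ∞ K :=
    pi_contDiff (fun q : ℝ × ℝ => q.2 * (-2 + 2 * q.2 ^ 2) * u (-2 * q.1 ^ 2, q.2 * q.1)) (by fun_prop)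
  have hcurve : Tendsto (fun t : ℝ => (-2 * t ^ 2, t)) (𝓝 0) (𝓝 (0 : ℝ × ℝ)) :=
    (by fun_prop : Continuous (fun t : ℝ => (-2 * t ^ 2, t))).tendsto' _ _ (by simp)
  have hK : ∀ᶠ t in 𝓝 (0:ℝ), gh (-2 * t ^ 2, t) = t ^ 4 * K t := by
    filter_upwards [hcurve.eventually (prim0 gh u cgh hu (Eventually.of_forall gh0) hm)] with t ht
    rw [ht]
    simp only [K]
    rw [← intervalIntegral.integral_const_mul, ← intervalIntegral.integral_const_mul]
    congr 1
    funext s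
    ring
  have K0 : K 0 = -1 := by
    have : ∀ s : ℝ, s * (-2 + 2 * s ^ 2) * u (-2 * 0 ^ 2, s * 0) = -4 * s + 4 * s ^ 3 := by
      intro s
      have e : u (-2 * 0 ^ 2, s * 0) = 2 := by
        simp only [ne_eq, OfNat.ofNat_ne_zero, not_false_eq_true, zero_pow, mul_zero]
        exact u0
      rw [e]; ring
    simp only [K, this]
    rw [intervalIntegral.integral_add (Continuous.intervalIntegrable (by fun_prop) _ _)
      (Continuous.intervalIntegrable (by fun_prop) _ _)]
    rw [intervalIntegral.integral_const_mul, intervalIntegral.integral_const_mul]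
    simp
    norm_num
  obtain ⟨ε, w0, hε, hw0, hKe⟩ := whitney K cK
  have ε0 : ε 0 = -1 := by
    have := hKe.self_of_nhds
    simpa [K0] using this.symm
  obtain ⟨ρ, hρ, ρ0, hρe⟩ := ift1 (fun p => p.2 * ε (-p.1 / 2) + 1)
    (by fun_prop) 1 (-1) (by simp [ε0]) (by
      simpa [ε0] using ((hasDerivAt_id (1:ℝ)).mul_const (ε 0)).add_const 1) (by norm_num)
  simp only at hρe
  refine ⟨fun p => ρ p.1 * gh p, fun s => -ρ (-2 * s) * w0 s, ⟨by fun_prop, by fun_prop, ?_, ?_, ?_⟩, ?_⟩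
  · exact Eventually.of_forall fun x => by simp [gh0]
  · refine ⟨fun p => ρ p.1 * u p, by fun_prop, by simp [ρ0, u0], ?_⟩
    filter_upwards [hm] with p hp
    obtain ⟨x, y⟩ := p
    rw [pdy_eq (by fun_prop) ((hasDerivAt_pdy cgh x y).const_mul (ρ x)), hp]
    ring
  · have ht : Tendsto (fun t : ℝ => -2 * t ^ 2) (𝓝 0) (𝓝 0) :=
      (by fun_prop : Continuous (fun t : ℝ => -2 * t ^ 2)).tendsto' _ _ (by simp)
    filter_upwards [hK, hKe, ht.eventually hρe] with t h1 h2 h3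
    rw [show -(-2 * t ^ 2) / 2 = t ^ 2 by ring] at h3
    rw [h1, h2]
    linear_combination t ^ 4 * h3
  · refine ⟨fun p => (p.1, ν p.2 + p.1 * η p.1), fun p => (p.1, ρ p.1 * (p.2 - g (p.1, p.1 * η p.1))),
      by fun_prop, by fun_prop, by simp [ν0], by simp [g0], ?_, ?_, ?_⟩
    · refine bij_pair (A := fun p => p.1) (B := fun p => ν p.2 + p.1 * η p.1) (by fun_prop) (by fun_prop)
        (a := 1) (b := 0) (d := 1) (hasDerivAt_id 0)
        (hasDerivAt_const 0 0) (DifferentiableAt.hasDerivAt ?_) ?_ (by simp) (by norm_num) (by norm_num)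
      · have : Differentiable ℝ η := hη.differentiable (by simp)
        have : Differentiable ℝ ν := hν.differentiable (by simp)
        fun_prop
      · simpa using hνd
    · refine bij_pair (A := fun p => p.1) (B := fun p => ρ p.1 * (p.2 - g (p.1, p.1 * η p.1))) (by fun_prop) (by fun_prop)
        (a := 1) (b := 0) (d := 1) (hasDerivAt_id 0)
        (hasDerivAt_const 0 0) (DifferentiableAt.hasDerivAt ?_) ?_ (by simp) (by norm_num) (by norm_num)
      · have h1 : ContDiff ℝ ∞ (fun s => ρ (s, (0:ℝ)).1 * ((s, (0:ℝ)).2 - g ((s, (0:ℝ)).1, (s, (0:ℝ)).1 * η (s, (0:ℝ)).1))) := by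
          simp only; fun_prop
        exact h1.differentiable (by simp) 0
      · simpa [ρ0, g0] using hasDerivAt_id' (0:ℝ)
    · refine Eventually.of_forall fun p => ?_
      simp only [hfg, hgh]

end normalform2

end part6

section part7
open Filter Topology
open scoped ContDiff

section rescale

theorem odd_root (c : ℝ) (j : ℕ) : ∃ b : ℝ, b ^ (2 * j + 1) = c := by
  have hne : 2 * j + 1 ≠ 0 := by omega
  rcases le_total 0 c with h | h
  · exact ⟨_, Real.rpow_inv_natCast_pow h hne⟩
  · refine ⟨-((-c) ^ (((2 * j + 1 : ℕ) : ℝ)⁻¹)), ?_⟩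
    rw [Odd.neg_pow ⟨j, rfl⟩, Real.rpow_inv_natCast_pow (by linarith) hne, neg_neg]

theorem inv1 (μ : ℝ → ℝ) (hμ : ContDiff ℝ ∞ μ) (μ0 : μ 0 = 0) {d : ℝ} (hd : HasDerivAt μ d 0) (d0 : d ≠ 0) :
    ∃ ν : ℝ → ℝ, ContDiff ℝ ∞ ν ∧ ν 0 = 0 ∧ ∀ᶠ t in 𝓝 (0:ℝ), μ (ν t) = t := by
  obtain ⟨ν, hν, ν0, hμν, -, -⟩ := invf μ hμ 0 (by
    have : ∀ v, fderiv ℝ μ 0 v = v * d := by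
      intro v
      rw [hd.hasFDerivAt.fderiv]; simp
    constructor
    · intro a b hab
      rw [this, this] at hab
      exact mul_right_cancel₀ d0 hab
    · intro b; exact ⟨b / d, by rw [this]; field_simp⟩)
  rw [μ0] at ν0 hμν
  exact ⟨ν, hν, ν0, hμν⟩

theorem T2 {n : ℝ × ℝ → ℝ} {w U : ℝ → ℝ} (j : ℕ) (h : NF n w) (hU : ContDiff ℝ ∞ U)
    (hw : ∀ᶠ s in 𝓝 (0:ℝ), w s = s ^ j * U s) (U0 : U 0 ≠ 0) :
    ∃ n' : ℝ × ℝ → ℝ, NF n' (fun s => s ^ j) ∧ AEquiv (fun p => (p.1, n p)) (fun p => (p.1, n' p)) := by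
  obtain ⟨cn, cw, ax, ⟨u, hu, u0, hue⟩, cu⟩ := h
  obtain ⟨b, hb⟩ := odd_root (U 0) j
  have b0 : b ≠ 0 := by
    rintro rfl
    rw [zero_pow (by omega)] at hb
    exact U0 hb.symm
  obtain ⟨β, hβ, β0, hβe⟩ := ift1 (fun p => p.2 ^ (2 * j + 1) - U p.1) (by fun_prop) b
    ((2 * j + 1 : ℕ) * b ^ (2 * j)) (by simp [hb]) (by
      simpa using (hasDerivAt_pow (2 * j + 1) b).sub_const (U 0)) (by positivity)
  simp only at hβe
  have cβ : ContDiff ℝ ∞ (fun p : ℝ × ℝ => β (-p.1 / 2)) := by fun_prop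
  have hβ1 : ContDiff ℝ ∞ (fun s : ℝ => β (-s / 2)) := by fun_prop
  have β0' : β (-0 / 2) = b := by simpa using β0
  let S : ℝ × ℝ → ℝ × ℝ := fun p => (β (-p.1 / 2) ^ 2 * p.1, β (-p.1 / 2) * p.2)
  have cS : ContDiff ℝ ∞ S := by simp only [S]; fun_prop
  have S0 : S 0 = 0 := by simp [S]
  have hder : ∀ k : ℕ, HasDerivAt (fun s : ℝ => β (-s / 2) ^ k * s) (b ^ k) 0 := by
    intro k
    have := (((hβ1.pow k).differentiable (by simp) 0).hasDerivAt).mul (hasDerivAt_id (0:ℝ))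
    refine this.congr_deriv ?_
    simp [β0]
  obtain ⟨S', cS', S'0, hSS', hS'S, bS'⟩ := invf S cS 0 (by
    refine bij_pair (A := fun p => β (-p.1 / 2) ^ 2 * p.1) (B := fun p => β (-p.1 / 2) * p.2)
      (by fun_prop) (by fun_prop) (a := b ^ 2) (b := 0) (c := 0) (d := b) (hder 2) ?_ ?_ ?_ (by simp)
      (pow_ne_zero 2 b0) b0
    · simpa using hasDerivAt_const (0:ℝ) (0:ℝ)
    · simpa using hasDerivAt_const (0:ℝ) (0:ℝ)
    · simpa [β0] using (hasDerivAt_id' (0:ℝ)).const_mul b)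
  rw [S0] at S'0 hSS' bS'
  have tS' : Tendsto S' (𝓝 0) (𝓝 0) := cS'.continuous.tendsto' _ _ S'0
  have tS : Tendsto S (𝓝 0) (𝓝 0) := cS.continuous.tendsto' _ _ S0
  have hβne : ∀ᶠ p in 𝓝 (0 : ℝ × ℝ), β (-p.1 / 2) ≠ 0 := by
    refine cβ.continuous.continuousAt.eventually_ne ?_
    simpa [β0] using b0
  let n' : ℝ × ℝ → ℝ := fun p => β (-(S' p).1 / 2) ^ 4 * n (S' p)
  have cn' : ContDiff ℝ ∞ n' := by simp only [n']; fun_prop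
  have hn'S : ∀ᶠ p in 𝓝 (0 : ℝ × ℝ), n' (S p) = β (-p.1 / 2) ^ 4 * n p := by
    filter_upwards [hS'S] with p hp
    simp only [n']; rw [hp]
  have hpd : ∀ᶠ p in 𝓝 (0 : ℝ × ℝ), pdy n' (S p) = (S p).2 * ((S p).1 + 2 * (S p).2 ^ 2) * u p := by
    filter_upwards [pdy_congr hn'S, hβne, hue] with p h1 h2 h3
    obtain ⟨x, y⟩ := p
    have e1 : HasDerivAt (fun s => n' (S (x, s))) (pdy n' (S (x, y)) * β (-x / 2)) y := by
      have a1 : HasDerivAt (fun s => β (-x / 2) * s) (β (-x / 2)) y := by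
        simpa using (hasDerivAt_id' y).const_mul (β (-x / 2))
      exact (hasDerivAt_pdy cn' (β (-x / 2) ^ 2 * x) (β (-x / 2) * y)).comp y a1
    rw [pdy_eq (g := fun p => n' (S p)) (by fun_prop) e1,
      pdy_eq (g := fun p => β (-p.1 / 2) ^ 4 * n p) (by fun_prop) ((hasDerivAt_pdy cn x y).const_mul (β (-x / 2) ^ 4)), h3] at h1
    apply mul_right_cancel₀ h2
    rw [h1]
    simp only [S]; ring
  refine ⟨n', ⟨cn', by fun_prop, ?_, ?_, ?_⟩, ?_⟩
  · have ta : Tendsto (fun x : ℝ => ((x, 0) : ℝ × ℝ)) (𝓝 0) (𝓝 0) :=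
      (by fun_prop : Continuous (fun x : ℝ => ((x, 0) : ℝ × ℝ))).tendsto' _ _ rfl
    filter_upwards [ta.eventually hSS', (tS'.comp ta).eventually hβne,
      ((continuous_fst.tendsto' (0 : ℝ × ℝ) (0:ℝ) rfl).comp (tS'.comp ta)).eventually ax] with x h1 h2 h3
    simp only [Function.comp] at h2 h3
    have e := congrArg Prod.snd h1
    simp only [S] at e
    have e2 : (S' (x, 0)).2 = 0 := (mul_eq_zero.1 e).resolve_left h2
    simp only [n']
    have h3' : n (S' (x, 0)) = 0 := by
      rw [show S' (x, 0) = ((S' (x, 0)).1, 0) from Prod.ext rfl e2]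
      exact h3
    rw [h3', mul_zero]
  · refine ⟨fun q => u (S' q), by fun_prop, by simp [S'0, u0], ?_⟩
    filter_upwards [hSS', tS'.eventually hpd] with q h1 h2
    rw [h1] at h2
    exact h2
  · obtain ⟨ν, hν, ν0, hνe⟩ := inv1 (fun t => t * β (t ^ 2)) (by fun_prop) (by simp) (d := b) (by
      have a1 : ContDiff ℝ ∞ (fun t : ℝ => β (t ^ 2)) := by fun_prop
      have := (hasDerivAt_id (0:ℝ)).mul (a1.differentiable (by simp) 0).hasDerivAt
      refine this.congr_deriv ?_
      simp [β0]) b0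
    have key : ∀ᶠ t in 𝓝 (0:ℝ), n' (-2 * (t * β (t ^ 2)) ^ 2, t * β (t ^ 2)) =
        -(t * β (t ^ 2)) ^ 4 * (1 + t * β (t ^ 2) * ((t * β (t ^ 2)) ^ 2) ^ j) := by
      have hcurve : Tendsto (fun t : ℝ => (-2 * t ^ 2, t)) (𝓝 0) (𝓝 (0 : ℝ × ℝ)) :=
        (by fun_prop : Continuous (fun t : ℝ => (-2 * t ^ 2, t))).tendsto' _ _ (by simp)
      have hsq : Tendsto (fun t : ℝ => t ^ 2) (𝓝 0) (𝓝 0) :=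
        (by fun_prop : Continuous (fun t : ℝ => t ^ 2)).tendsto' _ _ (by simp)
      filter_upwards [hcurve.eventually hn'S, cu, hsq.eventually hw, hsq.eventually hβe] with t h1 h2 h3 h4
      simp only [S] at h1
      rw [show -(-2 * t ^ 2) / 2 = t ^ 2 by ring, h2, h3] at h1
      rw [show -2 * (t * β (t ^ 2)) ^ 2 = β (t ^ 2) ^ 2 * (-2 * t ^ 2) by ring, mul_comm t (β (t ^ 2)), h1]
      have h5 : U (t ^ 2) = β (t ^ 2) ^ (2 * j) * β (t ^ 2) := by
        rw [← pow_succ]; linarith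
      rw [h5, mul_pow _ _ 2, mul_pow _ _ j, ← pow_mul, ← pow_mul]; ring
    filter_upwards [(hν.continuous.tendsto' 0 0 ν0).eventually key, hνe] with t h1 h2
    rw [h2] at h1
    exact h1
  · refine ⟨S', fun p => (β (-p.1 / 2) ^ 2 * p.1, β (-p.1 / 2) ^ 4 * p.2), cS', by fun_prop, S'0,
      by simp, bS', ?_, ?_⟩
    · refine bij_pair (A := fun p => β (-p.1 / 2) ^ 2 * p.1) (B := fun p => β (-p.1 / 2) ^ 4 * p.2)
        (by fun_prop) (by fun_prop) (a := b ^ 2) (b := 0) (c := 0) (d := b ^ 4) (hder 2) ?_ ?_ ?_ (by simp)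
        (pow_ne_zero 2 b0) (pow_ne_zero 4 b0)
      · simpa using hasDerivAt_const (0:ℝ) (0:ℝ)
      · simpa using hasDerivAt_const (0:ℝ) (0:ℝ)
      · simpa [β0] using (hasDerivAt_id' (0:ℝ)).const_mul (b ^ 4)
    · filter_upwards [hSS'] with p h1
      have e := congrArg Prod.fst h1
      simp only [S] at e
      simp only [n']
      rw [e]

end rescale

end part7

section part8
open Filter Topology Asymptotics
open scoped ContDiff

section invariant

theorem ev_ne : ∀ᶠ t in 𝓝[≠] (0:ℝ), t ≠ 0 := eventually_mem_nhdsWithin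

theorem lo_iff {h : ℝ → ℝ} {k : ℕ} :
    h =o[𝓝[≠] 0] (fun t => t ^ k) ↔ Tendsto (fun t => h t / t ^ k) (𝓝[≠] 0) (𝓝 0) := by
  apply isLittleO_iff_tendsto'
  filter_upwards [ev_ne] with t ht h0
  exact absurd h0 (pow_ne_zero _ ht)

/-- division of the shifted function by the fold -/
theorem NF.div {n : ℝ × ℝ → ℝ} {w : ℝ → ℝ} (h : NF n w) :
    ∃ (u M1 : ℝ × ℝ → ℝ), ContDiff ℝ ∞ u ∧ ContDiff ℝ ∞ M1 ∧ pdy M1 0 = 0 ∧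
      (∀ᶠ p in 𝓝 (0 : ℝ × ℝ), n p + p.1 ^ 2 / 4 + p.2 * (p.1 ^ 2 / 4) * w (-p.1 / 2) =
        (p.1 + 2 * p.2 ^ 2) * M1 p) ∧
      (∀ᶠ p in 𝓝 (0 : ℝ × ℝ), 4 * p.2 * M1 p = (p.1 + 2 * p.2 ^ 2) * (p.2 * u p - pdy M1 p) +
        (p.1 ^ 2 / 4) * w (-p.1 / 2)) := by
  obtain ⟨cn, cw, ax, ⟨u, hu, u0, hue⟩, cu⟩ := h
  obtain ⟨M1, hM1, hM⟩ := divcurve (fun y => -2 * y ^ 2) (by fun_prop)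
    (fun p => n p + p.1 ^ 2 / 4 + p.2 * (p.1 ^ 2 / 4) * w (-p.1 / 2)) (by fun_prop)
  simp only at hM
  have h1 : ∀ᶠ p in 𝓝 (0 : ℝ × ℝ), n p + p.1 ^ 2 / 4 + p.2 * (p.1 ^ 2 / 4) * w (-p.1 / 2) =
        (p.1 + 2 * p.2 ^ 2) * M1 p := by
    filter_upwards [(continuous_snd.tendsto' (0 : ℝ × ℝ) (0:ℝ) rfl).eventually cu] with p hp
    obtain ⟨x, y⟩ := p
    simp only at hp ⊢
    rw [hM x y, hp, show -(-2 * y ^ 2) / 2 = y ^ 2 by ring]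
    ring
  have h2 : ∀ᶠ p in 𝓝 (0 : ℝ × ℝ), 4 * p.2 * M1 p = (p.1 + 2 * p.2 ^ 2) * (p.2 * u p - pdy M1 p) +
        (p.1 ^ 2 / 4) * w (-p.1 / 2) := by
    filter_upwards [pdy_congr h1, hue] with p h3 h4
    obtain ⟨x, y⟩ := p
    have e1 : HasDerivAt (fun s => n (x, s) + x ^ 2 / 4 + s * (x ^ 2 / 4) * w (-x / 2))
        (pdy n (x, y) + 1 * (x ^ 2 / 4) * w (-x / 2)) y :=
      ((hasDerivAt_pdy cn x y).add_const _).add (((hasDerivAt_id' y).mul_const _).mul_const _)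
    have e2 : HasDerivAt (fun s => (x + 2 * s ^ 2) * M1 (x, s))
        ((4 * y) * M1 (x, y) + (x + 2 * y ^ 2) * pdy M1 (x, y)) y := by
      have a1 : HasDerivAt (fun s : ℝ => x + 2 * s ^ 2) (4 * y) y := by
        refine (((hasDerivAt_pow 2 y).const_mul 2).const_add x).congr_deriv ?_
        simp; ring
      exact a1.mul (hasDerivAt_pdy hM1 x y)
    rw [pdy_eq (by fun_prop) e1, pdy_eq (g := fun p => (p.1 + 2 * p.2 ^ 2) * M1 p) (by fun_prop) e2, h4] at h3
    simp only at h3 ⊢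
    linear_combination -h3
  refine ⟨u, M1, hu, hM1, ?_, h1, h2⟩
  have hpM := pdy_contDiff hM1
  have c1 := hM1.continuous
  have c2 := hpM.continuous
  have c3 := hu.continuous
  have ty : Tendsto (fun y : ℝ => ((0, y) : ℝ × ℝ)) (𝓝 0) (𝓝 0) :=
    (by fun_prop : Continuous (fun y : ℝ => ((0, y) : ℝ × ℝ))).tendsto' _ _ rfl
  have a1 := ev_of_punct (a := fun y => 4 * M1 (0, y)) (b := fun y => 2 * y * (y * u (0, y) - pdy M1 (0, y)))
    (by fun_prop) (by fun_prop) (by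
      filter_upwards [ty.eventually h2] with y hy hy0
      apply mul_left_cancel₀ hy0
      linear_combination hy)
  have M0 : M1 (0, 0) = 0 := by
    have := a1.self_of_nhds
    simp only [mul_zero, zero_mul] at this
    linarith
  obtain ⟨N, hN, hNe, hN0⟩ := had M1 hM1
  have c4 := hN.continuous
  have a2 := ev_of_punct (a := fun y => 4 * N (0, y)) (b := fun y => 2 * (y * u (0, y) - pdy M1 (0, y)))
    (by fun_prop) (by fun_prop) (by
      filter_upwards [a1] with y hy hy0
      have := hNe 0 y
      rw [M0, zero_add] at this
      rw [this] at hy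
      apply mul_left_cancel₀ hy0
      linear_combination hy)
  have a3 := a2.self_of_nhds
  have a4 := hN0 0
  rw [← pdy_def] at a4
  simp only [zero_mul, zero_sub] at a3
  rw [a4] at a3
  rw [← Prod.mk_zero_zero]
  linarith

theorem INV_A {n : ℝ × ℝ → ℝ} {w U : ℝ → ℝ} {A B : ℝ → ℝ} {b : ℝ} (j : ℕ) (h : NF n w)
    (hU : ContDiff ℝ ∞ U)
    (hw : ∀ᶠ s in 𝓝 (0:ℝ), w s = s ^ j * U s) (b0 : b ≠ 0)
    (hB : Tendsto (fun t => B t / t) (𝓝[≠] 0) (𝓝 b))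
    (hδ : (fun t => A t + 2 * B t ^ 2) =O[𝓝[≠] 0] (fun t => t ^ (j + 3))) :
    (fun t => n (A t, B t) + A t ^ 2 / 4 + b ^ (2 * j + 5) * U 0 * t ^ (2 * j + 5))
      =o[𝓝[≠] 0] (fun t => t ^ (2 * j + 5)) := by
  obtain ⟨u, M1, hu, hM1, hM10, h1, h2⟩ := h.div
  have t0 : Tendsto (fun t : ℝ => t) (𝓝[≠] 0) (𝓝 0) := tendsto_nhdsWithin_of_tendsto_nhds tendsto_id
  have hB0 : Tendsto B (𝓝[≠] 0) (𝓝 0) := by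
    have := hB.mul t0
    rw [mul_zero] at this
    refine this.congr' ?_
    filter_upwards [ev_ne] with t ht
    field_simp
  have hpow : (fun t : ℝ => t ^ (j + 3)) =o[𝓝[≠] 0] (fun t => t ^ 2) :=
    (isLittleO_pow_pow (by omega)).mono nhdsWithin_le_nhds
  have hA : Tendsto (fun t => A t / t ^ 2) (𝓝[≠] 0) (𝓝 (-2 * b ^ 2)) := by
    have a1 := lo_iff.1 (hδ.trans_isLittleO hpow)
    have a2 := a1.sub ((hB.pow 2).const_mul 2)
    rw [show 0 - 2 * b ^ 2 = -2 * b ^ 2 by ring] at a2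
    refine a2.congr' ?_
    filter_upwards [ev_ne] with t ht
    field_simp
    ring
  have hA0 : Tendsto A (𝓝[≠] 0) (𝓝 0) := by
    have := hA.mul (t0.pow 2)
    simp only [ne_eq, OfNat.ofNat_ne_zero, not_false_eq_true, zero_pow, mul_zero] at this
    refine this.congr' ?_
    filter_upwards [ev_ne] with t ht
    field_simp
  have hAB : Tendsto (fun t => (A t, B t)) (𝓝[≠] 0) (𝓝 (0 : ℝ × ℝ)) := hA0.prodMk_nhds hB0
  have hA2 : Tendsto (fun t => -A t / 2) (𝓝[≠] 0) (𝓝 0) := by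
    have := (hA0.neg).div_const 2
    simpa using this
  have hUA : Tendsto (fun t => U (-A t / 2)) (𝓝[≠] 0) (𝓝 (U 0)) :=
    (hU.continuous.tendsto 0).comp hA2
  have hwA := hA2.eventually hw
  -- the term with w
  have Y : Tendsto (fun t => (A t ^ 2 / 4 * w (-A t / 2)) / t ^ (2 * j + 4)) (𝓝[≠] 0)
      (𝓝 (b ^ (2 * j + 4) * U 0)) := by
    have a1 := (((hA.pow 2).div_const 4).mul ((hA.neg.div_const 2).pow j)).mul hUA
    rw [show (-2 * b ^ 2) ^ 2 / 4 * (-(-2 * b ^ 2) / 2) ^ j * U 0 = b ^ (2 * j + 4) * U 0 by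
      rw [show -(-2 * b ^ 2) / 2 = b ^ 2 by ring, ← pow_mul]; ring] at a1
    refine a1.congr' ?_
    filter_upwards [ev_ne, hwA] with t ht hwt
    have e : (-(A t / t ^ 2) / 2) ^ j = (-A t / 2) ^ j / t ^ (2 * j) := by
      rw [show -(A t / t ^ 2) / 2 = (-A t / 2) / t ^ 2 by ring, div_pow _ (t ^ 2), ← pow_mul]
    rw [hwt, e]
    generalize (-A t / 2) ^ j = q
    generalize U (-A t / 2) = r
    rw [pow_add]
    field_simp
  have X : (fun t => B t * (A t ^ 2 / 4) * w (-A t / 2) - b ^ (2 * j + 5) * U 0 * t ^ (2 * j + 5))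
      =o[𝓝[≠] 0] (fun t => t ^ (2 * j + 5)) := by
    rw [lo_iff]
    have a1 := (hB.mul Y).sub_const (b ^ (2 * j + 5) * U 0)
    rw [show b * (b ^ (2 * j + 4) * U 0) - b ^ (2 * j + 5) * U 0 = 0 by ring] at a1
    refine a1.congr' ?_
    filter_upwards [ev_ne] with t ht
    rw [show t ^ (2 * j + 5) = t ^ (2 * j + 4) * t by ring]
    field_simp
  have Z : (fun t => A t ^ 2 / 4 * w (-A t / 2)) =o[𝓝[≠] 0] (fun t => t ^ (j + 3)) := by
    rw [lo_iff]
    have a1 := Y.mul (t0.pow (j + 1))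
    rw [zero_pow (by omega), mul_zero] at a1
    refine a1.congr' ?_
    filter_upwards [ev_ne] with t ht
    rw [show t ^ (2 * j + 4) = t ^ (j + 3) * t ^ (j + 1) by ring]
    field_simp
  have W : (fun t => B t * u (A t, B t) - pdy M1 (A t, B t)) =o[𝓝[≠] 0] (fun _ => (1:ℝ)) := by
    rw [isLittleO_one_iff]
    have a1 := (hu.continuous.tendsto 0).comp hAB
    have a2 := ((pdy_contDiff hM1).continuous.tendsto 0).comp hAB
    have := (hB0.mul a1).sub a2
    simpa [hM10] using this
  have V : (fun t => B t * M1 (A t, B t)) =o[𝓝[≠] 0] (fun t => t ^ (j + 3)) := by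
    have a1 := (hδ.mul_isLittleO W)
    simp only [mul_one] at a1
    refine ((a1.add Z).const_mul_left (1/4)).congr' ?_ EventuallyEq.rfl
    filter_upwards [hAB.eventually h2] with t ht
    linear_combination (-1/4) * ht
  have V1 : (fun t => M1 (A t, B t)) =o[𝓝[≠] 0] (fun t => t ^ (j + 2)) := by
    rw [lo_iff] at V ⊢
    have a1 := V.div hB b0
    rw [zero_div] at a1
    refine a1.congr' ?_
    have hBne : ∀ᶠ t in 𝓝[≠] (0:ℝ), B t / t ≠ 0 := hB.eventually_ne b0
    filter_upwards [ev_ne, hBne] with t ht hb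
    have : B t ≠ 0 := fun h => hb (by rw [h, zero_div])
    simp only [Pi.div_apply]
    rw [show t ^ (j + 3) = t ^ (j + 2) * t by ring]
    field_simp
  · have e : (fun t : ℝ => t ^ (j + 3) * t ^ (j + 2)) = fun t => t ^ (2 * j + 5) := by
      funext t; ring
    have m := hδ.mul_isLittleO V1
    rw [e] at m
    refine (m.sub X).congr' ?_ EventuallyEq.rfl
    filter_upwards [hAB.eventually h1] with t ht
    linear_combination -ht

end invariant

end part8

section part9
open Filter Topology Asymptotics
open scoped ContDiff

section invariant2

theorem bigO_cancel {h θ k : ℝ → ℝ} {l : Filter ℝ} {c : ℝ} (hθ : Tendsto θ l (𝓝 c)) (c0 : c ≠ 0)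
    (h1 : (fun t => h t * θ t) =O[l] k) : h =O[l] k := by
  have a1 : (fun t => (θ t)⁻¹) =O[l] (fun _ => (1:ℝ)) := (hθ.inv₀ c0).isBigO_one ℝ
  have a2 := h1.mul a1
  refine a2.congr' ?_ (Eventually.of_forall fun t => by simp)
  filter_upwards [hθ.eventually_ne c0] with t ht
  field_simp

theorem const_of_lo {c : ℝ} {k : ℕ} (h : (fun t : ℝ => c * t ^ k) =o[𝓝[≠] 0] (fun t => t ^ k)) : c = 0 := by
  rw [lo_iff] at h
  have h2 : Tendsto (fun _ : ℝ => c) (𝓝[≠] 0) (𝓝 0) := by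
    refine h.congr' ?_
    filter_upwards [ev_ne] with t ht
    field_simp
  exact tendsto_nhds_unique tendsto_const_nhds h2

theorem fderiv_comp_pair {e : ℝ × ℝ → ℝ} (he : ContDiff ℝ ∞ e) {φ : ℝ × ℝ → ℝ × ℝ} (hφ : ContDiff ℝ ∞ φ) (p v : ℝ × ℝ) :
    fderiv ℝ (fun q => e (φ q)) p v = fderiv ℝ e (φ p) (fderiv ℝ φ p v) := by
  have h : HasFDerivAt (fun q => e (φ q)) ((fderiv ℝ e (φ p)).comp (fderiv ℝ φ p)) p :=
    (he.differentiable (by simp) (φ p)).hasFDerivAt.comp p (hφ.differentiable (by simp) p).hasFDerivAt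
  rw [h.fderiv]; rfl

theorem fderiv_n {n : ℝ × ℝ → ℝ} {w : ℝ → ℝ} (h : NF n w) (v : ℝ × ℝ) : fderiv ℝ n 0 v = 0 := by
  obtain ⟨cn, cw, ax, ⟨u, hu, u0, hue⟩, cu⟩ := h
  have e1 : fderiv ℝ n 0 (1, 0) = 0 := by
    have : HasDerivAt (fun s => n (s, 0)) 0 0 :=
      (hasDerivAt_const (0:ℝ) (0:ℝ)).congr_of_eventuallyEq ax
    exact (hasDerivAt_pdx cn 0 0).unique this
  have e2 : fderiv ℝ n 0 (0, 1) = 0 := by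
    have := hue.self_of_nhds
    rw [pdy_def] at this
    rw [this]; simp
  rw [clm_split1, e1, e2]; simp

/-- first part of the invariance argument: the derivative along the curve -/
theorem INV_B {g n e1 e2 ψ1 ψ2 a c : ℝ × ℝ → ℝ} {w : ℝ → ℝ} {r : ℕ} {b : ℝ}
    (hg : ContDiff ℝ ∞ g) (h : NF n w)
    (he1 : ContDiff ℝ ∞ e1) (he2 : ContDiff ℝ ∞ e2)
    (hψ1 : ContDiff ℝ ∞ ψ1) (hψ2 : ContDiff ℝ ∞ ψ2) (ha : ContDiff ℝ ∞ a) (hc : ContDiff ℝ ∞ c)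
    (a0 : a 0 = 0) (c0 : c 0 = 0)
    (hgy : (fun t : ℝ => pdy g (-2 * t ^ 2, t)) =O[𝓝 0] (fun t => t ^ (r + 1)))
    (hy1 : (fun t : ℝ => pdy e1 (-2 * t ^ 2, t)) =O[𝓝 0] (fun t => t ^ (r + 1)))
    (hy2 : (fun t : ℝ => pdy e2 (-2 * t ^ 2, t)) =O[𝓝 0] (fun t => t ^ (r + 1)))
    (E1 : ∀ᶠ q in 𝓝 (0 : ℝ × ℝ), ψ1 (q.1, g q) = a q + e1 q)
    (E2 : ∀ᶠ q in 𝓝 (0 : ℝ × ℝ), ψ2 (q.1, g q) = n (a q, c q) + e2 q)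
    (hb : pdy a 0 = 0 → pdy c 0 = b ∧ b ≠ 0) :
    pdy a 0 = 0 ∧ Tendsto (fun t : ℝ => c (-2 * t ^ 2, t) / t) (𝓝[≠] 0) (𝓝 b) ∧
    (fun t : ℝ => a (-2 * t ^ 2, t) + 2 * c (-2 * t ^ 2, t) ^ 2) =O[𝓝[≠] 0] (fun t => t ^ r) := by
  have hcurve : Tendsto (fun t : ℝ => (-2 * t ^ 2, t)) (𝓝 0) (𝓝 (0 : ℝ × ℝ)) :=
    (by fun_prop : Continuous (fun t : ℝ => (-2 * t ^ 2, t))).tendsto' _ _ (by simp)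
  have bdd : ∀ F : ℝ × ℝ → ℝ, Continuous F → (fun t : ℝ => F (-2 * t ^ 2, t)) =O[𝓝 0] (fun _ => (1:ℝ)) :=
    fun F hF => ((hF.tendsto 0).comp hcurve).isBigO_one ℝ
  have left : ∀ ψ : ℝ × ℝ → ℝ, ContDiff ℝ ∞ ψ → ∀ q, pdy (fun q => ψ (q.1, g q)) q = pdy ψ (q.1, g q) * pdy g q := by
    intro ψ hψ q
    obtain ⟨x, y⟩ := q
    have h3 := HasDerivAt.comp (h₂ := fun s => ψ (x, s)) y (hasDerivAt_pdy hψ x (g (x, y))) (hasDerivAt_pdy hg x y)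
    exact pdy_eq (g := fun q => ψ (q.1, g q)) (by fun_prop) h3
  have leftO : ∀ ψ : ℝ × ℝ → ℝ, ContDiff ℝ ∞ ψ →
      (fun t : ℝ => pdy (fun q => ψ (q.1, g q)) (-2 * t ^ 2, t)) =O[𝓝 0] (fun t => t ^ (r + 1)) := by
    intro ψ hψ
    have c1 := (pdy_contDiff hψ).continuous
    have c2 := hg.continuous
    have := (bdd (fun q => pdy ψ (q.1, g q)) (by fun_prop)).mul hgy
    refine this.congr (fun t => (left ψ hψ _).symm) (fun t => one_mul _)
  have D1 : ∀ᶠ q in 𝓝 (0 : ℝ × ℝ), pdy (fun q => ψ1 (q.1, g q)) q = pdy a q + pdy e1 q := by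
    filter_upwards [pdy_congr E1] with q hq
    rw [hq]
    exact pdy_eq (by fun_prop) ((hasDerivAt_pdy ha q.1 q.2).add (hasDerivAt_pdy he1 q.1 q.2))
  have hay : (fun t : ℝ => pdy a (-2 * t ^ 2, t)) =O[𝓝 0] (fun t => t ^ (r + 1)) := by
    refine ((leftO ψ1 hψ1).sub hy1).congr' ?_ EventuallyEq.rfl
    filter_upwards [hcurve.eventually D1] with t ht
    rw [ht]; ring
  have ay0 : pdy a 0 = 0 := by
    have := hay.eq_zero_imp.self_of_nhds
    have h2 := this (by simp)
    rw [show ((-2 * (0:ℝ) ^ 2, (0:ℝ)) : ℝ × ℝ) = 0 by simp] at h2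
    exact h2
  obtain ⟨hcb, b0⟩ := hb ay0
  have cn := h.cn
  have nac : ∀ q, pdy (fun q => n (a q, c q)) q = pdx n (a q, c q) * pdy a q + pdy n (a q, c q) * pdy c q := by
    intro q
    rw [pdy_def, fderiv_comp_pair cn (ha.prodMk hc), fderiv_pair ha hc, clm_split1]
    simp only [pdy_def, pdx_def]
    ring
  have D2 : ∀ᶠ q in 𝓝 (0 : ℝ × ℝ), pdy (fun q => ψ2 (q.1, g q)) q =
      pdx n (a q, c q) * pdy a q + pdy n (a q, c q) * pdy c q + pdy e2 q := by
    filter_upwards [pdy_congr E2] with q hq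
    rw [hq, ← nac]
    have cnac : ContDiff ℝ ∞ (fun q => n (a q, c q)) := by fun_prop
    exact pdy_eq (by fun_prop) ((hasDerivAt_pdy cnac q.1 q.2).add (hasDerivAt_pdy he2 q.1 q.2))
  have ca := ha.continuous
  have cc := hc.continuous
  have hny : (fun t : ℝ => pdy n (a (-2 * t ^ 2, t), c (-2 * t ^ 2, t)) * pdy c (-2 * t ^ 2, t)) =O[𝓝 0]
      (fun t => t ^ (r + 1)) := by
    have c1 := (pdx_contDiff cn).continuous
    have t1 := ((bdd (fun q => pdx n (a q, c q)) (by fun_prop)).mul hay)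
    simp only [one_mul] at t1
    refine (((leftO ψ2 hψ2).sub hy2).sub t1).congr' ?_ EventuallyEq.rfl
    filter_upwards [hcurve.eventually D2] with t ht
    rw [ht]; ring
  have hny2 : (fun t : ℝ => pdy n (a (-2 * t ^ 2, t), c (-2 * t ^ 2, t))) =O[𝓝 0]
      (fun t => t ^ (r + 1)) := by
    refine bigO_cancel ?_ b0 hny
    rw [← hcb]
    exact ((pdy_contDiff hc).continuous.tendsto 0).comp hcurve
  have hB : Tendsto (fun t : ℝ => c (-2 * t ^ 2, t) / t) (𝓝[≠] 0) (𝓝 b) := by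
    have d1 : HasDerivAt (fun t : ℝ => ((-2 * t ^ 2, t) : ℝ × ℝ)) (0, 1) 0 := by
      refine HasDerivAt.prodMk ?_ (hasDerivAt_id' 0)
      refine ((hasDerivAt_pow 2 (0:ℝ)).const_mul (-2)).congr_deriv (by simp)
    have d2 : HasDerivAt (fun t : ℝ => c (-2 * t ^ 2, t)) b 0 := by
      have d3 : HasFDerivAt c (fderiv ℝ c 0) ((fun t : ℝ => ((-2 * t ^ 2, t) : ℝ × ℝ)) 0) := by
        rw [show (fun t : ℝ => ((-2 * t ^ 2, t) : ℝ × ℝ)) 0 = 0 by simp]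
        exact (hc.differentiable (by simp) 0).hasFDerivAt
      have := HasFDerivAt.comp_hasDerivAt (f := fun t : ℝ => ((-2 * t ^ 2, t) : ℝ × ℝ)) 0 d3 d1
      rw [← pdy_def, hcb] at this
      exact this
    rw [hasDerivAt_iff_tendsto_slope] at d2
    refine d2.congr' ?_
    filter_upwards [ev_ne] with t ht
    rw [slope_def_field, show ((-2 * (0:ℝ) ^ 2, (0:ℝ)) : ℝ × ℝ) = 0 by simp, c0]
    simp
  refine ⟨ay0, hB, ?_⟩
  obtain ⟨u, hu, u0, hue⟩ := h.hu
  have cu := hu.continuous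
  have hac : Tendsto (fun q => (a q, c q)) (𝓝 0) (𝓝 (0 : ℝ × ℝ)) :=
    (by fun_prop : Continuous (fun q => (a q, c q))).tendsto' _ _ (by simp [a0, c0])
  have hul : Tendsto (fun t : ℝ => u (a (-2 * t ^ 2, t), c (-2 * t ^ 2, t))) (𝓝[≠] 0) (𝓝 2) := by
    have h4 := ((cu.tendsto 0).comp (hac.comp hcurve)).mono_left (nhdsWithin_le_nhds (s := {0}ᶜ))
    rw [u0] at h4
    exact h4
  have hδt : (fun t : ℝ => (a (-2 * t ^ 2, t) + 2 * c (-2 * t ^ 2, t) ^ 2) * t) =O[𝓝[≠] 0] (fun t => t ^ (r + 1)) := by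
    refine bigO_cancel (hB.mul hul) (mul_ne_zero b0 two_ne_zero) ?_
    refine (hny2.mono nhdsWithin_le_nhds).congr' ?_ EventuallyEq.rfl
    filter_upwards [ev_ne, ((hac.comp hcurve).mono_left nhdsWithin_le_nhds).eventually hue] with t ht h1
    simp only [Function.comp] at h1
    rw [h1]
    field_simp
  have := hδt.mul (isBigO_refl (fun t : ℝ => t⁻¹) (𝓝[≠] 0))
  refine this.congr' ?_ ?_
  · filter_upwards [ev_ne] with t ht
    field_simp
  · filter_upwards [ev_ne] with t ht
    rw [pow_succ]; field_simp

theorem INV {f : ℝ × ℝ → ℝ × ℝ} {g n : ℝ × ℝ → ℝ} {w U : ℝ → ℝ} {φ ψ e : ℝ × ℝ → ℝ × ℝ} {I : ℝ} (j : ℕ)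
    (hf : ∀ p, f p = (p.1, g p)) (hg : ContDiff ℝ ∞ g) (g0 : g 0 = 0) (hgx : pdx g 0 = 0)
    (hgy : (fun t : ℝ => pdy g (-2 * t ^ 2, t)) =O[𝓝 0] (fun t => t ^ (j + 4)))
    (hI : (fun t : ℝ => g (-2 * t ^ 2, t) - g (-2 * t ^ 2, -t) - 2 * I * t ^ (2 * j + 5)) =o[𝓝[≠] 0]
      (fun t => t ^ (2 * j + 5)))
    (h : NF n w) (hU : ContDiff ℝ ∞ U) (hw : ∀ᶠ s in 𝓝 (0:ℝ), w s = s ^ j * U s)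
    (hφ : ContDiff ℝ ∞ φ) (hψ : ContDiff ℝ ∞ ψ) (φ0 : φ 0 = 0) (ψ0 : ψ 0 = 0)
    (bφ : Function.Bijective (fderiv ℝ φ 0)) (bψ : Function.Bijective (fderiv ℝ ψ 0))
    (he : ContDiff ℝ ∞ e) (eO : e =O[𝓝 0] (fun p => ‖p‖ ^ (2 * j + 6)))
    (deO : (fderiv ℝ e) =O[𝓝 0] (fun p => ‖p‖ ^ (j + 4)))
    (H : ∀ᶠ p in 𝓝 (0 : ℝ × ℝ), ψ (f (φ p)) = (p.1, n p) + e p) : U 0 = 0 ↔ I = 0 := by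
  obtain ⟨φ', hφ', φ'0, hφφ', -, bφ'⟩ := invf φ hφ 0 bφ
  rw [φ0] at φ'0 hφφ' bφ'
  have tφ' : Tendsto φ' (𝓝 0) (𝓝 0) := hφ'.continuous.tendsto' _ _ φ'0
  have H2 : ∀ᶠ q in 𝓝 (0 : ℝ × ℝ), ψ (q.1, g q) = ((φ' q).1, n (φ' q)) + e (φ' q) := by
    filter_upwards [hφφ', tφ'.eventually H] with q h1 h2
    rw [h1, hf] at h2
    exact h2
  have ha : ContDiff ℝ ∞ (fun q => (φ' q).1) := by fun_prop
  have hc : ContDiff ℝ ∞ (fun q => (φ' q).2) := by fun_prop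
  have he1 : ContDiff ℝ ∞ (fun q => (e (φ' q)).1) := by fun_prop
  have he2 : ContDiff ℝ ∞ (fun q => (e (φ' q)).2) := by fun_prop
  have hψ1 : ContDiff ℝ ∞ (fun q => (ψ q).1) := by fun_prop
  have hψ2 : ContDiff ℝ ∞ (fun q => (ψ q).2) := by fun_prop
  have hcurve : Tendsto (fun t : ℝ => (-2 * t ^ 2, t)) (𝓝 0) (𝓝 (0 : ℝ × ℝ)) :=
    (by fun_prop : Continuous (fun t : ℝ => (-2 * t ^ 2, t))).tendsto' _ _ (by simp)
  have E1 : ∀ᶠ q in 𝓝 (0 : ℝ × ℝ), (ψ (q.1, g q)).1 = (φ' q).1 + (e (φ' q)).1 := by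
    filter_upwards [H2] with q hq
    rw [hq]; simp
  have E2 : ∀ᶠ q in 𝓝 (0 : ℝ × ℝ), (ψ (q.1, g q)).2 = n ((φ' q).1, (φ' q).2) + (e (φ' q)).2 := by
    filter_upwards [H2] with q hq
    rw [hq]; simp
  have fst_d : ∀ (G : ℝ × ℝ → ℝ × ℝ), ContDiff ℝ ∞ G → ∀ p v,
      fderiv ℝ (fun q => (G q).1) p v = (fderiv ℝ G p v).1 := by
    intro G hG p v
    have := (hG.differentiable (by simp) p).hasFDerivAt.fst
    rw [this.fderiv]; rfl
  have snd_d : ∀ (G : ℝ × ℝ → ℝ × ℝ), ContDiff ℝ ∞ G → ∀ p v,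
      fderiv ℝ (fun q => (G q).2) p v = (fderiv ℝ G p v).2 := by
    intro G hG p v
    have := (hG.differentiable (by simp) p).hasFDerivAt.snd
    rw [this.fderiv]; rfl
  have dcomp : ∀ p v, fderiv ℝ (fun q => e (φ' q)) p v = fderiv ℝ e (φ' p) (fderiv ℝ φ' p v) := by
    intro p v
    have : HasFDerivAt (fun q => e (φ' q)) ((fderiv ℝ e (φ' p)).comp (fderiv ℝ φ' p)) p :=
      (he.differentiable (by simp) (φ' p)).hasFDerivAt.comp p (hφ'.differentiable (by simp) p).hasFDerivAt
    rw [this.fderiv]; rfl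
  have cγ : ContDiff ℝ ∞ (fun t : ℝ => φ' (-2 * t ^ 2, t)) := by fun_prop
  have cγ0 : φ' (-2 * (0:ℝ) ^ 2, 0) = 0 := by
    rw [show ((-2 * (0:ℝ) ^ 2, (0:ℝ)) : ℝ × ℝ) = 0 by simp]; exact φ'0
  have dO : (fun t : ℝ => fderiv ℝ (fun q => e (φ' q)) (-2 * t ^ 2, t) (0, 1)) =O[𝓝 0] (fun t => t ^ (j + 4)) := by
    have a1 := bigO_curve deO (cγ.differentiable (by simp) 0) cγ0
    have c1 : Continuous (fun q => fderiv ℝ φ' q (0, 1)) := by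
      have := (hφ'.continuous_fderiv (by simp))
      fun_prop
    have a2 : (fun t : ℝ => fderiv ℝ φ' (-2 * t ^ 2, t) (0, 1)) =O[𝓝 0] (fun _ => (1:ℝ)) :=
      ((c1.tendsto 0).comp hcurve).isBigO_one ℝ
    have a3 := a1.norm_left.mul a2.norm_left
    simp only [mul_one] at a3
    refine IsBigO.trans (IsBigO.of_norm_le fun t => ?_) a3
    rw [dcomp]
    exact ContinuousLinearMap.le_opNorm _ _
  have eγ : (fun t : ℝ => e (φ' (-2 * t ^ 2, t))) =O[𝓝 0] (fun t => t ^ (2 * j + 6)) :=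
    bigO_curve eO (cγ.differentiable (by simp) 0) cγ0
  have cee : ContDiff ℝ ∞ (fun q => e (φ' q)) := by fun_prop
  have hy1 : (fun t : ℝ => pdy (fun q => (e (φ' q)).1) (-2 * t ^ 2, t)) =O[𝓝 0] (fun t => t ^ (j + 4)) := by
    refine IsBigO.trans (IsBigO.of_norm_le fun t => ?_) dO.norm_left
    rw [pdy_def, fst_d _ cee]
    exact norm_fst_le _
  have hy2 : (fun t : ℝ => pdy (fun q => (e (φ' q)).2) (-2 * t ^ 2, t)) =O[𝓝 0] (fun t => t ^ (j + 4)) := by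
    refine IsBigO.trans (IsBigO.of_norm_le fun t => ?_) dO.norm_left
    rw [pdy_def, snd_d _ cee]
    exact norm_snd_le _
  obtain ⟨ay0, hB, hδ⟩ := INV_B (r := j + 3) (b := pdy (fun q => (φ' q).2) 0) hg h he1 he2 hψ1 hψ2 ha hc
    (by simp [φ'0]) (by simp [φ'0]) hgy hy1 hy2 E1 E2 (by
      intro h1
      refine ⟨rfl, fun h2 => ?_⟩
      rw [pdy_def, fst_d _ hφ'] at h1
      rw [pdy_def, snd_d _ hφ'] at h2
      have h3 : fderiv ℝ φ' 0 (0, 1) = fderiv ℝ φ' 0 0 := by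
        rw [map_zero]; exact Prod.ext h1 h2
      have := bφ'.1 h3
      simp at this)
  set b := pdy (fun q => (φ' q).2) 0 with hb
  have b0 : b ≠ 0 := by
    intro h2
    rw [pdy_def, fst_d _ hφ'] at ay0
    rw [hb, pdy_def, snd_d _ hφ'] at h2
    have h3 : fderiv ℝ φ' 0 (0, 1) = fderiv ℝ φ' 0 0 := by
      rw [map_zero]; exact Prod.ext ay0 h2
    have := bφ'.1 h3
    simp at this
  -- the derivative of ψ at zero
  have de0 : fderiv ℝ e 0 = 0 := by
    have := deO.eq_zero_imp.self_of_nhds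
    exact this (by simp)
  have hψx : (fderiv ℝ ψ 0 (1, 0)).2 = 0 := by
    have cn := h.cn
    have l1 := Filter.EventuallyEq.fderiv_eq (𝕜 := ℝ) E2
    have l2 := congrArg (fun L => L (1, 0)) l1
    have cf : ContDiff ℝ ∞ (fun q : ℝ × ℝ => (q.1, g q)) := by fun_prop
    rw [fderiv_comp_pair (e := fun q => (ψ q).2) hψ2 cf, fderiv_pair contDiff_fst hg] at l2
    have s1 : fderiv ℝ (fun q => n ((φ' q).1, (φ' q).2) + (e (φ' q)).2) 0 (1, 0) = 0 := by
      have t1 : DifferentiableAt ℝ (fun q => n (φ' q)) 0 :=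
        ((by fun_prop : ContDiff ℝ ∞ (fun q => n (φ' q))).differentiable (by simp)) 0
      have t2 := (he2.differentiable (by simp)) 0
      have := t1.hasFDerivAt.add t2.hasFDerivAt
      rw [show (fun q => n ((φ' q).1, (φ' q).2) + (e (φ' q)).2) = ((fun q => n (φ' q)) + fun q => (e (φ' q)).2) from rfl,
        this.fderiv, ContinuousLinearMap.add_apply, fderiv_comp_pair cn hφ', φ'0, fderiv_n h, snd_d _ cee, dcomp,
        φ'0, de0]
      simp
    rw [s1] at l2
    have s2 : fderiv ℝ g 0 (1, 0) = 0 := hgx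
    rw [s2, Prod.fst_zero, g0, Prod.mk_zero_zero, snd_d _ hψ] at l2
    have s3 : fderiv ℝ (fun q : ℝ × ℝ => q.1) 0 (1, 0) = 1 := by
      rw [show (fun q : ℝ × ℝ => q.1) = Prod.fst from rfl, fderiv_fst]; rfl
    rw [s3] at l2
    exact l2
  set d := (fderiv ℝ ψ 0 (0, 1)).2 with hd
  have d0 : d ≠ 0 := by
    intro h0
    obtain ⟨v, hv⟩ := bψ.2 (0, 1)
    rw [clm_split] at hv
    have := congrArg Prod.snd hv
    simp only [Prod.snd_add, Prod.smul_snd, hψx, ← hd, h0] at this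
    simp at this
  -- the strict derivative
  have pmO : (fun t : ℝ => t ^ (2 * j + 6)) =o[𝓝[≠] 0] (fun t => t ^ (2 * j + 5)) :=
    (isLittleO_pow_pow (by omega)).mono nhdsWithin_le_nhds
  have cg := hg.continuous
  let fγ : ℝ → ℝ × ℝ := fun t => (-2 * t ^ 2, g (-2 * t ^ 2, t))
  have tneg : Tendsto (fun t : ℝ => -t) (𝓝[≠] 0) (𝓝[≠] 0) := by
    refine tendsto_nhdsWithin_iff.2 ⟨?_, ?_⟩
    · exact (continuous_neg.tendsto' (0:ℝ) 0 (by simp)).mono_left nhdsWithin_le_nhds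
    · filter_upwards [ev_ne] with t ht
      exact neg_ne_zero.2 ht
  have tfγ : Tendsto fγ (𝓝[≠] 0) (𝓝 0) :=
    ((by fun_prop : Continuous fγ).tendsto' 0 0 (by simp [fγ]; exact g0)).mono_left nhdsWithin_le_nhds
  have hΔ : (fun t => g (-2 * t ^ 2, t) - g (-2 * t ^ 2, -t)) =O[𝓝[≠] 0] (fun t => t ^ (2 * j + 5)) := by
    have := hI.isBigO.add ((isBigO_refl (fun t : ℝ => t ^ (2 * j + 5)) (𝓝[≠] 0)).const_mul_left (2 * I))
    refine this.congr_left fun t => ?_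
    ring
  have st : (fun t => ψ (fγ t) - ψ (fγ (-t)) - fderiv ℝ ψ 0 (fγ t - fγ (-t))) =o[𝓝[≠] 0]
      (fun t => t ^ (2 * j + 5)) := by
    have s1 : HasStrictFDerivAt ψ (fderiv ℝ ψ 0) 0 := hψ.contDiffAt.hasStrictFDerivAt (by simp)
    have s2 := s1.isLittleO.comp_tendsto (tfγ.prodMk_nhds (tfγ.comp tneg))
    refine s2.trans_isBigO (IsBigO.trans (IsBigO.of_norm_le fun t => ?_) hΔ.norm_left)
    simp only [Function.comp, fγ, even_two.neg_pow, Prod.mk_sub_mk, sub_self, Prod.norm_mk, norm_zero]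
    simp
  have dlin : ∀ t, fderiv ℝ ψ 0 (fγ t - fγ (-t)) =
      (g (-2 * t ^ 2, t) - g (-2 * t ^ 2, -t)) • fderiv ℝ ψ 0 (0, 1) := by
    intro t
    rw [← map_smul]
    simp [fγ]
  have st1 : (fun t => (ψ (fγ t)).1 - (ψ (fγ (-t))).1) =O[𝓝[≠] 0] (fun t => t ^ (2 * j + 5)) := by
    have q1 : (fun t => ψ (fγ t) - ψ (fγ (-t))) =O[𝓝[≠] 0] (fun t => t ^ (2 * j + 5)) := by
      have q2 : (fun t => fderiv ℝ ψ 0 (fγ t - fγ (-t))) =O[𝓝[≠] 0] (fun t => t ^ (2 * j + 5)) := by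
        have q3 := hΔ.smul (isBigO_refl (fun _ : ℝ => fderiv ℝ ψ 0 (0, 1)) (𝓝[≠] 0))
        refine (q3.congr_left fun t => (dlin t).symm).trans ?_
        refine IsBigO.of_bound ‖fderiv ℝ ψ 0 (0, 1)‖ (Eventually.of_forall fun t => ?_)
        rw [norm_smul, mul_comm]
      refine (st.isBigO.add q2).congr_left fun t => ?_
      simp
    exact IsBigO.trans (IsBigO.of_norm_le fun t => norm_fst_le (ψ (fγ t) - ψ (fγ (-t)))) q1.norm_left
  have st2 : (fun t => (ψ (fγ t)).2 - (ψ (fγ (-t))).2 - 2 * d * I * t ^ (2 * j + 5)) =o[𝓝[≠] 0]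
      (fun t => t ^ (2 * j + 5)) := by
    have q1 : (fun t => (ψ (fγ t)).2 - (ψ (fγ (-t))).2 - d * (g (-2 * t ^ 2, t) - g (-2 * t ^ 2, -t))) =o[𝓝[≠] 0]
      (fun t => t ^ (2 * j + 5)) := by
      refine IsBigO.trans_isLittleO (IsBigO.of_norm_le fun t => ?_) st.norm_left
      have := norm_snd_le (ψ (fγ t) - ψ (fγ (-t)) - fderiv ℝ ψ 0 (fγ t - fγ (-t)))
      rw [dlin] at this ⊢
      refine le_trans (le_of_eq ?_) this
      simp only [Prod.snd_sub, Prod.smul_snd, smul_eq_mul, ← hd]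
      rw [mul_comm d]
    refine (q1.add (hI.const_mul_left d)).congr_left fun t => ?_
    ring
  -- comparison
  have tcur : Tendsto (fun t : ℝ => (-2 * t ^ 2, t)) (𝓝[≠] 0) (𝓝 (0 : ℝ × ℝ)) := hcurve.mono_left nhdsWithin_le_nhds
  have eγ' := eγ.mono (nhdsWithin_le_nhds (s := {0}ᶜ))
  have eγn : (fun t : ℝ => e (φ' (-2 * (-t) ^ 2, -t))) =O[𝓝[≠] 0] (fun t => t ^ (2 * j + 6)) := by
    have := eγ'.comp_tendsto tneg
    refine this.congr (fun t => rfl) fun t => ?_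
    simp only [Function.comp]
    exact Even.neg_pow ⟨j + 3, by ring⟩ t
  have o1 : ∀ G : ℝ → ℝ × ℝ, G =O[𝓝[≠] 0] (fun t => t ^ (2 * j + 6)) →
      (fun t => (G t).1) =o[𝓝[≠] 0] (fun t => t ^ (2 * j + 5)) := fun G hG =>
    (IsBigO.trans (IsBigO.of_norm_le fun t => norm_fst_le _) hG.norm_left).trans_isLittleO pmO
  have o2 : ∀ G : ℝ → ℝ × ℝ, G =O[𝓝[≠] 0] (fun t => t ^ (2 * j + 6)) →
      (fun t => (G t).2) =o[𝓝[≠] 0] (fun t => t ^ (2 * j + 5)) := fun G hG =>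
    (IsBigO.trans (IsBigO.of_norm_le fun t => norm_snd_le _) hG.norm_left).trans_isLittleO pmO
  let A : ℝ → ℝ := fun t => (φ' (-2 * t ^ 2, t)).1
  let B : ℝ → ℝ := fun t => (φ' (-2 * t ^ 2, t)).2
  have Adiff : (fun t => A t - A (-t)) =O[𝓝[≠] 0] (fun t => t ^ (2 * j + 5)) := by
    refine ((st1.sub (o1 _ eγ').isBigO).add (o1 _ eγn).isBigO).congr' ?_ EventuallyEq.rfl
    filter_upwards [tcur.eventually E1, (tcur.comp tneg).eventually E1] with t h1 h2
    simp only [Function.comp] at h1 h2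
    simp only [fγ, A]
    rw [h1, h2]; ring
  have ndiff : (fun t => n (A t, B t) - n (A (-t), B (-t)) - 2 * d * I * t ^ (2 * j + 5)) =o[𝓝[≠] 0]
      (fun t => t ^ (2 * j + 5)) := by
    refine ((st2.sub (o2 _ eγ')).add (o2 _ eγn)).congr' ?_ EventuallyEq.rfl
    filter_upwards [tcur.eventually E2, (tcur.comp tneg).eventually E2] with t h1 h2
    simp only [Function.comp] at h1 h2
    simp only [fγ, A, B]
    rw [h1, h2]; ring
  have N1 := INV_A (A := A) (B := B) j h hU hw b0 hB hδ
  have N2 : (fun t => n (A (-t), B (-t)) + A (-t) ^ 2 / 4 - b ^ (2 * j + 5) * U 0 * t ^ (2 * j + 5))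
      =o[𝓝[≠] 0] (fun t => t ^ (2 * j + 5)) := by
    have od : ∀ t : ℝ, (-t) ^ (2 * j + 5) = -t ^ (2 * j + 5) := fun t => Odd.neg_pow ⟨j + 2, by ring⟩ t
    have := N1.comp_tendsto tneg
    refine isLittleO_neg_right.1 (this.congr (fun t => ?_) fun t => ?_)
    · simp only [Function.comp]; rw [od]; ring
    · simp only [Function.comp]; rw [od]
  have A2 : (fun t => A t ^ 2 - A (-t) ^ 2) =o[𝓝[≠] 0] (fun t => t ^ (2 * j + 5)) := by
    have cA : Continuous A := by have := hφ'.continuous; fun_prop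
    have A0 : A 0 = 0 := by simp only [A]; rw [cγ0]; rfl
    have : (fun t => A t + A (-t)) =o[𝓝[≠] 0] (fun _ => (1:ℝ)) := by
      rw [isLittleO_one_iff]
      exact ((by fun_prop : Continuous (fun t => A t + A (-t))).tendsto' 0 0 (by simp [A0])).mono_left nhdsWithin_le_nhds
    refine (Adiff.mul_isLittleO this).congr (fun t => ?_) (fun t => mul_one _)
    ring
  have key : 2 * d * I + 2 * b ^ (2 * j + 5) * U 0 = 0 := by
    apply const_of_lo (k := 2 * j + 5)
    refine (((N1.sub N2).sub (A2.const_mul_left (1/4))).sub ndiff).congr_left fun t => ?_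
    ring
  constructor
  · intro h0
    rw [h0] at key
    have : d * I = 0 := by linarith
    exact (mul_eq_zero.1 this).resolve_left d0
  · intro h0
    rw [h0] at key
    have : b ^ (2 * j + 5) * U 0 = 0 := by linarith
    exact (mul_eq_zero.1 this).resolve_left (pow_ne_zero _ b0)

end invariant2

end part9

section part10
open Filter Topology Asymptotics
open scoped ContDiff

section conditions

theorem cond_of {g : ℝ × ℝ → ℝ} (hg : ContDiff ℝ ∞ g) (c : ℕ → ℕ → ℝ) (N : ℕ)
    (hc : ∀ i j, i + j < N + 1 → tcoeff g i j = c i j) {Q R : ℝ → ℝ} (hQ : Continuous Q) (hR : Continuous R)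
    {m k : ℕ} {I : ℝ} (hm : m ≤ N) (hk : k ≤ N)
    (eQ : ∀ t, TP c (N + 1) (-2 * t ^ 2, t) - TP c (N + 1) (-2 * t ^ 2, -t) = 2 * I * t ^ m + t ^ (m + 1) * Q t)
    (eR : ∀ t, pdy (TP c (N + 1)) (-2 * t ^ 2, t) = t ^ k * R t) :
    ((fun t : ℝ => pdy g (-2 * t ^ 2, t)) =O[𝓝 0] (fun t => t ^ k)) ∧
    ((fun t : ℝ => g (-2 * t ^ 2, t) - g (-2 * t ^ 2, -t) - 2 * I * t ^ m) =o[𝓝[≠] 0]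
      (fun t => t ^ m)) := by
  obtain ⟨r1, r2⟩ := taylor_rem hg c N hc
  have dc : DifferentiableAt ℝ (fun t : ℝ => ((-2 * t ^ 2, t) : ℝ × ℝ)) 0 := by fun_prop
  have dc' : DifferentiableAt ℝ (fun t : ℝ => ((-2 * t ^ 2, -t) : ℝ × ℝ)) 0 := by fun_prop
  have powO : ∀ a b : ℕ, a ≤ b → (fun t : ℝ => t ^ b) =O[𝓝 0] (fun t => t ^ a) := by
    intro a b hab
    rcases hab.eq_or_lt with h | h
    · rw [h]
    · exact (isLittleO_pow_pow h).isBigO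
  have bdd : ∀ (F : ℝ → ℝ) (a : ℕ), Continuous F → (fun t : ℝ => t ^ a * F t) =O[𝓝 0] (fun t => t ^ a) := by
    intro F a hF
    have := (isBigO_refl (fun t : ℝ => t ^ a) (𝓝 0)).mul ((hF.tendsto 0).isBigO_one ℝ)
    simpa using this
  constructor
  · have h1 := (bigO_curve r2 dc (by simp)).trans (powO k N hk)
    refine (h1.add (bdd R k hR)).congr_left fun t => ?_
    rw [pdy_sub hg (TP_contDiff _ _), Pi.sub_apply, ← eR]
    ring
  · have h1 := (bigO_curve r1 dc (by simp)).trans (powO (m + 1) (N + 1) (by omega))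
    have h2 := (bigO_curve r1 dc' (by simp)).trans (powO (m + 1) (N + 1) (by omega))
    have h3 := ((h1.sub h2).add (bdd Q (m + 1) hQ)).trans_isLittleO (isLittleO_pow_pow (Nat.lt_succ_self m))
    refine (h3.mono nhdsWithin_le_nhds).congr_left fun t => ?_
    simp only [Pi.sub_apply]
    linear_combination - eQ t

theorem cond5 {g : ℝ × ℝ → ℝ} (hg : ContDiff ℝ ∞ g)
    (hc : ∀ i j, i + j < 5 → tcoeff g i j = P11 i j) :
    ((fun t : ℝ => pdy g (-2 * t ^ 2, t)) =O[𝓝 0] (fun t => t ^ 4)) ∧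
    ((fun t : ℝ => g (-2 * t ^ 2, t) - g (-2 * t ^ 2, -t) -
      2 * (tcoeff g 0 5) * t ^ 5) =o[𝓝[≠] 0] (fun t => t ^ 5)) := by
  refine cond_of hg (fun i j => if i + j < 5 then P11 i j else tcoeff g i j) 5 ?_
    (Q := fun t => (8) * tcoeff g 2 3 * t ^ 1 + (32) * tcoeff g 4 1 * t ^ 3)
    (R := fun t => (5) * tcoeff g 0 5 * t ^ 0 + (-8) * tcoeff g 1 4 * t ^ 1 + (12) * tcoeff g 2 3 * t ^ 2 + (-16) * tcoeff g 3 2 * t ^ 3 + (16) * tcoeff g 4 1 * t ^ 4)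
    (by fun_prop) (by fun_prop) (by norm_num) (by norm_num) ?_ ?_
  · intro i j _
    split_ifs with h
    · exact hc i j h
    · rfl
  · intro t
    simp only [TP_apply, Finset.sum_range_succ, Finset.sum_range_zero, P11]
    norm_num
    ring
  · intro t
    simp only [pdy_TP_apply, Finset.sum_range_succ, Finset.sum_range_zero, P11]
    norm_num
    ring

theorem cond7 {g : ℝ × ℝ → ℝ} (hg : ContDiff ℝ ∞ g)
    (hc : ∀ i j, i + j < 5 → tcoeff g i j = P11 i j) (h5 : tcoeff g 0 5 = 0) :
    ((fun t : ℝ => pdy g (-2 * t ^ 2, t)) =O[𝓝 0] (fun t => t ^ 5)) ∧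
    ((fun t : ℝ => g (-2 * t ^ 2, t) - g (-2 * t ^ 2, -t) -
      2 * (tcoeff g 0 7 - 2 * tcoeff g 1 5 + 4 * tcoeff g 2 3) * t ^ 7) =o[𝓝[≠] 0] (fun t => t ^ 7)) := by
  refine cond_of hg (fun i j => if i + j < 5 then P11 i j else tcoeff g i j) 7 ?_
    (Q := fun t => (8) * tcoeff g 2 5 * t ^ 1 + (-16) * tcoeff g 3 3 * t ^ 1 + (32) * tcoeff g 4 1 * t ^ 1 + (32) * tcoeff g 4 3 * t ^ 3 + (-64) * tcoeff g 5 1 * t ^ 3 + (128) * tcoeff g 6 1 * t ^ 5)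
    (R := fun t => (6) * tcoeff g 0 6 * t ^ 0 + (7) * tcoeff g 0 7 * t ^ 1 + (-8) * tcoeff g 1 4 * t ^ 0 + (-10) * tcoeff g 1 5 * t ^ 1 + (-12) * tcoeff g 1 6 * t ^ 2 + (12) * tcoeff g 2 3 * t ^ 1 + (16) * tcoeff g 2 4 * t ^ 2 + (20) * tcoeff g 2 5 * t ^ 3 + (-16) * tcoeff g 3 2 * t ^ 2 + (-24) * tcoeff g 3 3 * t ^ 3 + (-32) * tcoeff g 3 4 * t ^ 4 + (16) * tcoeff g 4 1 * t ^ 3 + (32) * tcoeff g 4 2 * t ^ 4 + (48) * tcoeff g 4 3 * t ^ 5 + (-32) * tcoeff g 5 1 * t ^ 5 + (-64) * tcoeff g 5 2 * t ^ 6 + (64) * tcoeff g 6 1 * t ^ 7)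
    (by fun_prop) (by fun_prop) (by norm_num) (by norm_num) ?_ ?_
  · intro i j _
    split_ifs with h
    · exact hc i j h
    · rfl
  · intro t
    simp only [TP_apply, Finset.sum_range_succ, Finset.sum_range_zero, P11]
    norm_num [h5]
    ring
  · intro t
    simp only [pdy_TP_apply, Finset.sum_range_succ, Finset.sum_range_zero, P11]
    norm_num [h5]
    ring

theorem cond9 {g : ℝ × ℝ → ℝ} (hg : ContDiff ℝ ∞ g)
    (hc : ∀ i j, i + j < 8 → tcoeff g i j = P11 i j) :
    ((fun t : ℝ => pdy g (-2 * t ^ 2, t)) =O[𝓝 0] (fun t => t ^ 6)) ∧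
    ((fun t : ℝ => g (-2 * t ^ 2, t) - g (-2 * t ^ 2, -t) -
      2 * (tcoeff g 0 9 - 2 * tcoeff g 1 7) * t ^ 9) =o[𝓝[≠] 0] (fun t => t ^ 9)) := by
  refine cond_of hg (fun i j => if i + j < 8 then P11 i j else tcoeff g i j) 9 ?_
    (Q := fun t => (8) * tcoeff g 2 7 * t ^ 1 + (-16) * tcoeff g 3 5 * t ^ 1 + (32) * tcoeff g 4 5 * t ^ 3 + (-64) * tcoeff g 5 3 * t ^ 3 + (128) * tcoeff g 6 3 * t ^ 5 + (-256) * tcoeff g 7 1 * t ^ 5 + (512) * tcoeff g 8 1 * t ^ 7)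
    (R := fun t => (8) * tcoeff g 0 8 * t ^ 1 + (9) * tcoeff g 0 9 * t ^ 2 + (-14) * tcoeff g 1 7 * t ^ 2 + (-16) * tcoeff g 1 8 * t ^ 3 + (24) * tcoeff g 2 6 * t ^ 3 + (28) * tcoeff g 2 7 * t ^ 4 + (-40) * tcoeff g 3 5 * t ^ 4 + (-48) * tcoeff g 3 6 * t ^ 5 + (64) * tcoeff g 4 4 * t ^ 5 + (80) * tcoeff g 4 5 * t ^ 6 + (-96) * tcoeff g 5 3 * t ^ 6 + (-128) * tcoeff g 5 4 * t ^ 7 + (128) * tcoeff g 6 2 * t ^ 7 + (192) * tcoeff g 6 3 * t ^ 8 + (-128) * tcoeff g 7 1 * t ^ 8 + (-256) * tcoeff g 7 2 * t ^ 9 + (256) * tcoeff g 8 1 * t ^ 10)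
    (by fun_prop) (by fun_prop) (by norm_num) (by norm_num) ?_ ?_
  · intro i j _
    split_ifs with h
    · exact hc i j h
    · rfl
  · intro t
    simp only [TP_apply, Finset.sum_range_succ, Finset.sum_range_zero, P11]
    norm_num
    ring
  · intro t
    simp only [pdy_TP_apply, Finset.sum_range_succ, Finset.sum_range_zero, P11]
    norm_num
    ring

theorem cond0 {g : ℝ × ℝ → ℝ} (hc : ∀ i j, i + j < 5 → tcoeff g i j = P11 i j) : g 0 = 0 ∧ pdx g 0 = 0 := by
  have h1 := hc 0 0 (by norm_num)
  have h2 := hc 1 0 (by norm_num)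
  simp [tcoeff, P11] at h1 h2
  exact ⟨h1, h2⟩

end conditions

end part10

section part11
open Filter Topology Asymptotics
open scoped ContDiff

section assembly

theorem had1 {w : ℝ → ℝ} (hw : ContDiff ℝ ∞ w) (w0 : w 0 = 0) :
    ∃ w1 : ℝ → ℝ, ContDiff ℝ ∞ w1 ∧ ∀ s, w s = s * w1 s := by
  obtain ⟨H, cH, h1, -⟩ := had (E := ℝ) (fun p => w p.2) (by fun_prop)
  refine ⟨fun s => H (0, s), by fun_prop, fun s => ?_⟩
  have := h1 0 s
  simp only [w0, zero_add] at this
  exact this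

theorem inv_a {f : ℝ × ℝ → ℝ × ℝ} {g n : ℝ × ℝ → ℝ} {w U : ℝ → ℝ} {I : ℝ} (j : ℕ)
    (hF : HasForm f g 5 P11)
    (hcond : ((fun t : ℝ => pdy g (-2 * t ^ 2, t)) =O[𝓝 0] (fun t => t ^ (j + 4))) ∧
     ((fun t : ℝ => g (-2 * t ^ 2, t) - g (-2 * t ^ 2, -t) - 2 * I * t ^ (2 * j + 5)) =o[𝓝[≠] 0]
      (fun t => t ^ (2 * j + 5))))
    (h : NF n w) (hU : ContDiff ℝ ∞ U) (hw : ∀ᶠ s in 𝓝 (0:ℝ), w s = s ^ j * U s)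
    (hA : AEquiv f (fun p => (p.1, n p))) : U 0 = 0 ↔ I = 0 := by
  obtain ⟨hg, hf, hc⟩ := hF
  obtain ⟨φ, ψ, hφ, hψ, φ0, ψ0, bφ, bψ, H⟩ := hA
  refine INV j hf hg (cond0 hc).1 (cond0 hc).2 hcond.1 hcond.2 h hU hw hφ hψ φ0 ψ0 bφ bψ
    (e := fun _ => 0) contDiff_const (isBigO_zero _ _) ?_ ?_
  · have : fderiv ℝ (fun _ : ℝ × ℝ => (0 : ℝ × ℝ)) = fun _ => 0 := by
      funext p; simp
    rw [this]
    exact isBigO_zero _ _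
  · filter_upwards [H] with p hp
    rw [hp, add_zero]

theorem inv_jet {f : ℝ × ℝ → ℝ × ℝ} {g n : ℝ × ℝ → ℝ} {w U : ℝ → ℝ} {I : ℝ} (j : ℕ) (hj : j ≤ 1)
    (hF : HasForm f g 5 P11)
    (hcond : ((fun t : ℝ => pdy g (-2 * t ^ 2, t)) =O[𝓝 0] (fun t => t ^ (j + 4))) ∧
     ((fun t : ℝ => g (-2 * t ^ 2, t) - g (-2 * t ^ 2, -t) - 2 * I * t ^ (2 * j + 5)) =o[𝓝[≠] 0]
      (fun t => t ^ (2 * j + 5))))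
    (h : NF n w) (hU : ContDiff ℝ ∞ U) (hw : ∀ᶠ s in 𝓝 (0:ℝ), w s = s ^ j * U s)
    (hA : JetEquiv 7 f (fun p => (p.1, n p))) : U 0 = 0 ↔ I = 0 := by
  obtain ⟨hg, hf, hc⟩ := hF
  obtain ⟨φ, ψ, hφ, hψ, φ0, ψ0, bφ, bψ, H⟩ := hA
  have cn := h.cn
  have cf : ContDiff ℝ ∞ f := by
    have : f = fun p => (p.1, g p) := funext hf
    rw [this]; fun_prop
  have c1 : ContDiff ℝ ∞ (ψ ∘ f ∘ φ) := hψ.comp (cf.comp hφ)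
  have c2 : ContDiff ℝ ∞ (fun p : ℝ × ℝ => (p.1, n p)) := by fun_prop
  have he : ContDiff ℝ ∞ (ψ ∘ f ∘ φ - fun p : ℝ × ℝ => (p.1, n p)) := c1.sub c2
  have hz : ∀ i < 8, iteratedFDeriv ℝ i (ψ ∘ f ∘ φ - fun p : ℝ × ℝ => (p.1, n p)) 0 = 0 := by
    intro i hi
    rw [iteratedFDeriv_sub_apply (c1.of_le (by exact_mod_cast le_top)).contDiffAt (c2.of_le (by exact_mod_cast le_top)).contDiffAt,
      H i (by omega), sub_self]
  refine INV j hf hg (cond0 hc).1 (cond0 hc).2 hcond.1 hcond.2 h hU hw hφ hψ φ0 ψ0 bφ bψ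
    (e := ψ ∘ f ∘ φ - fun p : ℝ × ℝ => (p.1, n p)) he ?_ ?_ ?_
  · exact bigO_of_iteratedFDeriv _ he fun i hi => hz i (by omega)
  · exact bigO_fderiv_of_iteratedFDeriv _ he fun i hi => hz i (by omega)
  · refine Eventually.of_forall fun p => ?_
    simp

theorem fwd5 {f : ℝ × ℝ → ℝ × ℝ} {g : ℝ × ℝ → ℝ} (hF : HasForm f g 5 P11) (h5 : tcoeff g 0 5 ≠ 0) :
    ∃ n, NF n (fun s => s ^ 0) ∧ AEquiv f (fun p => (p.1, n p)) := by
  obtain ⟨n, w, hn, hA⟩ := T1 hF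
  have h1 := inv_a (U := w) 0 hF (cond5 hF.1 hF.2.2) hn hn.cw (by simp) hA
  obtain ⟨n', hn', hA'⟩ := T2 0 hn hn.cw (by simp) (fun h => h5 (h1.1 h))
  exact ⟨n', hn', aequiv_trans hA hA'⟩

theorem ww1 {f : ℝ × ℝ → ℝ × ℝ} {g : ℝ × ℝ → ℝ} (hF : HasForm f g 5 P11) (h5 : tcoeff g 0 5 = 0) :
    ∃ n w w1, NF n w ∧ AEquiv f (fun p => (p.1, n p)) ∧ ContDiff ℝ ∞ w1 ∧ (∀ s, w s = s ^ 1 * w1 s) ∧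
      (w1 0 = 0 ↔ tcoeff g 0 7 - 2 * tcoeff g 1 5 + 4 * tcoeff g 2 3 = 0) := by
  obtain ⟨n, w, hn, hA⟩ := T1 hF
  have h1 := inv_a (U := w) 0 hF (cond5 hF.1 hF.2.2) hn hn.cw (by simp) hA
  obtain ⟨w1, c1, e1⟩ := had1 hn.cw (h1.2 h5)
  have e2 : ∀ s, w s = s ^ 1 * w1 s := fun s => by rw [pow_one, e1]
  have h2 := inv_a (U := w1) 1 hF (cond7 hF.1 hF.2.2 h5) hn c1 (Eventually.of_forall e2) hA
  exact ⟨n, w, w1, hn, hA, c1, e2, h2⟩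

theorem fwd7 {f : ℝ × ℝ → ℝ × ℝ} {g : ℝ × ℝ → ℝ} (hF : HasForm f g 5 P11) (h5 : tcoeff g 0 5 = 0)
    (h7 : tcoeff g 0 7 - 2 * tcoeff g 1 5 + 4 * tcoeff g 2 3 ≠ 0) :
    ∃ n, NF n (fun s => s ^ 1) ∧ AEquiv f (fun p => (p.1, n p)) := by
  obtain ⟨n, w, w1, hn, hA, c1, e1, h1⟩ := ww1 hF h5
  obtain ⟨n', hn', hA'⟩ := T2 1 hn c1 (Eventually.of_forall e1) (fun h => h7 (h1.1 h))
  exact ⟨n', hn', aequiv_trans hA hA'⟩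

theorem ww2 {f : ℝ × ℝ → ℝ × ℝ} {g : ℝ × ℝ → ℝ} (hF : HasForm f g 5 P11) (h5 : tcoeff g 0 5 = 0)
    (h7 : tcoeff g 0 7 - 2 * tcoeff g 1 5 + 4 * tcoeff g 2 3 = 0) :
    ∃ n w w2, NF n w ∧ AEquiv f (fun p => (p.1, n p)) ∧ ContDiff ℝ ∞ w2 ∧ (∀ s, w s = s ^ 2 * w2 s) := by
  obtain ⟨n, w, w1, hn, hA, c1, e1, h1⟩ := ww1 hF h5
  obtain ⟨w2, c2, e2⟩ := had1 c1 (h1.2 h7)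
  refine ⟨n, w, w2, hn, hA, c2, fun s => ?_⟩
  rw [e1, e2]; ring

theorem van {g : ℝ × ℝ → ℝ} (h8 : ∀ i j, i + j < 8 → tcoeff g i j = P11 i j) : tcoeff g 0 5 = 0 ∧
    tcoeff g 0 7 - 2 * tcoeff g 1 5 + 4 * tcoeff g 2 3 = 0 := by
  rw [h8 0 5 (by norm_num), h8 0 7 (by norm_num), h8 1 5 (by norm_num), h8 2 3 (by norm_num)]
  norm_num [P11]

theorem fwd9 {f : ℝ × ℝ → ℝ × ℝ} {g : ℝ × ℝ → ℝ} (hF : HasForm f g 5 P11)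
    (h8 : ∀ i j, i + j < 8 → tcoeff g i j = P11 i j) (h9 : tcoeff g 0 9 - 2 * tcoeff g 1 7 ≠ 0) :
    ∃ n, NF n (fun s => s ^ 2) ∧ AEquiv f (fun p => (p.1, n p)) := by
  obtain ⟨n, w, w2, hn, hA, c2, e2⟩ := ww2 hF (van h8).1 (van h8).2
  have h2 := inv_a (U := w2) 2 hF (cond9 hF.1 h8) hn c2 (Eventually.of_forall e2) hA
  obtain ⟨n', hn', hA'⟩ := T2 2 hn c2 (Eventually.of_forall e2) (fun h => h9 (h2.1 h))
  exact ⟨n', hn', aequiv_trans hA hA'⟩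

theorem join {f f' : ℝ × ℝ → ℝ × ℝ} {n n' : ℝ × ℝ → ℝ} {w : ℝ → ℝ} (hf' : Continuous f') (f0 : f' 0 = 0)
    (h : NF n w) (h' : NF n' w) (hA : AEquiv f (fun p => (p.1, n p))) (hA' : AEquiv f' (fun p => (p.1, n' p))) :
    AEquiv f f' :=
  aequiv_trans hA (aequiv_trans (t3 h h' (Eventually.of_forall fun _ => rfl)) (aequiv_symm hf' f0 hA'))

theorem tc_model (k i j : ℕ) :
    tcoeff (fun p : ℝ × ℝ => p.1 * p.2 ^ 2 + p.2 ^ 4 + p.2 ^ k) i j =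
      (if i = 1 ∧ j = 2 then 1 else 0) + (if i = 0 ∧ j = 4 then 1 else 0) + (if i = 0 ∧ j = k then 1 else 0) := by
  have : (fun p : ℝ × ℝ => p.1 * p.2 ^ 2 + p.2 ^ 4 + p.2 ^ k) = mono 1 1 2 + mono 1 0 4 + mono 1 0 k := by
    funext p; simp [mono]
  rw [this, tcoeff_add (f := mono 1 1 2 + mono 1 0 4) ((mono_contDiff _ _ _).add (mono_contDiff _ _ _)) (mono_contDiff _ _ _),
    tcoeff_add (mono_contDiff _ _ _) (mono_contDiff _ _ _), tcoeff_mono, tcoeff_mono, tcoeff_mono]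

theorem tc_low (k N i j : ℕ) (hN : N ≤ k) (h : i + j < N) :
    tcoeff (fun p : ℝ × ℝ => p.1 * p.2 ^ 2 + p.2 ^ 4 + p.2 ^ k) i j = P11 i j := by
  rw [tc_model, if_neg (c := i = 0 ∧ j = k) (by omega)]
  simp only [P11, Prod.mk.injEq, add_zero]
  by_cases h1 : i = 1 ∧ j = 2
  · have : ¬ (i = 0 ∧ j = 4) := by omega
    simp [h1]
  · simp [h1]

theorem model_form (k : ℕ) (hk : 5 ≤ k) :
    HasForm (fun p : ℝ × ℝ => (p.1, p.1 * p.2 ^ 2 + p.2 ^ 4 + p.2 ^ k))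
      (fun p : ℝ × ℝ => p.1 * p.2 ^ 2 + p.2 ^ 4 + p.2 ^ k) 5 P11 :=
  ⟨by fun_prop, fun _ => rfl, fun i j h => tc_low k 5 i j hk h⟩

theorem model_zero (k : ℕ) (hk : 5 ≤ k) :
    (fun p : ℝ × ℝ => (p.1, p.1 * p.2 ^ 2 + p.2 ^ 4 + p.2 ^ k)) 0 = 0 := by
  have : k ≠ 0 := by omega
  simp [this]

theorem model_cont (k : ℕ) :
    Continuous (fun p : ℝ × ℝ => (p.1, p.1 * p.2 ^ 2 + p.2 ^ 4 + p.2 ^ k)) := by fun_prop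

theorem m5 : ∃ n, NF n (fun s => s ^ 0) ∧
    AEquiv (fun p : ℝ × ℝ => (p.1, p.1 * p.2 ^ 2 + p.2 ^ 4 + p.2 ^ 5)) (fun p => (p.1, n p)) :=
  fwd5 (model_form 5 (by norm_num)) (by rw [tc_model]; norm_num)

theorem m7 : ∃ n, NF n (fun s => s ^ 1) ∧
    AEquiv (fun p : ℝ × ℝ => (p.1, p.1 * p.2 ^ 2 + p.2 ^ 4 + p.2 ^ 7)) (fun p => (p.1, n p)) :=
  fwd7 (model_form 7 (by norm_num)) (by rw [tc_model]; norm_num) (by simp only [tc_model]; norm_num)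

theorem m9 : ∃ n, NF n (fun s => s ^ 2) ∧
    AEquiv (fun p : ℝ × ℝ => (p.1, p.1 * p.2 ^ 2 + p.2 ^ 4 + p.2 ^ 9)) (fun p => (p.1, n p)) :=
  fwd9 (model_form 9 (by norm_num)) (fun i j h => tc_low 9 8 i j (by norm_num) h)
    (by simp only [tc_model]; norm_num)

theorem van_mul (N : ℕ) {h : ℝ × ℝ → ℝ} (hh : ContDiff ℝ ∞ h) (h0 : ∀ i < N, iteratedFDeriv ℝ i h 0 = 0) :
    ∀ i < N + 1, iteratedFDeriv ℝ i (fun p : ℝ × ℝ => p.2 * h p) 0 = 0 := by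
  intro i hi
  rw [← norm_le_zero_iff]
  refine (norm_iteratedFDeriv_mul_le (N := (∞ : WithTop ℕ∞)) (f := fun p : ℝ × ℝ => p.2) (g := h) contDiff_snd hh 0
    (by exact_mod_cast le_top)).trans (le_of_eq ?_)
  refine Finset.sum_eq_zero fun l hl => ?_
  rcases Nat.eq_zero_or_pos l with h1 | h1
  · subst h1
    simp
  · have hi0 : i - l < N := by
      have := Finset.mem_range.1 hl
      omega
    rw [h0 (i - l) hi0]; simp

theorem van_pow (N : ℕ) {h : ℝ × ℝ → ℝ} (hh : ContDiff ℝ ∞ h) (h0 : h 0 = 0) :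
    ∀ i < N + 1, iteratedFDeriv ℝ i (fun p : ℝ × ℝ => p.2 ^ N * h p) 0 = 0 := by
  induction N with
  | zero =>
    intro i hi
    have : i = 0 := by omega
    subst this
    ext v
    simp [h0]
  | succ N ih =>
    have := van_mul (N + 1) (h := fun p : ℝ × ℝ => p.2 ^ N * h p) (by fun_prop) ih
    intro i hi
    have h3 := this i hi
    rw [← h3]
    congr 1
    funext p; ring

theorem nf0 : NF (fun p : ℝ × ℝ => p.1 * p.2 ^ 2 + p.2 ^ 4) (fun _ => 0) := by
  refine ⟨by fun_prop, contDiff_const, by simp, ⟨fun _ => 2, contDiff_const, rfl, ?_⟩, ?_⟩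
  · refine Eventually.of_forall fun ⟨x, y⟩ => ?_
    refine pdy_eq (g := fun p : ℝ × ℝ => p.1 * p.2 ^ 2 + p.2 ^ 4) (by fun_prop)
      ((((hasDerivAt_pow 2 y).const_mul x).add (hasDerivAt_pow 4 y)).congr_deriv ?_)
    push_cast; ring
  · refine Eventually.of_forall fun t => ?_
    simp only; ring

theorem nf2 {w2 : ℝ → ℝ} (hw : ContDiff ℝ ∞ w2) :
    NF (fun p : ℝ × ℝ => p.1 * p.2 ^ 2 + p.2 ^ 4 + p.2 ^ 7 * ((p.1 / 7 + 2 * p.2 ^ 2 / 9) * (63 / 4 * w2 (-p.1 / 2))))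
      (fun s => s ^ 2 * w2 s) := by
  refine ⟨by fun_prop, by fun_prop, by simp, ⟨fun p => 2 + p.2 ^ 5 * (63 / 4 * w2 (-p.1 / 2)), by fun_prop, by simp, ?_⟩, ?_⟩
  · refine Eventually.of_forall fun ⟨x, y⟩ => ?_
    refine pdy_eq (g := fun p : ℝ × ℝ => p.1 * p.2 ^ 2 + p.2 ^ 4 + p.2 ^ 7 * ((p.1 / 7 + 2 * p.2 ^ 2 / 9) * (63 / 4 * w2 (-p.1 / 2)))) (by fun_prop)
      (((((hasDerivAt_pow 2 y).const_mul x).add (hasDerivAt_pow 4 y)).add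
        ((hasDerivAt_pow 7 y).mul (((((hasDerivAt_pow 2 y).const_mul 2).div_const 9).const_add (x / 7)).mul_const (63 / 4 * w2 (-x / 2))))).congr_deriv ?_)
    push_cast; ring
  · refine Eventually.of_forall fun t => ?_
    simp only
    rw [show -(-2 * t ^ 2) / 2 = t ^ 2 by ring]
    ring

theorem jet_fwd {f : ℝ × ℝ → ℝ × ℝ} {g : ℝ × ℝ → ℝ} (hF : HasForm f g 5 P11) (h5 : tcoeff g 0 5 = 0)
    (h7 : tcoeff g 0 7 - 2 * tcoeff g 1 5 + 4 * tcoeff g 2 3 = 0) :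
    JetEquiv 7 f (fun p => (p.1, p.1 * p.2 ^ 2 + p.2 ^ 4)) := by
  obtain ⟨n, w, w2, hn, hA, c2, e2⟩ := ww2 hF h5 h7
  have hA2 := aequiv_trans hA (t3 hn (nf2 c2) (Eventually.of_forall e2))
  obtain ⟨φ, ψ, hφ, hψ, φ0, ψ0, bφ, bψ, H⟩ := hA2
  refine ⟨φ, ψ, hφ, hψ, φ0, ψ0, bφ, bψ, fun i hi => ?_⟩
  have H' : (ψ ∘ f ∘ φ) =ᶠ[𝓝 0] _ := H
  rw [(H'.iteratedFDeriv ℝ i).self_of_nhds]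
  let k : ℝ × ℝ → ℝ := fun p => p.2 ^ 7 * ((p.1 / 7 + 2 * p.2 ^ 2 / 9) * (63 / 4 * w2 (-p.1 / 2)))
  have ck : ContDiff ℝ ∞ k := by fun_prop
  have k0 : iteratedFDeriv ℝ i k 0 = 0 :=
    van_pow 7 (h := fun p => (p.1 / 7 + 2 * p.2 ^ 2 / 9) * (63 / 4 * w2 (-p.1 / 2))) (by fun_prop) (by simp) i (by omega)
  have e : (fun p : ℝ × ℝ => (p.1, p.1 * p.2 ^ 2 + p.2 ^ 4 + p.2 ^ 7 * ((p.1 / 7 + 2 * p.2 ^ 2 / 9) * (63 / 4 * w2 (-p.1 / 2))))) =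
      (fun p : ℝ × ℝ => (p.1, p.1 * p.2 ^ 2 + p.2 ^ 4)) + (ContinuousLinearMap.inr ℝ ℝ ℝ ∘ k) := by
    funext p
    simp [k]
  have cm : ContDiff ℝ ∞ (fun p : ℝ × ℝ => (p.1, p.1 * p.2 ^ 2 + p.2 ^ 4)) := by fun_prop
  have hle : (i : WithTop ℕ∞) ≤ ∞ := by exact_mod_cast le_top
  have ck2 : ContDiff ℝ ∞ (ContinuousLinearMap.inr ℝ ℝ ℝ ∘ k) := (ContinuousLinearMap.contDiff _).comp ck
  rw [e, iteratedFDeriv_add_apply (cm.of_le hle).contDiffAt (ck2.of_le hle).contDiffAt,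
    ContinuousLinearMap.iteratedFDeriv_comp_left _ ck.contDiffAt hle, k0]
  ext v <;> simp

end assembly

end part11

theorem stmt11 (f : ℝ × ℝ → ℝ × ℝ) (g : ℝ × ℝ → ℝ) (hf0 : f 0 = 0)
    (hform : HasForm f g 5 P11) :
    (tcoeff g 0 5 ≠ 0 ↔
      AEquiv f (fun p => (p.1, p.1 * p.2 ^ 2 + p.2 ^ 4 + p.2 ^ 5))) ∧
    ((tcoeff g 0 5 = 0 ∧ tcoeff g 0 7 - 2 * tcoeff g 1 5 + 4 * tcoeff g 2 3 ≠ 0) ↔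
      AEquiv f (fun p => (p.1, p.1 * p.2 ^ 2 + p.2 ^ 4 + p.2 ^ 7))) ∧
    ((tcoeff g 0 5 = 0 ∧ tcoeff g 0 7 - 2 * tcoeff g 1 5 + 4 * tcoeff g 2 3 = 0) ↔
      JetEquiv 7 f (fun p => (p.1, p.1 * p.2 ^ 2 + p.2 ^ 4))) ∧
    ((∀ i j, i + j < 8 → tcoeff g i j = P11 i j) →
      (tcoeff g 0 9 - 2 * tcoeff g 1 7 ≠ 0 ↔
        AEquiv f (fun p => (p.1, p.1 * p.2 ^ 2 + p.2 ^ 4 + p.2 ^ 9)))) := by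
  refine ⟨⟨fun h5 => ?_, fun hA => ?_⟩, ⟨fun h => ?_, fun hA => ?_⟩, ⟨fun h => ?_, fun hA => ?_⟩,
    fun h8 => ⟨fun h9 => ?_, fun hA => ?_⟩⟩
  · obtain ⟨n, hn, hA⟩ := fwd5 hform h5
    obtain ⟨n', hn', hA'⟩ := m5
    exact join (model_cont 5) (model_zero 5 (by norm_num)) hn hn' hA hA'
  · obtain ⟨n', hn', hA'⟩ := m5
    have h1 := inv_a (U := fun _ => 1) 0 hform (cond5 hform.1 hform.2.2) hn' contDiff_const (by simp)
      (aequiv_trans hA hA')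
    intro h
    exact one_ne_zero (h1.2 h)
  · obtain ⟨n, hn, hA⟩ := fwd7 hform h.1 h.2
    obtain ⟨n', hn', hA'⟩ := m7
    exact join (model_cont 7) (model_zero 7 (by norm_num)) hn hn' hA hA'
  · obtain ⟨n', hn', hA'⟩ := m7
    have h0 := inv_a (U := fun s => s) 0 hform (cond5 hform.1 hform.2.2) hn' contDiff_id (by simp)
      (aequiv_trans hA hA')
    have h5 := h0.1 rfl
    have h1 := inv_a (U := fun _ => 1) 1 hform (cond7 hform.1 hform.2.2 h5) hn' contDiff_const (by simp)
      (aequiv_trans hA hA')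
    exact ⟨h5, fun h => one_ne_zero (h1.2 h)⟩
  · exact jet_fwd hform h.1 h.2
  · have h0 := inv_jet (U := fun _ => 0) 0 (by norm_num) hform (cond5 hform.1 hform.2.2) nf0 contDiff_const (by simp) hA
    have h5 := h0.1 rfl
    have h1 := inv_jet (U := fun _ => 0) 1 (by norm_num) hform (cond7 hform.1 hform.2.2 h5) nf0 contDiff_const (by simp) hA
    exact ⟨h5, h1.1 rfl⟩
  · obtain ⟨n, hn, hA⟩ := fwd9 hform h8 h9
    obtain ⟨n', hn', hA'⟩ := m9
    exact join (model_cont 9) (model_zero 9 (by norm_num)) hn hn' hA hA'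
  · obtain ⟨n', hn', hA'⟩ := m9
    have h1 := inv_a (U := fun _ => 1) 2 hform (cond9 hform.1 h8) hn' contDiff_const (by simp)
      (aequiv_trans hA hA')
    intro h
    exact one_ne_zero (h1.2 h)
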